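/- There exists δ > 0 such that for every (s₀,φ) ∈ W, if ‖φ‖_{L^∞} ≤ δ · min{1, s₀^{−1/(p−1)}}, then problem (P) with initial data (s₀,φ) admits a global-in-time solution (s,u) satisfying lim_{t→∞} s(t) < ∞ and ‖u(t)‖_{L^∞} = O(e^{−αt}) as t → ∞ for some α > 0. -/

import Mathlib

open Set MeasureTheory Filter Topology Real
open scoped ENNReal

noncomputable section

/-- `(s₀, φ)` belongs to the class `W`: `s₀ ∈ (0,∞)`, `φ` is Lipschitz on `[0,s₀]`,
not identically zero, nonnegative there, and vanishes at `s₀`. -/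
def memW (s₀ : ℝ) (φ : ℝ → ℝ) : Prop :=
  0 < s₀ ∧ (∃ K : NNReal, LipschitzOnWith K φ (Icc 0 s₀)) ∧
    (∃ x ∈ Icc 0 s₀, φ x ≠ 0) ∧ (∀ x ∈ Icc 0 s₀, 0 ≤ φ x) ∧ φ s₀ = 0

/-- `(s,u)` is a solution of the one-phase Stefan problem (P) on `(0,T]` (finite `T`)
with exponent `p` and initial data `(s₀,φ)`. -/
structure IsSolOn (p s₀ : ℝ) (φ : ℝ → ℝ) (T : ℝ) (s : ℝ → ℝ) (u : ℝ → ℝ → ℝ) : Prop where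
  T_pos : 0 < T
  s_cont : ContinuousOn s (Icc 0 T)
  s_diff : ∀ t ∈ Ioc 0 T, DifferentiableAt ℝ s t
  s_deriv_cont : ContinuousOn (deriv s) (Ioc 0 T)
  s_pos : ∀ t ∈ Icc 0 T, 0 < s t
  ut_diff : ∀ t ∈ Ioc 0 T, ∀ x ∈ Ioo 0 (s t), DifferentiableAt ℝ (fun τ => u τ x) t
  ux_diff : ∀ t ∈ Ioc 0 T, ∀ x ∈ Ioo 0 (s t), DifferentiableAt ℝ (u t) x
  uxx_diff : ∀ t ∈ Ioc 0 T, ∀ x ∈ Ioo 0 (s t), DifferentiableAt ℝ (deriv (u t)) x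
  ut_cont : ContinuousOn (fun q : ℝ × ℝ => deriv (fun τ => u τ q.2) q.1)
      {q : ℝ × ℝ | q.1 ∈ Ioc 0 T ∧ q.2 ∈ Ioo 0 (s q.1)}
  uxx_cont : ContinuousOn (fun q : ℝ × ℝ => deriv (deriv (u q.1)) q.2)
      {q : ℝ × ℝ | q.1 ∈ Ioc 0 T ∧ q.2 ∈ Ioo 0 (s q.1)}
  ux_cont : ContinuousOn (fun q : ℝ × ℝ => deriv (u q.1) q.2)
      {q : ℝ × ℝ | q.1 ∈ Ioc 0 T ∧ q.2 ∈ Icc 0 (s q.1)}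
  u_cont : ContinuousOn (fun q : ℝ × ℝ => u q.1 q.2)
      {q : ℝ × ℝ | q.1 ∈ Icc 0 T ∧ q.2 ∈ Icc 0 (s q.1)}
  u_nonneg : ∀ t ∈ Icc 0 T, ∀ x ∈ Icc 0 (s t), 0 ≤ u t x
  heat : ∀ t ∈ Ioc 0 T, ∀ x ∈ Ioo 0 (s t),
      deriv (fun τ => u τ x) t = deriv (deriv (u t)) x
  bc_zero : ∀ t ∈ Ioc 0 T, -deriv (u t) 0 = u t 0 ^ p
  bc_free : ∀ t ∈ Ioc 0 T, u t (s t) = 0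
  stefan : ∀ t ∈ Ioc 0 T, deriv s t = -deriv (u t) (s t)
  init : ∀ x ∈ Icc 0 s₀, u 0 x = φ x
  init_s : s 0 = s₀

/-- `(s,u)` is a global-in-time solution of problem (P). -/
def IsGlobalSol (p s₀ : ℝ) (φ : ℝ → ℝ) (s : ℝ → ℝ) (u : ℝ → ℝ → ℝ) : Prop :=
  ∀ T : ℝ, 0 < T → IsSolOn p s₀ φ T s u

/-- `Tm ∈ (0,∞]` is the maximal existence time of the solution `(s,u)` of (P) with
initial data `(s₀,φ)`: the solution exists on `(0,T]` for every `T < Tm`, and for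
`T > Tm` problem (P) admits no solution on `(0,T]`. -/
def IsMaxSol (p s₀ : ℝ) (φ : ℝ → ℝ) (Tm : ℝ≥0∞) (s : ℝ → ℝ) (u : ℝ → ℝ → ℝ) : Prop :=
  0 < Tm ∧
    (∀ T : ℝ, 0 < T → ENNReal.ofReal T < Tm → IsSolOn p s₀ φ T s u) ∧
    (∀ T : ℝ, Tm < ENNReal.ofReal T → ¬∃ σ v, IsSolOn p s₀ φ T σ v)

/-- The sup norm `‖u(t)‖_{L^∞(0,s(t))}`. -/
def supNorm (s : ℝ → ℝ) (u : ℝ → ℝ → ℝ) (t : ℝ) : ℝ :=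
  sSup (u t '' Ioo 0 (s t))

/-- The `L¹` norm `‖u(t)‖_{L¹(0,s(t))}` of the nonnegative function `u(t,·)`. -/
def L1Norm (s : ℝ → ℝ) (u : ℝ → ℝ → ℝ) (t : ℝ) : ℝ :=
  ∫ x in (0:ℝ)..(s t), u t x

/-- The energy `E(s(t),u(t))`. -/
def energy (p : ℝ) (s : ℝ → ℝ) (u : ℝ → ℝ → ℝ) (t : ℝ) : ℝ :=
  1 / 2 * (∫ x in (0:ℝ)..(s t), (deriv (u t) x) ^ 2) - u t 0 ^ (p + 1) / (p + 1)

/-!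
The problem is first solved with truncated nonlinearities. Represent `u` as the heat flow of the
evenly reflected initial datum plus single layer potentials: a source of strength `u(t,0)^p` at the
origin, and sinks of strength `s'(t)` at the free boundary and its mirror image. The jump relation
for the differentiated potential turns this representation into a system of Volterra equations with
an Abel singularity for `s'` and `u(·,0)`. Truncation makes the system globally Lipschitz, hence
solvable for all times by contraction in a weighted norm.

Beyond the free boundary the potentials still define a caloric function, and a maximum principle
that tolerates a kink along the free boundary shows that it vanishes there and that `s'` stays
below its truncation level, so that the Stefan condition holds. Finally the solution is compared
with the self-similar supersolution `ε e^{-αt} (1 - ξ) (2 + ξ)`, `ξ = x / σ(t)`, whose boundary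
`σ` increases from `2 s₀` to `3 s₀`. For small `ε` this keeps `u(t,0)` below the level where the
power is truncated, confines `s` and gives the exponential decay.
-/

/-! ### The heat kernel -/

/-- The Gaussian heat kernel on the line. It vanishes for `t ≤ 0`, because `√t = 0` there. -/
def heatKernel (t x : ℝ) : ℝ := exp (-(x ^ 2 / (4 * t))) / (2 * √π * √t)

/-- The kernels `xⁱ t⁻ʲ G(t, x)`, `G` the heat kernel, which span the derivatives of `G`. -/
def heatMoment (i j : ℕ) (t x : ℝ) : ℝ := x ^ i / t ^ j * heatKernel t x

/-- The space derivative of the heat kernel. -/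
def heatKernelDx (t x : ℝ) : ℝ := -(x / (2 * t)) * heatKernel t x

/-- The second space derivative of the heat kernel, which is also its time derivative. -/
def heatKernelDxx (t x : ℝ) : ℝ := (x ^ 2 / (4 * t ^ 2) - 1 / (2 * t)) * heatKernel t x

section HeatKernel

variable {t x : ℝ}

lemma heatKernel_of_nonpos (ht : t ≤ 0) (x : ℝ) : heatKernel t x = 0 := by
  simp [heatKernel, Real.sqrt_eq_zero_of_nonpos ht]

lemma heatKernelDx_of_nonpos (ht : t ≤ 0) (x : ℝ) : heatKernelDx t x = 0 := by
  simp [heatKernelDx, heatKernel_of_nonpos ht]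

lemma heatKernelDxx_of_nonpos (ht : t ≤ 0) (x : ℝ) : heatKernelDxx t x = 0 := by
  simp [heatKernelDxx, heatKernel_of_nonpos ht]

lemma heatKernel_nonneg (t x : ℝ) : 0 ≤ heatKernel t x := by
  unfold heatKernel; positivity

lemma heatKernel_neg (t x : ℝ) : heatKernel t (-x) = heatKernel t x := by
  simp [heatKernel]

lemma heatKernelDx_neg (t x : ℝ) : heatKernelDx t (-x) = -heatKernelDx t x := by
  simp only [heatKernelDx, heatKernel_neg]; ring

lemma heatMoment_zero_zero : heatMoment 0 0 = heatKernel := by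
  ext t x; simp [heatMoment]

lemma heatKernelDx_eq (t x : ℝ) : heatKernelDx t x = -(1 / 2) * heatMoment 1 1 t x := by
  unfold heatKernelDx heatMoment; ring

lemma heatKernelDxx_eq (t x : ℝ) :
    heatKernelDxx t x = 1 / 4 * heatMoment 2 2 t x - 1 / 2 * heatMoment 0 1 t x := by
  unfold heatKernelDxx heatMoment; ring

lemma measurable_heatMoment (i j : ℕ) : Measurable fun q : ℝ × ℝ => heatMoment i j q.1 q.2 := by
  unfold heatMoment heatKernel; fun_prop

lemma heatKernel_eq_exp_mul (t x : ℝ) :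
    heatKernel t x = exp (-(x ^ 2 / (4 * t))) * ((2 * √π)⁻¹ * (√t)⁻¹) := by
  rw [heatKernel, div_eq_mul_inv, mul_inv]

lemma hasDerivAt_heatKernel_space (t x : ℝ) :
    HasDerivAt (heatKernel t) (heatKernelDx t x) x := by
  have exponent_deriv : HasDerivAt (fun x : ℝ => -(x ^ 2 / (4 * t))) (-(2 * x / (4 * t))) x := by
    simpa using ((hasDerivAt_pow 2 x).div_const (4 * t)).fun_neg
  refine (exponent_deriv.exp.div_const (2 * √π * √t)).congr_deriv ?_
  rw [heatKernelDx, heatKernel, show 2 * x / (4 * t) = x / (2 * t) by rw [mul_div_mul_comm]; ring]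
  ring

lemma hasDerivAt_heatKernelDx_space (t x : ℝ) :
    HasDerivAt (heatKernelDx t) (heatKernelDxx t x) x := by
  have factor_deriv : HasDerivAt (fun x : ℝ => -(x / (2 * t))) (-(1 / (2 * t))) x :=
    ((hasDerivAt_id' x).div_const (2 * t)).fun_neg
  refine (factor_deriv.mul (hasDerivAt_heatKernel_space t x)).congr_deriv ?_
  unfold heatKernelDxx heatKernelDx
  ring

lemma continuous_heatKernel_space (t : ℝ) : Continuous (heatKernel t) :=
  continuous_iff_continuousAt.2 fun x => (hasDerivAt_heatKernel_space t x).continuousAt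

lemma hasDerivAt_heatKernel_time_of_pos (ht : 0 < t) (x : ℝ) :
    HasDerivAt (fun t => heatKernel t x) (heatKernelDxx t x) t := by
  have exponent_deriv : HasDerivAt (fun t : ℝ => -(x ^ 2 / (4 * t))) (x ^ 2 / (4 * t ^ 2)) t := by
    refine (((hasDerivAt_inv ht.ne').const_mul (x ^ 2 / 4)).neg.congr_of_eventuallyEq
      (.of_forall fun y => ?_)).congr_deriv ?_
    · simp only [Pi.neg_apply]; ring
    · field_simp
  have denominator_deriv : HasDerivAt (fun t : ℝ => 2 * √π * √t) (2 * √π * (1 / (2 * √t))) t :=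
    (Real.hasDerivAt_sqrt ht.ne').const_mul _
  have sqrt_pos : 0 < √t := Real.sqrt_pos.2 ht
  refine (exponent_deriv.exp.div denominator_deriv (by positivity)).congr_deriv ?_
  unfold heatKernelDxx heatKernel
  have sq_sqrt : t = √t ^ 2 := (Real.sq_sqrt ht.le).symm
  set r := √t
  rw [sq_sqrt]
  field_simp

lemma inv_two_mul_sqrt_pi_le : (2 * √π)⁻¹ ≤ 1 / 2 := by
  have one_le : 1 ≤ √π := Real.one_le_sqrt.2 (by linarith [pi_gt_three])
  rw [inv_le_comm₀ (by positivity) (by norm_num)]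
  linarith

lemma mul_inv_sqrt (t : ℝ) : t * (√t)⁻¹ = √t := by
  rw [← div_eq_mul_inv, Real.div_sqrt]

lemma heatKernel_le (t x : ℝ) : heatKernel t x ≤ (√t)⁻¹ := by
  rcases le_or_gt t 0 with ht | ht
  · rw [heatKernel_of_nonpos ht]; positivity
  have exp_le_one : exp (-(x ^ 2 / (4 * t))) ≤ 1 := exp_le_one_iff.2 (neg_nonpos.2 (by positivity))
  calc heatKernel t x = exp (-(x ^ 2 / (4 * t))) * ((2 * √π)⁻¹ * (√t)⁻¹) :=
        heatKernel_eq_exp_mul t x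
    _ ≤ 1 * (1 * (√t)⁻¹) := by gcongr; linarith [inv_two_mul_sqrt_pi_le]
    _ = (√t)⁻¹ := by ring

lemma pow_mul_heatKernel_le (n : ℕ) (ht : 0 < t) (x : ℝ) :
    x ^ (2 * n) * heatKernel t x ≤ n.factorial / 2 * (4 * t) ^ n * (√t)⁻¹ := by
  set z := x ^ 2 / (4 * t) with hz
  have pow_mul_exp_le : z ^ n * exp (-z) ≤ n.factorial := by
    rw [exp_neg, mul_inv_le_iff₀ (exp_pos z)]
    have := Real.pow_div_factorial_le_exp z (by positivity) n
    rwa [div_le_iff₀' (by positivity)] at this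
  calc x ^ (2 * n) * heatKernel t x
      = z ^ n * exp (-z) * ((2 * √π)⁻¹ * (4 * t) ^ n * (√t)⁻¹) := by
        rw [heatKernel_eq_exp_mul, ← hz, hz, pow_mul, div_pow]; field_simp
    _ ≤ n.factorial * (1 / 2 * (4 * t) ^ n * (√t)⁻¹) := by
        gcongr; exact inv_two_mul_sqrt_pi_le
    _ = n.factorial / 2 * (4 * t) ^ n * (√t)⁻¹ := by ring

lemma sq_mul_heatKernel_le (ht : 0 < t) (x : ℝ) :
    x ^ 2 * heatKernel t x ≤ 2 * t * (√t)⁻¹ := by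
  refine (pow_mul_heatKernel_le 1 ht x).trans_eq ?_
  simp only [Nat.factorial_one, Nat.cast_one]; ring

lemma pow_four_mul_heatKernel_le (ht : 0 < t) (x : ℝ) :
    x ^ 4 * heatKernel t x ≤ 16 * t ^ 2 * (√t)⁻¹ := by
  refine (pow_mul_heatKernel_le 2 ht x).trans_eq ?_
  simp only [Nat.factorial_two, Nat.cast_ofNat]; ring

lemma abs_mul_abs_heatKernelDx_le (t x : ℝ) : |x| * |heatKernelDx t x| ≤ (√t)⁻¹ := by
  rcases le_or_gt t 0 with ht | ht
  · simp [heatKernelDx_of_nonpos ht]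
  calc |x| * |heatKernelDx t x| = x ^ 2 * heatKernel t x / (2 * t) := by
        rw [heatKernelDx, abs_mul, abs_neg, abs_div, abs_of_nonneg (heatKernel_nonneg t x),
          abs_of_pos (by positivity : 0 < 2 * t), ← sq_abs x]
        ring
    _ ≤ 2 * t * (√t)⁻¹ / (2 * t) := by gcongr ?_ / _; exact sq_mul_heatKernel_le ht x
    _ = (√t)⁻¹ := by field_simp

lemma abs_heatKernelDxx_le_add (t x : ℝ) :
    |heatKernelDxx t x| ≤
      x ^ 2 / (4 * t ^ 2) * heatKernel t x + 1 / (2 * |t|) * heatKernel t x := by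
  rw [heatKernelDxx, abs_mul, abs_of_nonneg (heatKernel_nonneg t x), ← add_mul]
  refine mul_le_mul_of_nonneg_right ((abs_sub _ _).trans_eq ?_) (heatKernel_nonneg t x)
  simp [abs_div, abs_mul]

lemma abs_heatKernelDxx_le (ht : 0 < t) (x : ℝ) : |heatKernelDxx t x| ≤ t⁻¹ * (√t)⁻¹ := by
  calc |heatKernelDxx t x|
      ≤ x ^ 2 / (4 * t ^ 2) * heatKernel t x + 1 / (2 * |t|) * heatKernel t x :=
        abs_heatKernelDxx_le_add t x
    _ = x ^ 2 * heatKernel t x / (4 * t ^ 2) + 1 / (2 * t) * heatKernel t x := by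
        rw [abs_of_pos ht]; ring
    _ ≤ 2 * t * (√t)⁻¹ / (4 * t ^ 2) + 1 / (2 * t) * (√t)⁻¹ := by
        gcongr ?_ / _ + _ * ?_
        · exact sq_mul_heatKernel_le ht x
        · exact heatKernel_le t x
    _ = t⁻¹ * (√t)⁻¹ := by field_simp; ring

lemma sq_mul_abs_heatKernelDxx_le (ht : 0 < t) (x : ℝ) :
    x ^ 2 * |heatKernelDxx t x| ≤ 5 * (√t)⁻¹ := by
  calc x ^ 2 * |heatKernelDxx t x|
      ≤ x ^ 2 * (x ^ 2 / (4 * t ^ 2) * heatKernel t x + 1 / (2 * |t|) * heatKernel t x) := by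
        gcongr; exact abs_heatKernelDxx_le_add t x
    _ = x ^ 4 * heatKernel t x / (4 * t ^ 2) + x ^ 2 * heatKernel t x / (2 * t) := by
        rw [abs_of_pos ht]; ring
    _ ≤ 16 * t ^ 2 * (√t)⁻¹ / (4 * t ^ 2) + 2 * t * (√t)⁻¹ / (2 * t) := by
        gcongr ?_ / _ + ?_ / _
        · exact pow_four_mul_heatKernel_le ht x
        · exact sq_mul_heatKernel_le ht x
    _ = 5 * (√t)⁻¹ := by field_simp; norm_num

end HeatKernel

/-! ### Causal kernels -/

/-- A kernel which vanishes for nonpositive times and is continuous and locally bounded in time,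
uniformly in space, away from the space-time origin. This is what differentiation under the
integral sign requires of the heat kernel and its derivatives. -/
structure IsCausalKernel (k : ℝ → ℝ → ℝ) : Prop where
  measurable : Measurable fun q : ℝ × ℝ => k q.1 q.2
  eq_zero : ∀ t ≤ 0, ∀ x, k t x = 0
  continuousAt : ∀ t x, t ≠ 0 ∨ x ≠ 0 → ContinuousAt (fun q : ℝ × ℝ => k q.1 q.2) (t, x)
  exists_bound : ∀ η > 0, ∀ T, ∃ M, 0 ≤ M ∧ ∀ t ≤ T, ∀ x, η ≤ t ∨ η ≤ |x| → |k t x| ≤ M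

namespace IsCausalKernel

variable {k k' : ℝ → ℝ → ℝ}

lemma const_mul (hk : IsCausalKernel k) (c : ℝ) : IsCausalKernel fun t x => c * k t x where
  measurable := hk.measurable.const_mul c
  eq_zero t ht x := by rw [hk.eq_zero t ht, mul_zero]
  continuousAt t x h := (hk.continuousAt t x h).const_mul c
  exists_bound η hη T := by
    obtain ⟨M, hM0, hM⟩ := hk.exists_bound η hη T
    refine ⟨|c| * M, by positivity, fun t ht x h => ?_⟩
    rw [abs_mul]
    exact mul_le_mul_of_nonneg_left (hM t ht x h) (abs_nonneg c)

lemma sub (hk : IsCausalKernel k) (hk' : IsCausalKernel k') :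
    IsCausalKernel fun t x => k t x - k' t x where
  measurable := hk.measurable.sub hk'.measurable
  eq_zero t ht x := by rw [hk.eq_zero t ht, hk'.eq_zero t ht, sub_zero]
  continuousAt t x h := (hk.continuousAt t x h).sub (hk'.continuousAt t x h)
  exists_bound η hη T := by
    obtain ⟨M, hM0, hM⟩ := hk.exists_bound η hη T
    obtain ⟨M', hM0', hM'⟩ := hk'.exists_bound η hη T
    exact ⟨M + M', by positivity, fun t ht x h =>
      (abs_sub _ _).trans (add_le_add (hM t ht x h) (hM' t ht x h))⟩

end IsCausalKernel

section HeatMoment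

variable {t x η T : ℝ}

lemma heatMoment_of_nonpos (i j : ℕ) (ht : t ≤ 0) (x : ℝ) : heatMoment i j t x = 0 := by
  rw [heatMoment, heatKernel_of_nonpos ht, mul_zero]

lemma abs_heatMoment (i j : ℕ) (ht : 0 < t) (x : ℝ) :
    |heatMoment i j t x| = |x| ^ i / t ^ j * heatKernel t x := by
  rw [heatMoment, abs_mul, abs_div, abs_pow, abs_of_nonneg (heatKernel_nonneg t x),
    abs_of_pos (by positivity : 0 < t ^ j)]

lemma abs_heatMoment_le_of_le_time (i j : ℕ) (hη : 0 < η) (htη : η ≤ t) (htT : t ≤ T) (x : ℝ) :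
    |heatMoment i j t x| ≤ (1 + i.factorial / 2 * (4 * T) ^ i) * (√η)⁻¹ / η ^ j := by
  have ht : 0 < t := hη.trans_le htη
  have hT : 0 < T := ht.trans_le htT
  have pow_le : |x| ^ i ≤ 1 + x ^ (2 * i) := by
    rw [pow_mul, ← sq_abs, ← pow_mul, mul_comm, pow_mul]
    nlinarith [sq_nonneg (|x| ^ i - 1)]
  have moment_bound : |x| ^ i * heatKernel t x ≤
      (1 + i.factorial / 2 * (4 * T) ^ i) * (√η)⁻¹ := by
    calc |x| ^ i * heatKernel t x ≤ (1 + x ^ (2 * i)) * heatKernel t x :=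
          mul_le_mul_of_nonneg_right pow_le (heatKernel_nonneg t x)
      _ = heatKernel t x + x ^ (2 * i) * heatKernel t x := by ring
      _ ≤ (√t)⁻¹ + i.factorial / 2 * (4 * t) ^ i * (√t)⁻¹ :=
          add_le_add (heatKernel_le t x) (pow_mul_heatKernel_le i ht x)
      _ = (1 + i.factorial / 2 * (4 * t) ^ i) * (√t)⁻¹ := by ring
      _ ≤ _ := by gcongr
  rw [abs_heatMoment i j ht, div_mul_eq_mul_div]
  gcongr

lemma abs_heatMoment_le_of_le_abs (i j : ℕ) (hη : 0 < η) (ht : 0 < t) (htT : t ≤ T)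
    (hx : η ≤ |x|) :
    |heatMoment i j t x| ≤
      (i + j + 1).factorial / 2 * 4 ^ (i + j + 1) * (T ^ i * √T) / η ^ (i + 2 * j + 2) := by
  set m := i + j + 1 with hm
  rw [abs_heatMoment i j ht, le_div_iff₀ (by positivity)]
  calc |x| ^ i / t ^ j * heatKernel t x * η ^ (i + 2 * j + 2)
      ≤ |x| ^ i / t ^ j * heatKernel t x * |x| ^ (i + 2 * j + 2) := by
        have := heatKernel_nonneg t x
        gcongr
    _ = x ^ (2 * m) * heatKernel t x / t ^ j := by
        rw [show x ^ (2 * m) = |x| ^ i * |x| ^ (i + 2 * j + 2) by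
          rw [pow_mul, ← sq_abs, ← pow_mul, ← pow_add]; congr 1; omega]
        ring
    _ ≤ m.factorial / 2 * (4 * t) ^ m * (√t)⁻¹ / t ^ j := by
        gcongr ?_ / _; exact pow_mul_heatKernel_le m ht x
    _ = m.factorial / 2 * 4 ^ m * (t ^ i * (t * (√t)⁻¹)) := by
        rw [mul_pow, hm, pow_succ t, pow_add t]; field_simp
    _ ≤ m.factorial / 2 * 4 ^ m * (T ^ i * √T) := by
        have := ht.trans_le htT
        rw [mul_inv_sqrt]; gcongr

lemma exists_abs_heatMoment_le (i j : ℕ) (hη : 0 < η) (T : ℝ) :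
    ∃ M, 0 ≤ M ∧ ∀ t ≤ T, ∀ x, η ≤ t ∨ η ≤ |x| → |heatMoment i j t x| ≤ M := by
  refine ⟨max 0 (max ((1 + i.factorial / 2 * (4 * T) ^ i) * (√η)⁻¹ / η ^ j)
    ((i + j + 1).factorial / 2 * 4 ^ (i + j + 1) * (T ^ i * √T) / η ^ (i + 2 * j + 2))),
    le_max_left _ _, fun t htT x h => ?_⟩
  rcases le_or_gt t 0 with ht | ht
  · simp [heatMoment_of_nonpos i j ht]
  rcases h with h | h
  · exact le_max_of_le_right (le_max_of_le_left (abs_heatMoment_le_of_le_time i j hη h htT x))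
  · exact le_max_of_le_right (le_max_of_le_right (abs_heatMoment_le_of_le_abs i j hη ht htT h))

lemma continuousAt_heatMoment_of_pos (i j : ℕ) (ht : 0 < t) (x : ℝ) :
    ContinuousAt (fun q : ℝ × ℝ => heatMoment i j q.1 q.2) (t, x) := by
  unfold heatMoment heatKernel
  have : √t ≠ 0 := (Real.sqrt_pos.2 ht).ne'
  fun_prop (disch := positivity)

/- At `t = 0`, `x ≠ 0` continuity follows from `heatMoment i j = t * heatMoment i (j + 1)`. -/
lemma continuousAt_heatMoment (i j : ℕ) (h : t ≠ 0 ∨ x ≠ 0) :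
    ContinuousAt (fun q : ℝ × ℝ => heatMoment i j q.1 q.2) (t, x) := by
  rcases lt_trichotomy t 0 with ht | rfl | ht
  · refine continuousAt_const.congr (f := fun _ => (0 : ℝ)) ?_
    filter_upwards [continuous_fst.continuousAt.eventually_lt_const ht] with q hq
    exact (heatMoment_of_nonpos i j hq.le q.2).symm
  · have hx : 0 < |x| := abs_pos.2 (by simpa using h)
    obtain ⟨M, -, hM⟩ := exists_abs_heatMoment_le i (j + 1) (half_pos hx) 1
    have bound : ∀ᶠ q : ℝ × ℝ in 𝓝 (0, x), ‖heatMoment i j q.1 q.2‖ ≤ |q.1| * M := by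
      filter_upwards [continuous_fst.continuousAt.eventually_lt_const zero_lt_one,
        continuous_snd.abs.continuousAt.eventually_const_lt (half_lt_self hx)] with q hq1 hq2
      rcases le_or_gt q.1 0 with hq | hq
      · have := (abs_nonneg _).trans (hM q.1 hq1.le q.2 (.inr hq2.le))
        rw [heatMoment_of_nonpos i j hq, norm_zero]; positivity
      · have : heatMoment i j q.1 q.2 = q.1 * heatMoment i (j + 1) q.1 q.2 := by
          unfold heatMoment; rw [pow_succ]; field_simp
        rw [this, norm_mul, Real.norm_eq_abs, Real.norm_eq_abs]
        exact mul_le_mul_of_nonneg_left (hM _ hq1.le _ (.inr hq2.le)) (abs_nonneg _)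
    rw [ContinuousAt, heatMoment_of_nonpos i j le_rfl]
    refine squeeze_zero_norm' bound ?_
    have : Continuous fun q : ℝ × ℝ => |q.1| * M := by fun_prop
    simpa using this.tendsto (0, x)
  · exact continuousAt_heatMoment_of_pos i j ht x

lemma isCausalKernel_heatMoment (i j : ℕ) : IsCausalKernel (heatMoment i j) where
  measurable := measurable_heatMoment i j
  eq_zero _ ht := heatMoment_of_nonpos i j ht
  continuousAt _ _ := continuousAt_heatMoment i j
  exists_bound _ hη T := exists_abs_heatMoment_le i j hη T

lemma isCausalKernel_heatKernel : IsCausalKernel heatKernel :=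
  heatMoment_zero_zero ▸ isCausalKernel_heatMoment 0 0

lemma isCausalKernel_heatKernelDx : IsCausalKernel heatKernelDx := by
  rw [show heatKernelDx = _ from funext₂ heatKernelDx_eq]
  exact (isCausalKernel_heatMoment 1 1).const_mul _

lemma isCausalKernel_heatKernelDxx : IsCausalKernel heatKernelDxx := by
  rw [show heatKernelDxx = _ from funext₂ heatKernelDxx_eq]
  exact ((isCausalKernel_heatMoment 2 2).const_mul _).sub
    ((isCausalKernel_heatMoment 0 1).const_mul _)

lemma hasDerivAt_heatKernel_time (h : t ≠ 0 ∨ x ≠ 0) :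
    HasDerivAt (fun t => heatKernel t x) (heatKernelDxx t x) t := by
  rcases lt_trichotomy t 0 with ht | rfl | ht
  · rw [heatKernelDxx_of_nonpos ht.le]
    refine (hasDerivAt_const t (0 : ℝ)).congr_of_eventuallyEq ?_
    filter_upwards [Iio_mem_nhds ht] with τ hτ using heatKernel_of_nonpos (le_of_lt hτ) x
  · have slope_eq : slope (fun t => heatKernel t x) 0 = fun τ => heatMoment 0 1 τ x := by
      ext τ
      simp [slope_def_field, heatKernel_of_nonpos le_rfl, heatMoment, div_eq_inv_mul]
    rw [hasDerivAt_iff_tendsto_slope, slope_eq, heatKernelDxx_of_nonpos le_rfl]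
    have tendsto_slope : Tendsto (fun τ => heatMoment 0 1 τ x) (𝓝 0) (𝓝 (heatMoment 0 1 0 x)) :=
      (continuousAt_heatMoment 0 1 h).comp (f := fun τ => (τ, x)) (by fun_prop)
    rw [heatMoment_of_nonpos 0 1 le_rfl] at tendsto_slope
    exact tendsto_slope.mono_left nhdsWithin_le_nhds
  · exact hasDerivAt_heatKernel_time_of_pos ht x

end HeatMoment

/-! ### Caloric functions and their jets -/

/-- `u` solves the heat equation at the space-time point `(t, x)`, where `ux` and `uxx` are its
first and second space derivatives; both are jointly continuous there. -/
structure IsCaloricAt (u ux uxx : ℝ → ℝ → ℝ) (t x : ℝ) : Prop where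
  hasDerivAt_space : HasDerivAt (u t) (ux t x) x
  hasDerivAt_space_space : HasDerivAt (ux t) (uxx t x) x
  hasDerivAt_time : HasDerivAt (fun τ => u τ x) (uxx t x) t
  continuousAt_space : ContinuousAt (fun q : ℝ × ℝ => ux q.1 q.2) (t, x)
  continuousAt_space_space : ContinuousAt (fun q : ℝ × ℝ => uxx q.1 q.2) (t, x)

namespace IsCaloricAt

variable {u ux uxx w wx wxx : ℝ → ℝ → ℝ} {t x : ℝ}

lemma add (hu : IsCaloricAt u ux uxx t x) (hw : IsCaloricAt w wx wxx t x) :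
    IsCaloricAt (fun t x => u t x + w t x) (fun t x => ux t x + wx t x)
      (fun t x => uxx t x + wxx t x) t x where
  hasDerivAt_space := hu.hasDerivAt_space.add hw.hasDerivAt_space
  hasDerivAt_space_space := hu.hasDerivAt_space_space.add hw.hasDerivAt_space_space
  hasDerivAt_time := hu.hasDerivAt_time.add hw.hasDerivAt_time
  continuousAt_space := hu.continuousAt_space.add hw.continuousAt_space
  continuousAt_space_space := hu.continuousAt_space_space.add hw.continuousAt_space_space

lemma const_mul (hu : IsCaloricAt u ux uxx t x) (c : ℝ) :
    IsCaloricAt (fun t x => c * u t x) (fun t x => c * ux t x) (fun t x => c * uxx t x) t x where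
  hasDerivAt_space := hu.hasDerivAt_space.const_mul c
  hasDerivAt_space_space := hu.hasDerivAt_space_space.const_mul c
  hasDerivAt_time := hu.hasDerivAt_time.const_mul c
  continuousAt_space := hu.continuousAt_space.const_mul c
  continuousAt_space_space := hu.continuousAt_space_space.const_mul c

lemma sub (hu : IsCaloricAt u ux uxx t x) (hw : IsCaloricAt w wx wxx t x) :
    IsCaloricAt (fun t x => u t x - w t x) (fun t x => ux t x - wx t x)
      (fun t x => uxx t x - wxx t x) t x where
  hasDerivAt_space := hu.hasDerivAt_space.sub hw.hasDerivAt_space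
  hasDerivAt_space_space := hu.hasDerivAt_space_space.sub hw.hasDerivAt_space_space
  hasDerivAt_time := hu.hasDerivAt_time.sub hw.hasDerivAt_time
  continuousAt_space := hu.continuousAt_space.sub hw.continuousAt_space
  continuousAt_space_space := hu.continuousAt_space_space.sub hw.continuousAt_space_space

lemma congr (hw : IsCaloricAt w wx wxx t x) (hu : ∀ᶠ τ in 𝓝 t, u τ = w τ)
    (hux : ∀ᶠ τ in 𝓝 t, ux τ = wx τ) (huxx : ∀ᶠ τ in 𝓝 t, uxx τ = wxx τ) :
    IsCaloricAt u ux uxx t x where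
  hasDerivAt_space := by
    rw [hu.self_of_nhds, hux.self_of_nhds]; exact hw.hasDerivAt_space
  hasDerivAt_space_space := by
    rw [hux.self_of_nhds, huxx.self_of_nhds]; exact hw.hasDerivAt_space_space
  hasDerivAt_time := by
    rw [huxx.self_of_nhds]
    exact hw.hasDerivAt_time.congr_of_eventuallyEq (hu.mono fun τ h => congrFun h x)
  continuousAt_space := hw.continuousAt_space.congr <|
    (continuous_fst.tendsto (t, x)).eventually (hux.mono fun _ h => h.symm) |>.mono
      fun q h => congrFun h q.2
  continuousAt_space_space := hw.continuousAt_space_space.congr <|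
    (continuous_fst.tendsto (t, x)).eventually (huxx.mono fun _ h => h.symm) |>.mono
      fun q h => congrFun h q.2

end IsCaloricAt

/-! ### Heat potentials away from their sources -/

/-- The potential `∫ k(t - a(ω), x - c(ω)) v(ω) dμ(ω)` of sources of strength `v(ω)` at the
space-time points `(a(ω), c(ω))`. Layer potentials and the evolution of initial data are both of
this form. -/
def kernelPotential {Ω : Type*} [MeasurableSpace Ω] (k : ℝ → ℝ → ℝ) (μ : Measure Ω)
    (a c v : Ω → ℝ) (t x : ℝ) : ℝ :=
  ∫ ω, k (t - a ω) (x - c ω) * v ω ∂μ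

/-- For `(t, x)` near `(t₀, x₀)`, the displacements from almost all sources `(a(ω), c(ω))` stay
away from the origin and are bounded in time. -/
def SourcesAwayFrom {Ω : Type*} [MeasurableSpace Ω] (μ : Measure Ω) (a c : Ω → ℝ)
    (t₀ x₀ : ℝ) : Prop :=
  ∃ ε > 0, ∃ η > 0, ∃ T : ℝ, ∀ᵐ ω ∂μ, ∀ t ∈ Metric.ball t₀ ε, ∀ x ∈ Metric.ball x₀ ε,
    t - a ω ≤ T ∧ (η ≤ t - a ω ∨ η ≤ |x - c ω|)

section KernelPotential

variable {Ω : Type*} [MeasurableSpace Ω] {μ : Measure Ω} {a c v : Ω → ℝ} {k k' : ℝ → ℝ → ℝ}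
  {R t₀ x₀ : ℝ}

lemma IsCausalKernel.aestronglyMeasurable_integrand (hk : IsCausalKernel k) (ha : Measurable a)
    (hc : Measurable c) (hv : Measurable v) (t x : ℝ) :
    AEStronglyMeasurable (fun ω => k (t - a ω) (x - c ω) * v ω) μ :=
  ((hk.measurable.comp (f := fun ω => (t - a ω, x - c ω)) (by fun_prop)).mul
    hv).aestronglyMeasurable

lemma SourcesAwayFrom.exists_bound (hsep : SourcesAwayFrom μ a c t₀ x₀) (hk : IsCausalKernel k)
    (hR : ∀ ω, |v ω| ≤ R) :
    ∃ ε > 0, ∃ M, ∀ᵐ ω ∂μ, ∀ t ∈ Metric.ball t₀ ε, ∀ x ∈ Metric.ball x₀ ε,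
      (t - a ω ≠ 0 ∨ x - c ω ≠ 0) ∧ ‖k (t - a ω) (x - c ω) * v ω‖ ≤ M := by
  obtain ⟨ε, hε, η, hη, T, hsep⟩ := hsep
  obtain ⟨M, hM0, hM⟩ := hk.exists_bound η hη T
  refine ⟨ε, hε, M * R, ?_⟩
  filter_upwards [hsep] with ω h t ht x hx
  obtain ⟨hT, hor⟩ := h t ht x hx
  refine ⟨hor.imp (fun h => (hη.trans_le h).ne') fun h => abs_pos.1 (hη.trans_le h), ?_⟩
  rw [norm_mul]
  exact mul_le_mul (hM _ hT _ hor) (hR ω) (abs_nonneg _) hM0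

variable [IsFiniteMeasure μ]

lemma continuousAt_kernelPotential (hk : IsCausalKernel k) (ha : Measurable a)
    (hc : Measurable c) (hv : Measurable v) (hR : ∀ ω, |v ω| ≤ R)
    (hsep : SourcesAwayFrom μ a c t₀ x₀) :
    ContinuousAt (fun q : ℝ × ℝ => kernelPotential k μ a c v q.1 q.2) (t₀, x₀) := by
  obtain ⟨ε, hε, M, hM⟩ := hsep.exists_bound hk hR
  have near : ∀ᶠ q : ℝ × ℝ in 𝓝 (t₀, x₀), q.1 ∈ Metric.ball t₀ ε ∧ q.2 ∈ Metric.ball x₀ ε :=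
    prod_mem_nhds (Metric.ball_mem_nhds t₀ hε) (Metric.ball_mem_nhds x₀ hε)
  refine continuousAt_of_dominated (bound := fun _ => M)
    (.of_forall fun q => hk.aestronglyMeasurable_integrand ha hc hv q.1 q.2) ?_
    (integrable_const M) ?_
  · filter_upwards [near] with q hq
    filter_upwards [hM] with ω h using (h _ hq.1 _ hq.2).2
  · filter_upwards [hM] with ω h
    have off_origin := (h t₀ (Metric.mem_ball_self hε) x₀ (Metric.mem_ball_self hε)).1
    exact ((hk.continuousAt _ _ off_origin).comp (x := (t₀, x₀))
      (f := fun q : ℝ × ℝ => (q.1 - a ω, q.2 - c ω)) (by fun_prop)).mul continuousAt_const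

lemma hasDerivAt_kernelPotential_space (hk : IsCausalKernel k) (hk' : IsCausalKernel k')
    (hkk' : ∀ t x, HasDerivAt (k t) (k' t x) x) (ha : Measurable a) (hc : Measurable c)
    (hv : Measurable v) (hR : ∀ ω, |v ω| ≤ R) (hsep : SourcesAwayFrom μ a c t₀ x₀) :
    HasDerivAt (kernelPotential k μ a c v t₀) (kernelPotential k' μ a c v t₀ x₀) x₀ := by
  obtain ⟨ε, hε, M, hM⟩ := hsep.exists_bound hk hR
  obtain ⟨ε', hε', M', hM'⟩ := hsep.exists_bound hk' hR
  refine (hasDerivAt_integral_of_dominated_loc_of_deriv_le (bound := fun _ => M')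
    (F := fun x ω => k (t₀ - a ω) (x - c ω) * v ω)
    (F' := fun x ω => k' (t₀ - a ω) (x - c ω) * v ω) (Metric.ball_mem_nhds x₀ hε')
    (.of_forall fun x => hk.aestronglyMeasurable_integrand ha hc hv t₀ x)
    ((integrable_const M).mono' (hk.aestronglyMeasurable_integrand ha hc hv t₀ x₀) ?_)
    (hk'.aestronglyMeasurable_integrand ha hc hv t₀ x₀) ?_ (integrable_const M') ?_).2
  · filter_upwards [hM] with ω h
    exact (h t₀ (Metric.mem_ball_self hε) x₀ (Metric.mem_ball_self hε)).2
  · filter_upwards [hM'] with ω h x hx using (h t₀ (Metric.mem_ball_self hε') x hx).2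
  · filter_upwards with ω x _
    exact ((hkk' (t₀ - a ω) (x - c ω)).comp_sub_const x (c ω)).mul_const (v ω)

lemma hasDerivAt_kernelPotential_time (hk : IsCausalKernel k) (hk' : IsCausalKernel k')
    (hkk' : ∀ t x, t ≠ 0 ∨ x ≠ 0 → HasDerivAt (fun t => k t x) (k' t x) t) (ha : Measurable a)
    (hc : Measurable c) (hv : Measurable v) (hR : ∀ ω, |v ω| ≤ R)
    (hsep : SourcesAwayFrom μ a c t₀ x₀) :
    HasDerivAt (fun t => kernelPotential k μ a c v t x₀) (kernelPotential k' μ a c v t₀ x₀) t₀ := by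
  obtain ⟨ε, hε, M, hM⟩ := hsep.exists_bound hk hR
  obtain ⟨ε', hε', M', hM'⟩ := hsep.exists_bound hk' hR
  refine (hasDerivAt_integral_of_dominated_loc_of_deriv_le (bound := fun _ => M')
    (F := fun t ω => k (t - a ω) (x₀ - c ω) * v ω)
    (F' := fun t ω => k' (t - a ω) (x₀ - c ω) * v ω) (Metric.ball_mem_nhds t₀ hε')
    (.of_forall fun t => hk.aestronglyMeasurable_integrand ha hc hv t x₀)
    ((integrable_const M).mono' (hk.aestronglyMeasurable_integrand ha hc hv t₀ x₀) ?_)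
    (hk'.aestronglyMeasurable_integrand ha hc hv t₀ x₀) ?_ (integrable_const M') ?_).2
  · filter_upwards [hM] with ω h
    exact (h t₀ (Metric.mem_ball_self hε) x₀ (Metric.mem_ball_self hε)).2
  · filter_upwards [hM'] with ω h t ht using (h t ht x₀ (Metric.mem_ball_self hε')).2
  · filter_upwards [hM'] with ω h t ht
    have off_origin := (h t ht x₀ (Metric.mem_ball_self hε')).1
    exact ((hkk' _ _ off_origin).comp_sub_const t (a ω)).mul_const (v ω)

lemma isCaloricAt_kernelPotential (ha : Measurable a) (hc : Measurable c) (hv : Measurable v)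
    (hR : ∀ ω, |v ω| ≤ R) (hsep : SourcesAwayFrom μ a c t₀ x₀) :
    IsCaloricAt (kernelPotential heatKernel μ a c v) (kernelPotential heatKernelDx μ a c v)
      (kernelPotential heatKernelDxx μ a c v) t₀ x₀ where
  hasDerivAt_space := hasDerivAt_kernelPotential_space isCausalKernel_heatKernel
    isCausalKernel_heatKernelDx hasDerivAt_heatKernel_space ha hc hv hR hsep
  hasDerivAt_space_space := hasDerivAt_kernelPotential_space isCausalKernel_heatKernelDx
    isCausalKernel_heatKernelDxx hasDerivAt_heatKernelDx_space ha hc hv hR hsep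
  hasDerivAt_time := hasDerivAt_kernelPotential_time isCausalKernel_heatKernel
    isCausalKernel_heatKernelDxx (fun _ _ => hasDerivAt_heatKernel_time) ha hc hv hR hsep
  continuousAt_space :=
    continuousAt_kernelPotential isCausalKernel_heatKernelDx ha hc hv hR hsep
  continuousAt_space_space :=
    continuousAt_kernelPotential isCausalKernel_heatKernelDxx ha hc hv hR hsep

end KernelPotential

/-! ### Layer potentials on Lipschitz curves -/

/-- The densities of layer potentials: bounded measurable functions of time that vanish up to the
initial time `0` and are continuous afterwards. -/
structure IsLayerDensity (v : ℝ → ℝ) (R : NNReal) : Prop where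
  measurable : Measurable v
  abs_le : ∀ t, |v t| ≤ R
  eq_zero : ∀ t ≤ 0, v t = 0
  continuousAt : ∀ t > 0, ContinuousAt v t

/-- A measurable kernel in the time lag `σ` with the integrable singularity `σ ^ (-1 / 2)` of
Abel's equation. As `√σ = 0` for `σ ≤ 0`, the bound makes the kernel causal. -/
structure IsAbelKernel (κ : ℝ → ℝ) (b : ℝ) : Prop where
  measurable : Measurable κ
  abs_le : ∀ σ, |κ σ| ≤ b * (√σ)⁻¹

/-- The potential at `(t, x)` of sources of strength `v(τ)` at the points `(τ, γ(τ))` of a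
curve. -/
def layerPotential (k : ℝ → ℝ → ℝ) (γ v : ℝ → ℝ) (t x : ℝ) : ℝ :=
  kernelPotential k volume (fun τ => τ) γ v t x

section Layer

variable {γ v κ : ℝ → ℝ} {C R : NNReal} {b t t₀ x₀ r σ : ℝ}

lemma IsLayerDensity.continuousAt_of_ne_zero (hv : IsLayerDensity v R) (ht : t ≠ 0) :
    ContinuousAt v t := by
  rcases ht.lt_or_gt with ht | ht
  · refine (continuousAt_const (y := (0 : ℝ))).congr ?_
    filter_upwards [Iio_mem_nhds ht] with τ hτ using (hv.eq_zero τ hτ.le).symm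
  · exact hv.continuousAt t ht

lemma abs_sub_delayed_le (hγ : LipschitzWith C γ) (t : ℝ) (hσ : 0 ≤ σ) :
    |γ t - γ (t - σ)| ≤ C * σ := by
  simpa [Real.dist_eq, abs_of_nonneg hσ] using hγ.dist_le_mul t (t - σ)

lemma integrableOn_inv_sqrt (T : ℝ) : IntegrableOn (fun σ : ℝ => (√σ)⁻¹) (Ioc 0 T) := by
  rcases le_or_gt T 0 with hT | hT
  · simp [Ioc_eq_empty_of_le hT]
  have key := intervalIntegral.intervalIntegrable_rpow' (a := 0) (b := T) (r := -(1 / 2))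
    (by norm_num)
  rw [intervalIntegrable_iff_integrableOn_Ioc_of_le hT.le] at key
  refine key.congr_fun (fun σ hσ => ?_) measurableSet_Ioc
  rw [Real.sqrt_eq_rpow, ← Real.rpow_neg hσ.1.le]

namespace IsAbelKernel

lemma eq_zero (hκ : IsAbelKernel κ b) (hσ : σ ≤ 0) : κ σ = 0 := by
  simpa [Real.sqrt_eq_zero_of_nonpos hσ] using hκ.abs_le σ

lemma nonneg (hκ : IsAbelKernel κ b) : 0 ≤ b := by
  simpa using (abs_nonneg _).trans (hκ.abs_le 1)

lemma norm_mul_le (hκ : IsAbelKernel κ b) (hv : IsLayerDensity v R) {T : ℝ} (ht : t ≤ T) (σ : ℝ) :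
    ‖κ σ * v (t - σ)‖ ≤ (Ioc 0 T).indicator (fun σ => b * R * (√σ)⁻¹) σ := by
  by_cases h : σ ∈ Ioc 0 T
  · rw [indicator_of_mem h, norm_mul, Real.norm_eq_abs, Real.norm_eq_abs, mul_right_comm]
    have hb := hκ.nonneg
    exact mul_le_mul (hκ.abs_le σ) (hv.abs_le _) (abs_nonneg _) (by positivity)
  · rw [indicator_of_notMem h]
    rcases not_and_or.1 h with h | h
    · rw [hκ.eq_zero (not_lt.1 h), zero_mul, norm_zero]
    · rw [hv.eq_zero _ (by linarith), mul_zero, norm_zero]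

lemma aestronglyMeasurable_mul (hκ : IsAbelKernel κ b) (hv : IsLayerDensity v R) (t : ℝ) :
    AEStronglyMeasurable fun σ => κ σ * v (t - σ) :=
  (hκ.measurable.mul (hv.measurable.comp (by fun_prop))).aestronglyMeasurable

lemma integrable_indicator_bound (b : ℝ) (R : NNReal) (T : ℝ) :
    Integrable ((Ioc 0 T).indicator fun σ : ℝ => b * R * (√σ)⁻¹) :=
  (integrable_indicator_iff measurableSet_Ioc).2 ((integrableOn_inv_sqrt T).const_mul _)

lemma integrable_mul (hκ : IsAbelKernel κ b) (hv : IsLayerDensity v R) (t : ℝ) :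
    Integrable fun σ => κ σ * v (t - σ) :=
  (integrable_indicator_bound b R t).mono' (hκ.aestronglyMeasurable_mul hv t)
    (.of_forall (hκ.norm_mul_le hv le_rfl))

end IsAbelKernel

lemma continuousAt_integral_abelKernel {K : ℝ × ℝ → ℝ → ℝ} {q₀ : ℝ × ℝ}
    (hv : IsLayerDensity v R) (hK : ∀ q, IsAbelKernel (K q) b)
    (hcont : ∀ σ > 0, ContinuousAt (fun q => K q σ) q₀) :
    ContinuousAt (fun q : ℝ × ℝ => ∫ σ, K q σ * v (q.1 - σ)) q₀ := by
  refine continuousAt_of_dominated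
    (.of_forall fun q => (hK q).aestronglyMeasurable_mul hv q.1) ?_
    (IsAbelKernel.integrable_indicator_bound b R (q₀.1 + 1)) ?_
  · have near : ∀ᶠ q : ℝ × ℝ in 𝓝 q₀, q.1 ≤ q₀.1 + 1 :=
      (continuous_fst.tendsto q₀).eventually_le_const (by linarith)
    filter_upwards [near] with q hq using .of_forall ((hK q).norm_mul_le hv hq)
  · filter_upwards [compl_mem_ae_iff.2 (measure_singleton q₀.1)] with σ hσ
    rcases le_or_gt σ 0 with h | h
    · simp only [(hK _).eq_zero h, zero_mul]
      exact continuousAt_const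
    · have hv_at : ContinuousAt v (q₀.1 - σ) :=
        hv.continuousAt_of_ne_zero (sub_ne_zero.2 fun h => hσ h.symm)
      exact (hcont σ h).mul
        (hv_at.comp (x := q₀) (f := fun q : ℝ × ℝ => q.1 - σ) (by fun_prop))

lemma layerPotential_eq_integral_lag (k : ℝ → ℝ → ℝ) (γ v : ℝ → ℝ) (t x : ℝ) :
    layerPotential k γ v t x = ∫ σ, k σ (x - γ (t - σ)) * v (t - σ) := by
  unfold layerPotential kernelPotential
  rw [← integral_sub_left_eq_self (fun τ => k (t - τ) (x - γ τ) * v τ) volume t]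
  simp only [sub_sub_cancel]

lemma layerPotential_eq_restrict {k : ℝ → ℝ → ℝ} (hk : IsCausalKernel k)
    (hv : IsLayerDensity v R) {T : ℝ} (ht : t ≤ T) :
    layerPotential k γ v t =
      kernelPotential k (volume.restrict (Ioc 0 T)) (fun τ => τ) γ v t := by
  ext x
  refine (setIntegral_eq_integral_of_forall_compl_eq_zero fun τ hτ => ?_).symm
  rcases not_and_or.1 hτ with h | h
  · rw [hv.eq_zero τ (not_lt.1 h), mul_zero]
  · rw [hk.eq_zero _ (by linarith), zero_mul]

lemma exists_sourcesAwayFrom_curve (hγ : LipschitzWith C γ) (hx : x₀ ≠ γ t₀) :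
    ∃ T > t₀, SourcesAwayFrom (volume.restrict (Ioc 0 T)) (fun τ => τ) γ t₀ x₀ := by
  obtain ⟨ε, hε, hdist⟩ : ∃ ε > 0, |x₀ - γ t₀| = 4 * (1 + C) * ε :=
    ⟨|x₀ - γ t₀| / (4 * (1 + C)), div_pos (abs_pos.2 (sub_ne_zero.2 hx)) (by positivity),
      by field_simp⟩
  refine ⟨t₀ + ε, by linarith, ε, hε, ε, hε, t₀ + ε, ?_⟩
  refine (ae_restrict_iff' measurableSet_Ioc).2 (.of_forall fun τ hτ t ht x hx => ?_)
  rw [Metric.mem_ball, Real.dist_eq, abs_lt] at ht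
  rw [Metric.mem_ball, Real.dist_eq] at hx
  refine ⟨by linarith [hτ.1], ?_⟩
  by_contra! hclose
  have htime : |t₀ - τ| ≤ 2 * ε := abs_le.2 ⟨by linarith [hτ.2], by linarith⟩
  have hcurve : |γ t₀ - γ τ| ≤ C * (2 * ε) :=
    (hγ.dist_le_mul t₀ τ).trans (mul_le_mul_of_nonneg_left htime C.coe_nonneg)
  have htriangle : |x₀ - γ t₀| ≤ |x - x₀| + |x - γ τ| + |γ t₀ - γ τ| := by
    rw [abs_sub_comm x x₀, abs_sub_comm (γ t₀)]
    calc |x₀ - γ t₀| = |(x₀ - x) + (x - γ τ) + (γ τ - γ t₀)| := by ring_nf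
      _ ≤ _ := abs_add_three _ _ _
  have hC : 0 ≤ C * ε := by positivity
  linarith

lemma isCaloricAt_layerPotential (hγ : LipschitzWith C γ) (hv : IsLayerDensity v R)
    (hx : x₀ ≠ γ t₀) :
    IsCaloricAt (layerPotential heatKernel γ v) (layerPotential heatKernelDx γ v)
      (layerPotential heatKernelDxx γ v) t₀ x₀ := by
  obtain ⟨T, hT, hsep⟩ := exists_sourcesAwayFrom_curve hγ hx
  have restrict {k : ℝ → ℝ → ℝ} (hk : IsCausalKernel k) : ∀ᶠ t in 𝓝 t₀, layerPotential k γ v t =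
      kernelPotential k (volume.restrict (Ioc 0 T)) (fun τ => τ) γ v t := by
    filter_upwards [Iio_mem_nhds hT] with t ht using layerPotential_eq_restrict hk hv ht.le
  exact (isCaloricAt_kernelPotential measurable_id hγ.continuous.measurable hv.measurable
    hv.abs_le hsep).congr (restrict isCausalKernel_heatKernel)
    (restrict isCausalKernel_heatKernelDx) (restrict isCausalKernel_heatKernelDxx)

lemma isAbelKernel_heatKernel {y : ℝ → ℝ} (hy : Measurable y) :
    IsAbelKernel (fun σ => heatKernel σ (y σ)) 1 where
  measurable := isCausalKernel_heatKernel.measurable.comp (measurable_id.prodMk hy)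
  abs_le σ := by
    rw [abs_of_nonneg (heatKernel_nonneg _ _), one_mul]
    exact heatKernel_le _ _

lemma continuous_layerPotential_heatKernel (hγ : Continuous γ) (hv : IsLayerDensity v R) :
    Continuous fun q : ℝ × ℝ => layerPotential heatKernel γ v q.1 q.2 := by
  simp only [layerPotential_eq_integral_lag]
  refine continuous_iff_continuousAt.2 fun q₀ => continuousAt_integral_abelKernel hv
    (K := fun q σ => heatKernel σ (q.2 - γ (q.1 - σ)))
    (fun q => isAbelKernel_heatKernel (by fun_prop)) fun σ _ => ?_
  exact ((continuous_heatKernel_space σ).comp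
    (by fun_prop : Continuous fun q : ℝ × ℝ => q.2 - γ (q.1 - σ))).continuousAt

/-! ### The jump relation -/

/-- The regular part `-(γ(t) - γ(t - σ)) / (2σ) · G(σ, r + γ(t) - γ(t - σ))` of the kernel `Gₓ`
of the differentiated single layer at distance `r` from the curve; the remaining part has
`r / (2σ)` in place of `(γ(t) - γ(t - σ)) / (2σ)` and produces the jump. -/
def regularKernel (γ : ℝ → ℝ) (t r σ : ℝ) : ℝ :=
  -((γ t - γ (t - σ)) / (2 * σ)) * heatKernel σ (r + (γ t - γ (t - σ)))

/-- The singular part of the kernel of the differentiated single layer, see `regularKernel`. -/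
def singularKernel (γ : ℝ → ℝ) (t r σ : ℝ) : ℝ :=
  -(r / (2 * σ)) * heatKernel σ (r + (γ t - γ (t - σ)))

/-- The part of the differentiated single layer potential that is continuous across the
curve. -/
def layerRegularPart (γ v : ℝ → ℝ) (t r : ℝ) : ℝ :=
  ∫ σ, regularKernel γ t r σ * v (t - σ)

lemma isAbelKernel_regularKernel (hγ : LipschitzWith C γ) (t r : ℝ) :
    IsAbelKernel (regularKernel γ t r) C where
  measurable := by
    have hγ_meas := hγ.continuous.measurable
    exact .mul (by fun_prop) (isCausalKernel_heatKernel.measurable.comp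
      (f := fun σ => (σ, r + (γ t - γ (t - σ)))) (by fun_prop))
  abs_le σ := by
    rcases le_or_gt σ 0 with hσ | hσ
    · simp [regularKernel, heatKernel_of_nonpos hσ, Real.sqrt_eq_zero_of_nonpos hσ]
    have slope : |γ t - γ (t - σ)| / (2 * σ) ≤ C := by
      rw [div_le_iff₀ (by positivity)]
      have : 0 ≤ C * σ := by positivity
      linarith [abs_sub_delayed_le hγ t hσ.le]
    rw [regularKernel, abs_mul, abs_neg, abs_of_nonneg (heatKernel_nonneg _ _), abs_div,
      abs_of_pos (by positivity : 0 < 2 * σ)]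
    exact mul_le_mul slope (heatKernel_le _ _) (heatKernel_nonneg _ _) C.coe_nonneg

lemma continuous_layerRegularPart (hγ : LipschitzWith C γ) (hv : IsLayerDensity v R) :
    Continuous fun q : ℝ × ℝ => layerRegularPart γ v q.1 q.2 := by
  refine continuous_iff_continuousAt.2 fun q₀ => continuousAt_integral_abelKernel hv
    (fun q => isAbelKernel_regularKernel hγ q.1 q.2) fun σ _ => ?_
  have hγ_cont := hγ.continuous
  exact (Continuous.mul (by fun_prop) ((continuous_heatKernel_space σ).comp (by fun_prop :
    Continuous fun q : ℝ × ℝ => q.2 + (γ q.1 - γ (q.1 - σ))))).continuousAt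

lemma integrableOn_exp_neg_sq_div_four :
    IntegrableOn (fun y : ℝ => exp (-(y ^ 2 / 4))) (Ioi 0) := by
  refine (integrable_exp_neg_mul_sq (b := 1 / 4) (by norm_num)).integrableOn.congr_fun
    (fun y _ => ?_) measurableSet_Ioi
  ring_nf

lemma integral_Ioi_exp_neg_sq_div_four : ∫ y in Ioi (0 : ℝ), exp (-(y ^ 2 / 4)) = √π := by
  have value : √(π / (1 / 4)) / 2 = √π := by
    rw [show π / (1 / 4) = 2 ^ 2 * π by ring, Real.sqrt_mul (by norm_num),
      Real.sqrt_sq (by norm_num)]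
    ring
  rw [← value, ← integral_gaussian_Ioi (1 / 4)]
  refine setIntegral_congr_fun measurableSet_Ioi fun y _ => ?_
  ring_nf

/-- The integrand of the singular part of the differentiated single layer after the parabolic
substitution `σ = r² / y²`, up to the factor `-sign(r) / (2√π)`. -/
def jumpIntegrand (γ v : ℝ → ℝ) (t r y : ℝ) : ℝ :=
  exp (-(((r + (γ t - γ (t - r ^ 2 / y ^ 2))) * y / r) ^ 2 / 4)) * v (t - r ^ 2 / y ^ 2)

lemma sq_scaled_sub_sq {Δ y : ℝ} (hr : r ≠ 0) :
    ((r + Δ) * y / r) ^ 2 - y ^ 2 = 2 * Δ * y ^ 2 / r + Δ ^ 2 * y ^ 2 / r ^ 2 := by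
  field_simp
  ring

lemma abs_two_mul_sub_delayed_mul_le (hγ : LipschitzWith C γ) (t : ℝ) {y : ℝ} (hr : r ≠ 0)
    (hy : 0 < y) : |2 * (γ t - γ (t - r ^ 2 / y ^ 2)) * y ^ 2 / r| ≤ 2 * C * |r| := by
  have lip := abs_sub_delayed_le hγ t (by positivity : 0 ≤ r ^ 2 / y ^ 2)
  rw [abs_div, abs_mul, abs_mul, abs_two, abs_of_nonneg (sq_nonneg y),
    div_le_iff₀ (abs_pos.2 hr)]
  calc 2 * |γ t - γ (t - r ^ 2 / y ^ 2)| * y ^ 2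
      ≤ 2 * (C * (r ^ 2 / y ^ 2)) * y ^ 2 := by gcongr
    _ = 2 * C * |r| * |r| := by rw [mul_assoc (2 * (C : ℝ)), abs_mul_abs_self]; field_simp

lemma abs_sq_scaled_sub_sq_le (hγ : LipschitzWith C γ) (t : ℝ) {y : ℝ} (hr : r ≠ 0)
    (hy : 0 < y) : |((r + (γ t - γ (t - r ^ 2 / y ^ 2))) * y / r) ^ 2 - y ^ 2| ≤
      2 * C * |r| + C ^ 2 * r ^ 2 / y ^ 2 := by
  have lip := abs_sub_delayed_le hγ t (by positivity : 0 ≤ r ^ 2 / y ^ 2)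
  have quadratic : |(γ t - γ (t - r ^ 2 / y ^ 2)) ^ 2 * y ^ 2 / r ^ 2| ≤
      C ^ 2 * r ^ 2 / y ^ 2 := by
    rw [abs_of_nonneg (by positivity), ← sq_abs (γ t - _)]
    calc |γ t - γ (t - r ^ 2 / y ^ 2)| ^ 2 * y ^ 2 / r ^ 2
        ≤ (C * (r ^ 2 / y ^ 2)) ^ 2 * y ^ 2 / r ^ 2 := by gcongr
      _ = C ^ 2 * r ^ 2 / y ^ 2 := by field_simp
  rw [sq_scaled_sub_sq hr]
  exact (abs_add_le _ _).trans
    (add_le_add (abs_two_mul_sub_delayed_mul_le hγ t hr hy) quadratic)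

lemma abs_jumpIntegrand_le (hγ : LipschitzWith C γ) (hv : IsLayerDensity v R) (t : ℝ) {y : ℝ}
    (hr : r ≠ 0) (hy : 0 < y) :
    |jumpIntegrand γ v t r y| ≤ exp (C * |r| / 2) * R * exp (-(y ^ 2 / 4)) := by
  have exponent : y ^ 2 - 2 * C * |r| ≤ ((r + (γ t - γ (t - r ^ 2 / y ^ 2))) * y / r) ^ 2 := by
    have linear := (abs_le.1 (abs_two_mul_sub_delayed_mul_le hγ t hr hy)).1
    have quadratic : 0 ≤ (γ t - γ (t - r ^ 2 / y ^ 2)) ^ 2 * y ^ 2 / r ^ 2 := by positivity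
    linarith [sq_scaled_sub_sq (Δ := γ t - γ (t - r ^ 2 / y ^ 2)) (y := y) hr]
  rw [jumpIntegrand, abs_mul, abs_of_pos (exp_pos _), mul_right_comm, ← exp_add]
  refine mul_le_mul (exp_le_exp.2 ?_) (hv.abs_le _) (abs_nonneg _) (exp_pos _).le
  linarith

lemma measurable_jumpIntegrand (hγ : Measurable γ) (hv : Measurable v) (t r : ℝ) :
    Measurable (jumpIntegrand γ v t r) := by
  unfold jumpIntegrand
  fun_prop

lemma integrableOn_jumpIntegrand (hγ : LipschitzWith C γ) (hv : IsLayerDensity v R) (t : ℝ)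
    (hr : r ≠ 0) : IntegrableOn (jumpIntegrand γ v t r) (Ioi 0) :=
  (integrableOn_exp_neg_sq_div_four.const_mul (exp (C * |r| / 2) * R)).mono'
    (measurable_jumpIntegrand hγ.continuous.measurable hv.measurable t r).aestronglyMeasurable
    ((ae_restrict_iff' measurableSet_Ioi).2
      (.of_forall fun _ hy => abs_jumpIntegrand_le hγ hv t hr hy))

lemma hasDerivWithinAt_sq_div_sq (r : ℝ) {y : ℝ} (hy : y ∈ Ioi 0) :
    HasDerivWithinAt (fun y : ℝ => r ^ 2 / y ^ 2) (-(2 * r ^ 2 / y ^ 3)) (Ioi 0) y := by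
  have hy_pos : 0 < y := hy
  have key := ((hasDerivAt_pow 2 y).inv (by positivity)).const_mul (r ^ 2)
  simp only [Pi.inv_apply, ← div_eq_mul_inv] at key
  refine (key.congr_deriv ?_).hasDerivWithinAt
  field_simp
  push_cast
  ring

lemma bijOn_sq_div_sq (hr : r ≠ 0) : BijOn (fun y : ℝ => r ^ 2 / y ^ 2) (Ioi 0) (Ioi 0) := by
  refine ⟨fun y hy => ?_, fun y hy z hz h => ?_, fun σ hσ => ?_⟩
  · have : (0 : ℝ) < y := hy
    exact mem_Ioi.2 (by positivity)
  · have hy_pos : (0 : ℝ) < y := hy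
    have hz_pos : (0 : ℝ) < z := hz
    simp only [div_eq_div_iff (by positivity : y ^ 2 ≠ 0) (by positivity : z ^ 2 ≠ 0)] at h
    exact ((pow_left_inj₀ hz_pos.le hy_pos.le two_ne_zero).1
      (mul_left_cancel₀ (pow_ne_zero 2 hr) h)).symm
  · have hσ_pos : (0 : ℝ) < σ := hσ
    refine ⟨|r| / √σ, div_pos (abs_pos.2 hr) (Real.sqrt_pos.2 hσ_pos), ?_⟩
    simp only [div_pow, Real.sq_sqrt hσ_pos.le, sq_abs]
    field_simp

lemma abs_deriv_mul_singularKernel (γ v : ℝ → ℝ) (t : ℝ) (hr : r ≠ 0) {y : ℝ} (hy : y ∈ Ioi 0) :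
    |-(2 * r ^ 2 / y ^ 3)| • (singularKernel γ t r (r ^ 2 / y ^ 2) * v (t - r ^ 2 / y ^ 2)) =
      -(r / |r|) * (2 * √π)⁻¹ * jumpIntegrand γ v t r y := by
  have hy_pos : 0 < y := hy
  have : 0 < √π := Real.sqrt_pos.2 pi_pos
  have sqrt_eq : √(r ^ 2 / y ^ 2) = |r| / y := by
    rw [← div_pow, Real.sqrt_sq_eq_abs, abs_div, abs_of_pos hy_pos]
  simp only [singularKernel, jumpIntegrand, heatKernel, sqrt_eq, smul_eq_mul]
  set Δ := γ t - γ (t - r ^ 2 / y ^ 2)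
  have exponent : (r + Δ) ^ 2 / (4 * (r ^ 2 / y ^ 2)) = ((r + Δ) * y / r) ^ 2 / 4 := by
    field_simp
  rw [exponent, abs_neg, abs_of_pos (by positivity)]
  generalize exp (-(((r + Δ) * y / r) ^ 2 / 4)) = E
  generalize v (t - r ^ 2 / y ^ 2) = V
  field_simp

lemma singularKernel_of_nonpos (γ : ℝ → ℝ) (t r : ℝ) (hσ : σ ≤ 0) :
    singularKernel γ t r σ = 0 := by
  rw [singularKernel, heatKernel_of_nonpos hσ, mul_zero]

lemma integrable_singularKernel_mul (hγ : LipschitzWith C γ) (hv : IsLayerDensity v R) (t : ℝ)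
    (hr : r ≠ 0) : Integrable fun σ => singularKernel γ t r σ * v (t - σ) := by
  have on_pos : IntegrableOn (fun σ => singularKernel γ t r σ * v (t - σ)) (Ioi 0) := by
    rw [← (bijOn_sq_div_sq hr).image_eq, integrableOn_image_iff_integrableOn_abs_deriv_smul
      measurableSet_Ioi (fun y => hasDerivWithinAt_sq_div_sq r) (bijOn_sq_div_sq hr).injOn]
    exact IntegrableOn.congr_fun ((integrableOn_jumpIntegrand hγ hv t hr).const_mul _)
      (fun y hy => (abs_deriv_mul_singularKernel γ v t hr hy).symm) measurableSet_Ioi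
  refine (integrableOn_iff_integrable_of_support_subset fun σ hσ => ?_).1 on_pos
  by_contra h
  exact hσ (by simp only [singularKernel_of_nonpos γ t r (not_lt.1 h), zero_mul])

lemma integral_singularKernel_mul (γ v : ℝ → ℝ) (t : ℝ) (hr : r ≠ 0) :
    ∫ σ, singularKernel γ t r σ * v (t - σ) =
      -(r / |r|) * (2 * √π)⁻¹ * ∫ y in Ioi 0, jumpIntegrand γ v t r y := by
  have supported : ∀ σ ∉ Ioi (0 : ℝ), singularKernel γ t r σ * v (t - σ) = 0 := fun σ hσ => by
    rw [singularKernel_of_nonpos γ t r (not_lt.1 hσ), zero_mul]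
  rw [← setIntegral_eq_integral_of_forall_compl_eq_zero supported,
    ← (bijOn_sq_div_sq hr).image_eq, integral_image_eq_integral_abs_deriv_smul measurableSet_Ioi
      (fun y => hasDerivWithinAt_sq_div_sq r) (bijOn_sq_div_sq hr).injOn,
    setIntegral_congr_fun measurableSet_Ioi
      (fun y => abs_deriv_mul_singularKernel γ v t hr (y := y)),
    integral_const_mul, (bijOn_sq_div_sq hr).image_eq]

lemma tendsto_jumpIntegrand (hγ : LipschitzWith C γ) (hv : IsLayerDensity v R) (ht₀ : 0 < t₀)
    {y : ℝ} (hy : 0 < y) :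
    Tendsto (fun q : ℝ × ℝ => jumpIntegrand γ v q.1 q.2 y) (𝓝[{q | q.2 ≠ 0}] (t₀, 0))
      (𝓝 (exp (-(y ^ 2 / 4)) * v t₀)) := by
  have restrict {f : ℝ × ℝ → ℝ} {c : ℝ} (hf : Continuous f) (h : f (t₀, 0) = c) :
      Tendsto f (𝓝[{q | q.2 ≠ 0}] (t₀, 0)) (𝓝 c) :=
    h ▸ (hf.tendsto _).mono_left nhdsWithin_le_nhds
  refine Tendsto.mul ?_ ?_
  · refine (Real.continuous_exp.tendsto _).comp (Tendsto.neg (Tendsto.div_const ?_ 4))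
    rw [tendsto_iff_norm_sub_tendsto_zero]
    refine squeeze_zero' (.of_forall fun _ => norm_nonneg _) ?_
      (restrict (f := fun q => 2 * C * |q.2| + C ^ 2 * q.2 ^ 2 / y ^ 2) (by fun_prop) (by simp))
    filter_upwards [self_mem_nhdsWithin] with q hq using abs_sq_scaled_sub_sq_le hγ q.1 hq hy
  · exact (hv.continuousAt t₀ ht₀).tendsto.comp (restrict (by fun_prop) (by simp))

lemma tendsto_integral_jumpIntegrand (hγ : LipschitzWith C γ) (hv : IsLayerDensity v R)
    (ht₀ : 0 < t₀) :
    Tendsto (fun q : ℝ × ℝ => ∫ y in Ioi 0, jumpIntegrand γ v q.1 q.2 y)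
      (𝓝[{q | q.2 ≠ 0}] (t₀, 0)) (𝓝 (√π * v t₀)) := by
  rw [← integral_Ioi_exp_neg_sq_div_four, ← integral_mul_const]
  refine tendsto_integral_filter_of_dominated_convergence
    (fun y => exp (C / 2) * R * exp (-(y ^ 2 / 4))) (.of_forall fun q =>
      (measurable_jumpIntegrand hγ.continuous.measurable hv.measurable _ _).aestronglyMeasurable)
    ?_ (integrableOn_exp_neg_sq_div_four.const_mul _)
    ((ae_restrict_iff' measurableSet_Ioi).2 (.of_forall fun y => tendsto_jumpIntegrand hγ hv ht₀))
  have near : ∀ᶠ q : ℝ × ℝ in 𝓝[{q | q.2 ≠ 0}] (t₀, 0), |q.2| ≤ 1 :=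
    ((continuous_abs.comp continuous_snd).tendsto' (t₀, (0 : ℝ)) 0 abs_zero
      |>.mono_left nhdsWithin_le_nhds).eventually_le_const one_pos
  filter_upwards [self_mem_nhdsWithin, near] with q hq hq1
  refine (ae_restrict_iff' measurableSet_Ioi).2 (.of_forall fun y hy => ?_)
  refine (abs_jumpIntegrand_le hγ hv q.1 hq hy).trans ?_
  gcongr
  exact mul_le_of_le_one_right C.coe_nonneg hq1

lemma layerPotential_heatKernelDx_eq_add (hγ : LipschitzWith C γ) (hv : IsLayerDensity v R)
    {t x : ℝ} (hx : x ≠ γ t) :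
    layerPotential heatKernelDx γ v t x = layerRegularPart γ v t (x - γ t) +
      ∫ σ, singularKernel γ t (x - γ t) σ * v (t - σ) := by
  rw [layerPotential_eq_integral_lag, layerRegularPart,
    ← integral_add ((isAbelKernel_regularKernel hγ t _).integrable_mul hv t)
      (integrable_singularKernel_mul hγ hv t (sub_ne_zero.2 hx))]
  refine integral_congr_ae (.of_forall fun σ => ?_)
  simp only [heatKernelDx, regularKernel, singularKernel, sub_add_sub_cancel]
  ring

/-- `e = 1` is the limit from the right of the curve, `e = -1` the limit from its left. -/
lemma tendsto_layerPotential_heatKernelDx (hγ : LipschitzWith C γ) (hv : IsLayerDensity v R)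
    (ht₀ : 0 < t₀) {e : ℝ} (he : |e| = 1) :
    Tendsto (fun q : ℝ × ℝ => layerPotential heatKernelDx γ v q.1 q.2)
      (𝓝[{q | 0 < e * (q.2 - γ q.1)}] (t₀, γ t₀))
      (𝓝 (layerRegularPart γ v t₀ 0 - e * v t₀ / 2)) := by
  set l := 𝓝[{q : ℝ × ℝ | 0 < e * (q.2 - γ q.1)}] (t₀, γ t₀)
  have on_side : ∀ᶠ q : ℝ × ℝ in l, 0 < e * (q.2 - γ q.1) := self_mem_nhdsWithin
  have off_curve {q : ℝ × ℝ} (hq : 0 < e * (q.2 - γ q.1)) : q.2 - γ q.1 ≠ 0 :=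
    fun h => hq.ne' (by rw [h, mul_zero])
  have straighten : Tendsto (fun q : ℝ × ℝ => (q.1, q.2 - γ q.1)) l (𝓝 (t₀, 0)) := by
    have hγ_cont := hγ.continuous
    exact (Continuous.tendsto' (by fun_prop) _ _ (by simp)).mono_left nhdsWithin_le_nhds
  have regular : Tendsto (fun q : ℝ × ℝ => layerRegularPart γ v q.1 (q.2 - γ q.1)) l
      (𝓝 (layerRegularPart γ v t₀ 0)) :=
    ((continuous_layerRegularPart hγ hv).tendsto (t₀, 0)).comp straighten
  have singular := (tendsto_integral_jumpIntegrand hγ hv ht₀).comp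
    (tendsto_nhdsWithin_iff.2 ⟨straighten, on_side.mono fun q hq => off_curve hq⟩)
  have value : layerRegularPart γ v t₀ 0 + -e * (2 * √π)⁻¹ * (√π * v t₀) =
      layerRegularPart γ v t₀ 0 - e * v t₀ / 2 := by
    have : 0 < √π := Real.sqrt_pos.2 pi_pos
    field_simp
    ring
  refine value ▸ (regular.add (singular.const_mul (-e * (2 * √π)⁻¹))).congr' ?_
  filter_upwards [on_side] with q hq
  have side_eq : (q.2 - γ q.1) / |q.2 - γ q.1| = e := by
    rw [div_eq_iff (abs_pos.2 (off_curve hq)).ne']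
    rcases (abs_eq zero_le_one).1 he with rfl | rfl
    · rw [abs_of_pos (by linarith), one_mul]
    · rw [abs_of_neg (by linarith), neg_one_mul, neg_neg]
  rw [layerPotential_heatKernelDx_eq_add hγ hv (sub_ne_zero.1 (off_curve hq)),
    integral_singularKernel_mul γ v q.1 (off_curve hq), side_eq]
  rfl

end Layer

/-! ### The heat flow of the initial datum -/

/-- The initial data on the line: Lipschitz and even, with support in `[-s₀, s₀]`. Evenness
encodes the reflection in the fixed boundary `x = 0`. -/
structure IsInitialDatum (φ : ℝ → ℝ) (s₀ : ℝ) (K : NNReal) : Prop where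
  pos : 0 < s₀
  lipschitz : LipschitzWith K φ
  even : ∀ x, φ (-x) = φ x
  eq_zero : ∀ x, s₀ ≤ |x| → φ x = 0

/-- The heat flow of `φ`, written in the similarity variable `z = (x - y) / √t` so that it equals
`φ` at time `0`. -/
def heatFlow (φ : ℝ → ℝ) (t x : ℝ) : ℝ :=
  ∫ z, heatKernel 1 z * φ (x - √t * z)

/-- The space convolution of the kernel `k t` with `φ`. -/
def initialPotential (k : ℝ → ℝ → ℝ) (φ : ℝ → ℝ) (t x : ℝ) : ℝ :=
  ∫ y, k t (x - y) * φ y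

section HeatFlow

variable {φ k : ℝ → ℝ} {K : NNReal} {M s₀ t : ℝ}

lemma heatKernel_one (z : ℝ) : heatKernel 1 z = exp (-(z ^ 2 / 4)) * (2 * √π)⁻¹ := by
  simp [heatKernel, div_eq_mul_inv]

lemma integrable_heatKernel_one : Integrable (heatKernel 1) := by
  refine ((integrable_exp_neg_mul_sq (b := 1 / 4) (by norm_num)).mul_const (2 * √π)⁻¹).congr
    (.of_forall fun z => ?_)
  simp only [heatKernel_one]
  ring_nf

lemma integral_heatKernel_one : ∫ z, heatKernel 1 z = 1 := by
  have gaussian : ∫ z, heatKernel 1 z = (∫ z, exp (-(1 / 4) * z ^ 2)) * (2 * √π)⁻¹ := by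
    rw [← integral_mul_const]
    refine integral_congr_ae (.of_forall fun z => ?_)
    simp only [heatKernel_one]
    ring_nf
  rw [gaussian, integral_gaussian, show π / (1 / 4) = 2 ^ 2 * π by ring,
    Real.sqrt_mul (by norm_num), Real.sqrt_sq (by norm_num)]
  exact mul_inv_cancel₀ (by positivity)

lemma integrable_heatKernelDx_one : Integrable (heatKernelDx 1) := by
  refine ((integrable_mul_exp_neg_mul_sq (b := 1 / 4) (by norm_num)).mul_const
    (-(1 / 2) * (2 * √π)⁻¹)).congr (.of_forall fun z => ?_)
  simp only [heatKernelDx, heatKernel_one]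
  ring_nf

lemma heatKernel_scale (ht : 0 < t) (z : ℝ) :
    heatKernel t (√t * z) * √t = heatKernel 1 z := by
  have := Real.sqrt_pos.2 ht
  have exponent : t * z ^ 2 / (4 * t) = z ^ 2 / (4 * 1) := by field_simp
  rw [heatKernel, heatKernel, Real.sqrt_one, mul_pow, Real.sq_sqrt ht.le, exponent]
  field_simp

lemma heatKernelDx_scale (ht : 0 < t) (z : ℝ) :
    heatKernelDx t (√t * z) * √t = (√t)⁻¹ * heatKernelDx 1 z := by
  have := Real.sqrt_pos.2 ht
  have slope : √t * z / (2 * t) = (√t)⁻¹ * (z / (2 * 1)) := by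
    field_simp
    rw [Real.sq_sqrt ht.le]
    ring
  rw [heatKernelDx, heatKernelDx, mul_assoc, heatKernel_scale ht, slope]
  ring

lemma integral_convolution_scale {k' : ℝ → ℝ} {a : ℝ} (ht : 0 < t)
    (hk : ∀ z, k (√t * z) * √t = a * k' z) (φ : ℝ → ℝ) (x : ℝ) :
    ∫ y, k (x - y) * φ y = a * ∫ z, k' z * φ (x - √t * z) := by
  have hsqrt := Real.sqrt_pos.2 ht
  have rescale := Measure.integral_comp_mul_left (fun y => k y * φ (x - y)) (√t)
  rw [abs_of_pos (inv_pos.2 hsqrt), smul_eq_mul, eq_inv_mul_iff_mul_eq₀ hsqrt.ne'] at rescale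
  rw [← integral_sub_left_eq_self (fun y => k (x - y) * φ y) volume x]
  simp only [sub_sub_cancel]
  rw [← rescale, ← integral_const_mul, ← integral_const_mul]
  refine integral_congr_ae (.of_forall fun z => ?_)
  linear_combination φ (x - √t * z) * hk z

lemma heatFlow_eq_initialPotential (φ : ℝ → ℝ) (ht : 0 < t) :
    heatFlow φ t = initialPotential heatKernel φ t := by
  ext x
  rw [initialPotential, integral_convolution_scale (k' := heatKernel 1) (a := 1) ht
    (by simpa using heatKernel_scale ht), one_mul, heatFlow]

lemma initialPotential_heatKernelDx_eq (φ : ℝ → ℝ) (ht : 0 < t) (x : ℝ) :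
    initialPotential heatKernelDx φ t x =
      (√t)⁻¹ * ∫ z, heatKernelDx 1 z * φ (x - √t * z) :=
  integral_convolution_scale ht (heatKernelDx_scale ht) φ x

lemma initialPotential_heatKernelDx_zero (heven : ∀ x, φ (-x) = φ x) (t : ℝ) :
    initialPotential heatKernelDx φ t 0 = 0 := by
  have odd : ∫ y, heatKernelDx t (-y) * φ (-y) = -∫ y, heatKernelDx t y * φ y := by
    simp only [heatKernelDx_neg, heven, neg_mul, integral_neg]
  rw [integral_neg_eq_self (fun y => heatKernelDx t y * φ y), self_eq_neg] at odd
  simp only [initialPotential, zero_sub, heatKernelDx_neg, neg_mul, integral_neg, odd, neg_zero]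

lemma integrable_mul_rescaled (hφ : Continuous φ) (hM : ∀ x, |φ x| ≤ M) (hk : Integrable k)
    (t x : ℝ) : Integrable fun z => k z * φ (x - √t * z) :=
  hk.mul_bdd (hφ.comp (by fun_prop)).aestronglyMeasurable (.of_forall fun _ => hM _)

lemma abs_integral_mul_rescaled_sub_le (hφ : LipschitzWith K φ) (hM : ∀ x, |φ x| ≤ M)
    (hk : Integrable k) (t x y : ℝ) :
    |(∫ z, k z * φ (x - √t * z)) - ∫ z, k z * φ (y - √t * z)| ≤
      (∫ z, |k z|) * (K * |x - y|) := by
  rw [← integral_sub (integrable_mul_rescaled hφ.continuous hM hk t x)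
    (integrable_mul_rescaled hφ.continuous hM hk t y), ← integral_mul_const, ← Real.norm_eq_abs]
  refine norm_integral_le_of_norm_le (hk.abs.mul_const _) (.of_forall fun z => ?_)
  rw [← mul_sub, norm_mul, Real.norm_eq_abs]
  refine mul_le_mul_of_nonneg_left ?_ (abs_nonneg _)
  simpa [Real.dist_eq] using hφ.dist_le_mul (x - √t * z) (y - √t * z)

lemma lipschitzWith_heatFlow (hφ : LipschitzWith K φ) (hM : ∀ x, |φ x| ≤ M) (t : ℝ) :
    LipschitzWith K (heatFlow φ t) := by
  have mass : ∫ z, |heatKernel 1 z| = 1 := by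
    simpa only [abs_of_nonneg (heatKernel_nonneg _ _)] using integral_heatKernel_one
  refine LipschitzWith.of_dist_le_mul fun x y => ?_
  have key := abs_integral_mul_rescaled_sub_le hφ hM integrable_heatKernel_one t x y
  rwa [mass, one_mul] at key

lemma norm_heatKernel_one_mul_le (hM : ∀ x, |φ x| ≤ M) (x z : ℝ) :
    ‖heatKernel 1 z * φ x‖ ≤ M * heatKernel 1 z := by
  rw [norm_mul, Real.norm_eq_abs, Real.norm_eq_abs, abs_of_nonneg (heatKernel_nonneg _ _),
    mul_comm]
  exact mul_le_mul_of_nonneg_right (hM x) (heatKernel_nonneg _ _)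

lemma continuous_heatFlow (hφ : Continuous φ) (hM : ∀ x, |φ x| ≤ M) :
    Continuous fun q : ℝ × ℝ => heatFlow φ q.1 q.2 := by
  refine continuous_of_dominated (bound := fun z => M * heatKernel 1 z) (fun q => ?_)
    (fun q => .of_forall fun z => norm_heatKernel_one_mul_le hM _ z)
    (integrable_heatKernel_one.const_mul _) (.of_forall fun z => by fun_prop)
  exact ((continuous_heatKernel_space 1).mul (hφ.comp (by fun_prop))).aestronglyMeasurable

lemma heatFlow_zero (φ : ℝ → ℝ) (x : ℝ) : heatFlow φ 0 x = φ x := by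
  simp [heatFlow, integral_mul_const, integral_heatKernel_one]

lemma abs_heatFlow_le (hM : ∀ x, |φ x| ≤ M) (t x : ℝ) : |heatFlow φ t x| ≤ M := by
  have key := norm_integral_le_of_norm_le (integrable_heatKernel_one.const_mul M)
    (.of_forall fun z => norm_heatKernel_one_mul_le hM (x - √t * z) z)
  rwa [integral_const_mul, integral_heatKernel_one, mul_one] at key

lemma abs_initialPotential_heatKernelDx_sub_le (hφ : LipschitzWith K φ) (hM : ∀ x, |φ x| ≤ M)
    (ht : 0 < t) (x y : ℝ) :
    |initialPotential heatKernelDx φ t x - initialPotential heatKernelDx φ t y| ≤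
      ((∫ z, |heatKernelDx 1 z|) * K) * ((√t)⁻¹ * |x - y|) := by
  rw [initialPotential_heatKernelDx_eq φ ht, initialPotential_heatKernelDx_eq φ ht, ← mul_sub,
    abs_mul, abs_of_nonneg (by positivity : 0 ≤ (√t)⁻¹)]
  calc _ ≤ (√t)⁻¹ * ((∫ z, |heatKernelDx 1 z|) * (K * |x - y|)) := by
        gcongr
        exact abs_integral_mul_rescaled_sub_le hφ hM integrable_heatKernelDx_one t x y
    _ = _ := by ring

namespace IsInitialDatum

lemma abs_le (h : IsInitialDatum φ s₀ K) (x : ℝ) : |φ x| ≤ K * s₀ := by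
  have hs := h.pos
  wlog hx : 0 ≤ x generalizing x
  · simpa only [h.even] using this (-x) (by linarith)
  rcases le_or_gt s₀ x with hxs | hxs
  · rw [h.eq_zero x (hxs.trans (le_abs_self x)), abs_zero]
    positivity
  · have key : |φ x - φ s₀| ≤ K * |x - s₀| := h.lipschitz.dist_le_mul x s₀
    rw [h.eq_zero s₀ (le_abs_self _), sub_zero,
      abs_of_neg (by linarith : x - s₀ < 0)] at key
    exact key.trans (by gcongr; linarith)

lemma initialPotential_eq_kernelPotential (h : IsInitialDatum φ s₀ K) (k : ℝ → ℝ → ℝ) :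
    initialPotential k φ =
      kernelPotential k (volume.restrict (Icc (-s₀) s₀)) (fun _ => 0) (fun y => y) φ := by
  ext t x
  simp only [initialPotential, kernelPotential, sub_zero]
  refine (setIntegral_eq_integral_of_forall_compl_eq_zero fun y hy => ?_).symm
  rw [h.eq_zero y, mul_zero]
  by_contra! hlt
  exact hy (_root_.abs_le.1 hlt.le)

lemma isCaloricAt_heatFlow (h : IsInitialDatum φ s₀ K) (ht : 0 < t) (x : ℝ) :
    IsCaloricAt (heatFlow φ) (initialPotential heatKernelDx φ)
      (initialPotential heatKernelDxx φ) t x := by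
  have hsep : SourcesAwayFrom (volume.restrict (Icc (-s₀) s₀)) (fun _ => 0) (fun y => y) t x := by
    refine ⟨t / 2, by linarith, t / 2, by linarith, 2 * t, .of_forall fun y τ hτ z _ => ?_⟩
    rw [Metric.mem_ball, Real.dist_eq, abs_lt] at hτ
    exact ⟨by linarith, .inl (by linarith)⟩
  simp only [h.initialPotential_eq_kernelPotential]
  refine (isCaloricAt_kernelPotential measurable_const measurable_id'
    h.lipschitz.continuous.measurable h.abs_le hsep).congr ?_ (.of_forall fun _ => rfl)
    (.of_forall fun _ => rfl)
  filter_upwards [Ioi_mem_nhds ht] with τ hτ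
  rw [heatFlow_eq_initialPotential φ hτ, h.initialPotential_eq_kernelPotential]

lemma abs_initialPotential_heatKernelDx_le (h : IsInitialDatum φ s₀ K) (ht : 0 < t) (x : ℝ) :
    |initialPotential heatKernelDx φ t x| ≤ K :=
  (h.isCaloricAt_heatFlow ht x).hasDerivAt_space.le_of_lipschitz
    (lipschitzWith_heatFlow h.lipschitz h.abs_le t)

end IsInitialDatum

lemma abs_kernelPotential_heatKernel_le {Ω : Type*} [MeasurableSpace Ω] {μ : Measure Ω}
    [IsFiniteMeasure μ] {a c v : Ω → ℝ} {R x T d : ℝ} (hR : ∀ ω, |v ω| ≤ R) (hd : 0 < d)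
    (hfar : ∀ᵐ ω ∂μ, t - a ω ≤ T ∧ d ≤ |x - c ω|) :
    |kernelPotential heatKernel μ a c v t x| ≤ 2 * √T / d ^ 2 * R * μ.real univ := by
  rw [← Real.norm_eq_abs]
  refine norm_integral_le_of_norm_le_const ?_
  filter_upwards [hfar] with ω ⟨hT, hdist⟩
  rw [norm_mul, Real.norm_eq_abs, Real.norm_eq_abs]
  refine mul_le_mul ?_ (hR ω) (abs_nonneg _) (by positivity)
  rw [abs_of_nonneg (heatKernel_nonneg _ _)]
  rcases le_or_gt (t - a ω) 0 with hlag | hlag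
  · rw [heatKernel_of_nonpos hlag]
    positivity
  · rw [le_div_iff₀ (by positivity)]
    calc heatKernel (t - a ω) (x - c ω) * d ^ 2
        ≤ heatKernel (t - a ω) (x - c ω) * |x - c ω| ^ 2 :=
          mul_le_mul_of_nonneg_left (by gcongr) (heatKernel_nonneg _ _)
      _ = (x - c ω) ^ 2 * heatKernel (t - a ω) (x - c ω) := by rw [sq_abs, mul_comm]
      _ ≤ 2 * (t - a ω) * (√(t - a ω))⁻¹ := sq_mul_heatKernel_le hlag _
      _ = 2 * √(t - a ω) := by rw [mul_assoc, mul_inv_sqrt]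
      _ ≤ 2 * √T := by gcongr

end HeatFlow

/-! ### Volterra operators and their fixed points -/

section Volterra

open BoundedContinuousFunction

variable {E F : Type*} [NormedAddCommGroup E] [NormedAddCommGroup F] {lam ρ : ℝ} {v w : ℝ → E}

/-- The Bielecki distance `sup_{t > 0} exp(-λt) ‖v(t) - w(t)‖` is at most `ρ`. -/
def ExpClose (lam ρ : ℝ) (v w : ℝ → E) : Prop :=
  ∀ t > 0, ‖v t - w t‖ ≤ ρ * exp (lam * t)

/-- Nonlinear Volterra operators acting on functions of time that are continuous on `(0, ∞)`. The
factor `1 / √λ` in the Lipschitz constant for the Bielecki distance is what a kernel with the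
singularity `σ ^ (-1 / 2)` yields. -/
structure IsVolterra (Φ : (ℝ → E) → ℝ → F) : Prop where
  continuousOn : ∀ v, ContinuousOn v (Ioi 0) → ContinuousOn (Φ v) (Ioi 0)
  exists_bound : ∃ M, ∀ v, ContinuousOn v (Ioi 0) → ∀ t > 0, ‖Φ v t‖ ≤ M * exp t
  exists_lipschitz : ∃ c, ∀ lam ≥ 1, ∀ v w, ContinuousOn v (Ioi 0) → ContinuousOn w (Ioi 0) →
    ∀ ρ ≥ 0, ExpClose lam ρ v w → ExpClose lam (c * (ρ / √lam)) (Φ v) (Φ w)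

namespace IsVolterra

variable {G : Type*} [NormedAddCommGroup G] {Φ : (ℝ → E) → ℝ → F} {Ψ : (ℝ → E) → ℝ → G}

lemma of_forall_eq {a : ℝ → F} {M : ℝ} (hcont : ContinuousOn a (Ioi 0))
    (hbound : ∀ t > 0, ‖a t‖ ≤ M) : IsVolterra fun (_ : ℝ → E) t => a t where
  continuousOn _ _ := hcont
  exists_bound := ⟨M, fun _ _ t ht => (hbound t ht).trans <| le_mul_of_one_le_right
    ((norm_nonneg _).trans (hbound t ht)) (one_le_exp ht.le)⟩
  exists_lipschitz := ⟨0, fun _ _ _ _ _ _ _ _ _ t _ => by simp⟩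

lemma add {Ψ : (ℝ → E) → ℝ → F} (hΦ : IsVolterra Φ) (hΨ : IsVolterra Ψ) :
    IsVolterra fun v t => Φ v t + Ψ v t where
  continuousOn v hv := (hΦ.continuousOn v hv).add (hΨ.continuousOn v hv)
  exists_bound := by
    obtain ⟨M, hM⟩ := hΦ.exists_bound
    obtain ⟨N, hN⟩ := hΨ.exists_bound
    refine ⟨M + N, fun v hv t ht => ?_⟩
    rw [add_mul]
    exact norm_add_le_of_le (hM v hv t ht) (hN v hv t ht)
  exists_lipschitz := by
    obtain ⟨c, hc⟩ := hΦ.exists_lipschitz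
    obtain ⟨d, hd⟩ := hΨ.exists_lipschitz
    refine ⟨c + d, fun lam hlam v w hv hw ρ hρ h t ht => ?_⟩
    rw [add_sub_add_comm, add_mul, add_mul]
    exact norm_add_le_of_le (hc lam hlam v w hv hw ρ hρ h t ht)
      (hd lam hlam v w hv hw ρ hρ h t ht)

lemma const_smul [NormedSpace ℝ F] (a : ℝ) (hΦ : IsVolterra Φ) :
    IsVolterra fun v t => a • Φ v t where
  continuousOn v hv := (hΦ.continuousOn v hv).const_smul a
  exists_bound := by
    obtain ⟨M, hM⟩ := hΦ.exists_bound
    refine ⟨‖a‖ * M, fun v hv t ht => ?_⟩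
    rw [norm_smul, mul_assoc]
    exact mul_le_mul_of_nonneg_left (hM v hv t ht) (norm_nonneg a)
  exists_lipschitz := by
    obtain ⟨c, hc⟩ := hΦ.exists_lipschitz
    refine ⟨‖a‖ * c, fun lam hlam v w hv hw ρ hρ h t ht => ?_⟩
    rw [← smul_sub, norm_smul, mul_assoc, mul_assoc, ← mul_assoc c]
    exact mul_le_mul_of_nonneg_left (hc lam hlam v w hv hw ρ hρ h t ht) (norm_nonneg a)

lemma sub [NormedSpace ℝ F] {Ψ : (ℝ → E) → ℝ → F} (hΦ : IsVolterra Φ) (hΨ : IsVolterra Ψ) :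
    IsVolterra fun v t => Φ v t - Ψ v t := by
  simpa only [neg_one_smul, ← sub_eq_add_neg] using hΦ.add (hΨ.const_smul (-1))

lemma prodMk (hΦ : IsVolterra Φ) (hΨ : IsVolterra Ψ) :
    IsVolterra fun v t => (Φ v t, Ψ v t) where
  continuousOn v hv := (hΦ.continuousOn v hv).prodMk (hΨ.continuousOn v hv)
  exists_bound := by
    obtain ⟨M, hM⟩ := hΦ.exists_bound
    obtain ⟨N, hN⟩ := hΨ.exists_bound
    refine ⟨max M N, fun v hv t ht => norm_prod_le_iff.2 ⟨?_, ?_⟩⟩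
    · exact (hM v hv t ht).trans (by gcongr; exact le_max_left M N)
    · exact (hN v hv t ht).trans (by gcongr; exact le_max_right M N)
  exists_lipschitz := by
    obtain ⟨c, hc⟩ := hΦ.exists_lipschitz
    obtain ⟨d, hd⟩ := hΨ.exists_lipschitz
    refine ⟨max c d, fun lam hlam v w hv hw ρ hρ h t ht => norm_prod_le_iff.2 ⟨?_, ?_⟩⟩
    · exact (hc lam hlam v w hv hw ρ hρ h t ht).trans (by gcongr; exact le_max_left c d)
    · exact (hd lam hlam v w hv hw ρ hρ h t ht).trans (by gcongr; exact le_max_right c d)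

end IsVolterra

section ExpWeighted

variable [NormedSpace ℝ E]

/-- The function of time `exp(λt) w(t)`, extended by zero to `t ≤ 0`: the identification of
bounded functions with functions of growth at most `exp(λt)`. -/
def expWeighted (lam : ℝ) (w : Ioi (0 : ℝ) →ᵇ E) (t : ℝ) : E :=
  if h : 0 < t then exp (lam * t) • w ⟨t, h⟩ else 0

lemma expWeighted_of_pos (w : Ioi (0 : ℝ) →ᵇ E) {t : ℝ} (ht : 0 < t) :
    expWeighted lam w t = exp (lam * t) • w ⟨t, ht⟩ :=
  dif_pos ht

lemma continuousOn_expWeighted (w : Ioi (0 : ℝ) →ᵇ E) :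
    ContinuousOn (expWeighted lam w) (Ioi 0) := by
  rw [continuousOn_iff_continuous_domRestrict]
  have restrict : (Ioi (0 : ℝ)).domRestrict (expWeighted lam w) =
      fun t : Ioi (0 : ℝ) => exp (lam * t) • w t :=
    funext fun t => expWeighted_of_pos w t.2
  rw [restrict]
  fun_prop

lemma expClose_expWeighted (v w : Ioi (0 : ℝ) →ᵇ E) :
    ExpClose lam (dist v w) (expWeighted lam v) (expWeighted lam w) := fun t ht => by
  rw [expWeighted_of_pos v ht, expWeighted_of_pos w ht, ← smul_sub, norm_smul,
    Real.norm_eq_abs, abs_of_pos (exp_pos _), mul_comm, ← dist_eq_norm]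
  exact mul_le_mul_of_nonneg_right (dist_coe_le_dist _) (exp_pos _).le

lemma norm_exp_neg_smul_le {t c : ℝ} {z : E} (hz : ‖z‖ ≤ c * exp (lam * t)) :
    ‖exp (-(lam * t)) • z‖ ≤ c := by
  rw [norm_smul, Real.norm_eq_abs, abs_of_pos (exp_pos _), exp_neg, ← div_eq_inv_mul]
  exact (div_le_iff₀ (exp_pos _)).2 hz

lemma exists_fixedPoint_of_expClose_half [CompleteSpace E] (Φ : (ℝ → E) → ℝ → E) (M : ℝ)
    (hcont : ∀ v, ContinuousOn v (Ioi 0) → ContinuousOn (Φ v) (Ioi 0))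
    (hbound : ∀ v, ContinuousOn v (Ioi 0) → ∀ t > 0, ‖Φ v t‖ ≤ M * exp (lam * t))
    (hlip : ∀ v w, ContinuousOn v (Ioi 0) → ContinuousOn w (Ioi 0) → ∀ ρ ≥ 0,
      ExpClose lam ρ v w → ExpClose lam (1 / 2 * ρ) (Φ v) (Φ w)) :
    ∃ v, ContinuousOn v (Ioi 0) ∧ ∀ t > 0, v t = Φ v t := by
  have continuous_conj (w : Ioi (0 : ℝ) →ᵇ E) :
      Continuous fun t : Ioi (0 : ℝ) => exp (-(lam * t)) • Φ (expWeighted lam w) t :=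
    .smul (by fun_prop) (hcont _ (continuousOn_expWeighted w)).domRestrict
  let conj : (Ioi (0 : ℝ) →ᵇ E) → (Ioi (0 : ℝ) →ᵇ E) := fun w =>
    .ofNormedAddCommGroup _ (continuous_conj w) M
      fun t => norm_exp_neg_smul_le (hbound _ (continuousOn_expWeighted w) t t.2)
  have contracting : ContractingWith (1 / 2) conj := by
    refine ⟨by norm_num [← NNReal.coe_lt_coe], LipschitzWith.of_dist_le_mul fun v w => ?_⟩
    rw [dist_le (by positivity)]
    intro t
    have key := hlip _ _ (continuousOn_expWeighted v) (continuousOn_expWeighted w) _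
      dist_nonneg (expClose_expWeighted v w) t t.2
    simpa [conj, dist_eq_norm, ← smul_sub] using norm_exp_neg_smul_le key
  obtain ⟨w, hw⟩ : ∃ w, conj w = w := ⟨_, contracting.fixedPoint_isFixedPt⟩
  refine ⟨expWeighted lam w, continuousOn_expWeighted w, fun t ht => ?_⟩
  have at_t : exp (-(lam * t)) • Φ (expWeighted lam w) t = w ⟨t, ht⟩ := congrArg (· ⟨t, ht⟩) hw
  rw [expWeighted_of_pos w ht, ← at_t, smul_smul, ← exp_add, add_neg_cancel, exp_zero, one_smul]

lemma IsVolterra.exists_fixedPoint [CompleteSpace E] {Φ : (ℝ → E) → ℝ → E} (hΦ : IsVolterra Φ) :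
    ∃ v, ContinuousOn v (Ioi 0) ∧ ∀ t > 0, v t = Φ v t := by
  obtain ⟨M, hM⟩ := hΦ.exists_bound
  obtain ⟨c, hc⟩ := hΦ.exists_lipschitz
  -- This choice of `λ` makes the Lipschitz constant `c / √λ` at most `1 / 2`.
  set lam := (2 * |c| + 1) ^ 2
  have hsqrt : √lam = 2 * |c| + 1 := Real.sqrt_sq (by positivity)
  have hlam : 1 ≤ lam := one_le_pow₀ (by linarith [abs_nonneg c])
  refine exists_fixedPoint_of_expClose_half (lam := lam) Φ |M| hΦ.continuousOn
    (fun v hv t ht => (hM v hv t ht).trans ?_) fun v w hv hw ρ hρ h t ht =>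
    (hc lam hlam v w hv hw ρ hρ h t ht).trans ?_
  · gcongr
    · exact le_abs_self M
    · exact le_mul_of_one_le_left ht.le hlam
  · refine mul_le_mul_of_nonneg_right ?_ (exp_pos _).le
    rw [hsqrt, mul_div_assoc', div_le_iff₀ (by positivity)]
    nlinarith [mul_le_mul_of_nonneg_right (le_abs_self c) hρ]

end ExpWeighted

end Volterra

/-! ### Integral operators with weakly singular kernels -/

section AbelWeight

variable {lam σ t : ℝ}

/-- Up to a constant factor, the largest admissible difference of two Abel kernels in a Volterra
operator with parameter `λ`; its mass is of order `1 / √λ`. -/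
def abelWeight (lam σ : ℝ) : ℝ :=
  σ⁻¹ * (√σ)⁻¹ * min σ lam⁻¹

/-- The mass of `abelWeight 1`. -/
def abelMass : ℝ :=
  ∫ σ in Ioi 0, abelWeight 1 σ

lemma abelWeight_nonneg (hlam : 0 < lam) (hσ : 0 < σ) : 0 ≤ abelWeight lam σ := by
  unfold abelWeight
  positivity

lemma abelWeight_eq_sqrt_mul (hlam : 0 < lam) (hσ : 0 < σ) :
    abelWeight lam σ = √lam * abelWeight 1 (lam * σ) := by
  have min_eq : min σ lam⁻¹ = lam⁻¹ * min (lam * σ) 1 := by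
    rw [mul_min_of_nonneg _ _ (by positivity), inv_mul_cancel_left₀ hlam.ne', mul_one]
  have := Real.sqrt_pos.2 hlam
  have := Real.sqrt_pos.2 hσ
  have := Real.sq_sqrt hlam.le
  rw [abelWeight, abelWeight, inv_one, Real.sqrt_mul hlam.le, min_eq]
  field_simp

lemma integrableOn_abelWeight_one : IntegrableOn (abelWeight 1) (Ioi 0) := by
  rw [← Ioc_union_Ioi_eq_Ioi (zero_le_one)]
  refine .union ?_ ?_
  · refine (integrableOn_inv_sqrt 1).congr_fun (fun σ hσ => ?_) measurableSet_Ioc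
    have := hσ.1
    simp only [abelWeight, inv_one, min_eq_left hσ.2]
    field_simp
  · refine (integrableOn_Ioi_rpow_of_lt (a := -(3 / 2)) (by norm_num) one_pos).congr_fun
      (fun σ (hσ : 1 < σ) => ?_) measurableSet_Ioi
    simp only [abelWeight, inv_one, min_eq_right hσ.le, mul_one]
    rw [Real.sqrt_eq_rpow, ← Real.rpow_neg (by linarith), ← Real.rpow_neg_one,
      ← Real.rpow_add (by linarith)]
    norm_num

lemma integrableOn_abelWeight (hlam : 0 < lam) : IntegrableOn (abelWeight lam) (Ioi 0) := by
  have scaled : IntegrableOn (fun σ => abelWeight 1 (lam * σ)) (Ioi 0) := by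
    rw [integrableOn_Ioi_comp_mul_left_iff _ _ hlam, mul_zero]
    exact integrableOn_abelWeight_one
  exact IntegrableOn.congr_fun (scaled.const_mul (√lam))
    (fun σ hσ => (abelWeight_eq_sqrt_mul hlam hσ).symm) measurableSet_Ioi

lemma setIntegral_abelWeight (hlam : 0 < lam) :
    ∫ σ in Ioi 0, abelWeight lam σ = abelMass / √lam := by
  rw [setIntegral_congr_fun measurableSet_Ioi fun σ hσ => abelWeight_eq_sqrt_mul hlam hσ,
    integral_const_mul, integral_comp_mul_left_Ioi _ _ hlam, mul_zero, smul_eq_mul, ← mul_assoc,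
    mul_comm (√lam), mul_assoc, ← div_eq_inv_mul, mul_div_right_comm, Real.sqrt_div_self,
    abelMass, div_eq_inv_mul]

lemma inv_sqrt_mul_exp_neg_le_abelWeight (hlam : 0 < lam) (hσ : 0 < σ) :
    (√σ)⁻¹ * exp (-(lam * σ)) ≤ abelWeight lam σ := by
  have le_min' : σ * exp (-(lam * σ)) ≤ min σ lam⁻¹ := by
    refine le_min (mul_le_of_le_one_right hσ.le (exp_le_one_iff.2 (by nlinarith))) ?_
    rw [exp_neg, ← div_eq_mul_inv, div_le_iff₀ (exp_pos _), ← div_eq_inv_mul, le_div_iff₀ hlam]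
    linarith [add_one_le_exp (lam * σ)]
  calc (√σ)⁻¹ * exp (-(lam * σ)) = σ⁻¹ * (√σ)⁻¹ * (σ * exp (-(lam * σ))) := by field_simp
    _ ≤ abelWeight lam σ := mul_le_mul_of_nonneg_left le_min' (by positivity)

lemma min_mul_inv_le_abelWeight (hlam : 1 ≤ lam) (hσ : 0 < σ) :
    σ⁻¹ * (√σ)⁻¹ * min 1 σ * lam⁻¹ ≤ abelWeight lam σ := by
  have hinv : lam⁻¹ ≤ 1 := inv_le_one_of_one_le₀ hlam
  have hinv₀ : 0 ≤ lam⁻¹ := by positivity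
  rw [abelWeight, mul_assoc (σ⁻¹ * (√σ)⁻¹)]
  refine mul_le_mul_of_nonneg_left (le_min ?_ ?_) (by positivity)
  · exact (mul_le_of_le_one_right (by positivity) hinv).trans (min_le_right _ _)
  · exact mul_le_of_le_one_left hinv₀ (min_le_left _ _)

lemma setIntegral_inv_sqrt (ht : 0 ≤ t) : ∫ σ in Ioc 0 t, (√σ)⁻¹ = 2 * √t := by
  have as_rpow : ∫ σ in Ioc 0 t, (√σ)⁻¹ = ∫ σ in Ioc 0 t, σ ^ (-(1 / 2) : ℝ) :=
    setIntegral_congr_fun measurableSet_Ioc fun σ hσ => by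
      rw [Real.sqrt_eq_rpow, ← Real.rpow_neg hσ.1.le]
  rw [as_rpow, ← intervalIntegral.integral_of_le ht, integral_rpow (.inl (by norm_num)),
    Real.sqrt_eq_rpow, Real.zero_rpow (by norm_num)]
  norm_num
  ring

lemma two_mul_sqrt_le_exp (ht : 0 ≤ t) : 2 * √t ≤ exp t := by
  nlinarith [Real.sq_sqrt ht, add_one_le_exp t, sq_nonneg (√t - 1)]

lemma IsAbelKernel.abs_integral_mul_le {κ v : ℝ → ℝ} {b : ℝ} {R : NNReal}
    (hκ : IsAbelKernel κ b) (hv : IsLayerDensity v R) (ht : 0 ≤ t) :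
    |∫ σ, κ σ * v (t - σ)| ≤ b * R * exp t := by
  have hb := hκ.nonneg
  calc |∫ σ, κ σ * v (t - σ)|
      ≤ ∫ σ, (Ioc 0 t).indicator (fun σ => b * R * (√σ)⁻¹) σ :=
        norm_integral_le_of_norm_le (integrable_indicator_bound b R t)
          (.of_forall (hκ.norm_mul_le hv le_rfl))
    _ = b * R * (2 * √t) := by
        rw [integral_indicator measurableSet_Ioc, integral_const_mul, setIntegral_inv_sqrt ht]
    _ ≤ b * R * exp t := by gcongr; exact two_mul_sqrt_le_exp ht

lemma abs_abelKernel_mul_sub_le {κ₁ κ₂ v₁ v₂ : ℝ → ℝ} {b a d : ℝ} {R : NNReal}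
    (hv₁ : ∀ τ, |v₁ τ| ≤ R) (hκ₂ : IsAbelKernel κ₂ b) (hlam : 0 < lam) (hσ : 0 < σ)
    (ha : |κ₁ σ - κ₂ σ| ≤ a * exp (lam * t) * abelWeight lam σ)
    (hd : |v₁ (t - σ) - v₂ (t - σ)| ≤ d * exp (lam * (t - σ))) :
    |κ₁ σ * v₁ (t - σ) - κ₂ σ * v₂ (t - σ)| ≤
      (a * R + b * d) * exp (lam * t) * abelWeight lam σ := by
  have hb := hκ₂.nonneg
  have hd₀ : 0 ≤ d := nonneg_of_mul_nonneg_left ((abs_nonneg _).trans hd) (exp_pos _)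
  have hexp : exp (lam * (t - σ)) = exp (lam * t) * exp (-(lam * σ)) := by
    rw [← exp_add]
    ring_nf
  calc |κ₁ σ * v₁ (t - σ) - κ₂ σ * v₂ (t - σ)|
      = |(κ₁ σ - κ₂ σ) * v₁ (t - σ) + κ₂ σ * (v₁ (t - σ) - v₂ (t - σ))| := by ring_nf
    _ ≤ |κ₁ σ - κ₂ σ| * |v₁ (t - σ)| + |κ₂ σ| * |v₁ (t - σ) - v₂ (t - σ)| := by
        rw [← abs_mul, ← abs_mul]
        exact abs_add_le _ _
    _ ≤ a * exp (lam * t) * abelWeight lam σ * R + b * (√σ)⁻¹ * (d * exp (lam * (t - σ))) := by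
        gcongr
        · exact (abs_nonneg _).trans ha
        · exact hv₁ _
        · exact hκ₂.abs_le σ
    _ = a * R * exp (lam * t) * abelWeight lam σ +
          b * d * exp (lam * t) * ((√σ)⁻¹ * exp (-(lam * σ))) := by rw [hexp]; ring
    _ ≤ a * R * exp (lam * t) * abelWeight lam σ + b * d * exp (lam * t) * abelWeight lam σ := by
        gcongr
        exact inv_sqrt_mul_exp_neg_le_abelWeight hlam hσ
    _ = (a * R + b * d) * exp (lam * t) * abelWeight lam σ := by ring

lemma abs_integral_abelKernel_mul_sub_le {κ₁ κ₂ v₁ v₂ : ℝ → ℝ} {b a d : ℝ} {R : NNReal}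
    (hv₁ : IsLayerDensity v₁ R) (hv₂ : IsLayerDensity v₂ R) (hκ₁ : IsAbelKernel κ₁ b)
    (hκ₂ : IsAbelKernel κ₂ b) (hlam : 0 < lam) (ha₀ : 0 ≤ a) (hd₀ : 0 ≤ d)
    (ha : ∀ σ ∈ Ioo 0 t, |κ₁ σ - κ₂ σ| ≤ a * exp (lam * t) * abelWeight lam σ)
    (hd : ExpClose lam d v₁ v₂) :
    |(∫ σ, κ₁ σ * v₁ (t - σ)) - ∫ σ, κ₂ σ * v₂ (t - σ)| ≤
      (a * R + b * d) * (abelMass / √lam) * exp (lam * t) := by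
  have hb := hκ₁.nonneg
  have integrable_weight : Integrable ((Ioi 0).indicator fun σ =>
      (a * R + b * d) * exp (lam * t) * abelWeight lam σ) :=
    (integrable_indicator_iff measurableSet_Ioi).2 ((integrableOn_abelWeight hlam).const_mul _)
  rw [← integral_sub (hκ₁.integrable_mul hv₁ t) (hκ₂.integrable_mul hv₂ t), ← Real.norm_eq_abs]
  refine (norm_integral_le_of_norm_le integrable_weight (.of_forall fun σ => ?_)).trans_eq ?_
  · rcases le_or_gt σ 0 with hσ | hσ
    · rw [hκ₁.eq_zero hσ, hκ₂.eq_zero hσ, indicator_of_notMem (notMem_Ioi.2 hσ)]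
      simp
    rw [indicator_of_mem (mem_Ioi.2 hσ)]
    have := abelWeight_nonneg hlam hσ
    rcases le_or_gt t σ with hσt | hσt
    · rw [hv₁.eq_zero _ (by linarith), hv₂.eq_zero _ (by linarith), mul_zero, mul_zero, sub_zero,
        norm_zero]
      positivity
    · exact abs_abelKernel_mul_sub_le hv₁.abs_le hκ₂ hlam hσ (ha σ ⟨hσ, hσt⟩)
        (hd _ (sub_pos.2 hσt))
  · rw [integral_indicator measurableSet_Ioi, integral_const_mul, setIntegral_abelWeight hlam]
    ring

end AbelWeight

section Superposition

variable {E : Type*} {f : E → ℝ} {v w : ℝ → E} {R L : NNReal} {lam ρ : ℝ}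

/-- The superposition operator of `f`, with values in the densities of layer potentials. -/
def superposition (f : E → ℝ) (v : ℝ → E) (t : ℝ) : ℝ :=
  if 0 < t then f (v t) else 0

lemma superposition_of_pos {t : ℝ} (ht : 0 < t) : superposition f v t = f (v t) :=
  if_pos ht

lemma superposition_nonneg (hf : ∀ e, 0 ≤ f e) (t : ℝ) : 0 ≤ superposition f v t :=
  ite_nonneg (hf _) le_rfl

variable [NormedAddCommGroup E]

lemma isLayerDensity_superposition (hf : Continuous f) (hR : ∀ e, |f e| ≤ R)
    (hv : ContinuousOn v (Ioi 0)) : IsLayerDensity (superposition f v) R := by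
  have hfv : ContinuousOn (fun t => f (v t)) (Ioi 0) := hf.comp_continuousOn hv
  refine ⟨?_, fun t => ?_, fun t ht => if_neg (not_lt.2 ht), fun t ht => ?_⟩
  · exact hfv.measurable_piecewise (g := fun _ => 0) continuousOn_const measurableSet_Ioi
  · unfold superposition
    split_ifs
    · exact hR _
    · simp
  · refine (hfv.continuousAt (Ioi_mem_nhds ht)).congr ?_
    filter_upwards [Ioi_mem_nhds ht] with τ hτ using (superposition_of_pos hτ).symm

lemma ExpClose.superposition (h : ExpClose lam ρ v w) (hf : LipschitzWith L f) :
    ExpClose lam (L * ρ) (superposition f v) (superposition f w) := fun t ht => by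
  rw [superposition_of_pos ht, superposition_of_pos ht, mul_assoc]
  exact (hf.norm_sub_le _ _).trans (mul_le_mul_of_nonneg_left (h t ht) L.coe_nonneg)

lemma isVolterra_integral_abelKernel {κ : (ℝ → E) → ℝ → ℝ → ℝ} {a b : ℝ} (hf : LipschitzWith L f)
    (hR : ∀ e, |f e| ≤ R) (hκ : ∀ v, ContinuousOn v (Ioi 0) → ∀ t, IsAbelKernel (κ v t) b)
    (hcont : ∀ v, ContinuousOn v (Ioi 0) → ∀ σ > 0, Continuous fun t => κ v t σ) (ha : 0 ≤ a)
    (hlip : ∀ lam ≥ 1, ∀ v w, ContinuousOn v (Ioi 0) → ContinuousOn w (Ioi 0) → ∀ ρ ≥ 0,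
      ExpClose lam ρ v w → ∀ t, ∀ σ ∈ Ioo 0 t,
        |κ v t σ - κ w t σ| ≤ a * ρ * exp (lam * t) * abelWeight lam σ) :
    IsVolterra fun v t => ∫ σ, κ v t σ * superposition f v (t - σ) where
  continuousOn v hv t _ := by
    have at_diagonal := continuousAt_integral_abelKernel (q₀ := (t, 0))
      (isLayerDensity_superposition hf.continuous hR hv) (fun q => hκ v hv q.1)
      fun σ hσ => ((hcont v hv σ hσ).comp continuous_fst).continuousAt
    exact (ContinuousAt.comp (f := fun τ : ℝ => (τ, (0 : ℝ))) at_diagonal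
      (by fun_prop)).continuousWithinAt
  exists_bound := ⟨b * R, fun v hv t ht =>
    (hκ v hv t).abs_integral_mul_le (isLayerDensity_superposition hf.continuous hR hv) ht.le⟩
  exists_lipschitz := by
    refine ⟨(a * R + b * L) * abelMass, fun lam hlam v w hv hw ρ hρ h t _ => ?_⟩
    refine (abs_integral_abelKernel_mul_sub_le
      (isLayerDensity_superposition hf.continuous hR hv)
      (isLayerDensity_superposition hf.continuous hR hw) (hκ v hv t) (hκ w hw t)
      (zero_lt_one.trans_le hlam) (mul_nonneg ha hρ) (mul_nonneg L.coe_nonneg hρ)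
      (hlip lam hlam v w hv hw ρ hρ h t) (h.superposition hf)).trans_eq ?_
    ring

end Superposition

/-! ### The free boundary as a function of its speed -/

section FreeBoundary

variable {B B₁ B₂ : ℝ → ℝ} {R R₁ R₂ : NNReal} {s₀ ρ lam t σ : ℝ}

/-- The free boundary that starts at `s₀` and moves with speed `B`. -/
def freeBoundary (s₀ : ℝ) (B : ℝ → ℝ) (t : ℝ) : ℝ :=
  s₀ + ∫ τ in (0 : ℝ)..t, B τ

namespace IsLayerDensity

lemma intervalIntegrable (hB : IsLayerDensity B R) (a b : ℝ) : IntervalIntegrable B volume a b :=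
  intervalIntegrable_iff.2 <| Measure.integrableOn_of_bounded (M := R) (by simp)
    hB.measurable.aestronglyMeasurable (.of_forall hB.abs_le)

lemma freeBoundary_sub (hB : IsLayerDensity B R) (s₀ a b : ℝ) :
    freeBoundary s₀ B b - freeBoundary s₀ B a = ∫ τ in a..b, B τ := by
  rw [freeBoundary, freeBoundary, add_sub_add_left_eq_sub,
    intervalIntegral.integral_interval_sub_left (hB.intervalIntegrable _ _)
      (hB.intervalIntegrable _ _)]

lemma lipschitzWith_freeBoundary (hB : IsLayerDensity B R) (s₀ : ℝ) :
    LipschitzWith R (freeBoundary s₀ B) :=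
  LipschitzWith.of_dist_le_mul fun t τ => by
    rw [dist_eq_norm, hB.freeBoundary_sub]
    exact intervalIntegral.norm_integral_le_of_norm_le_const fun x _ => hB.abs_le x

lemma monotone_freeBoundary (hB : IsLayerDensity B R) (hB₀ : ∀ t, 0 ≤ B t) (s₀ : ℝ) :
    Monotone (freeBoundary s₀ B) := fun a b hab => by
  rw [← sub_nonneg, hB.freeBoundary_sub]
  exact intervalIntegral.integral_nonneg hab fun x _ => hB₀ x

lemma le_freeBoundary (hB : IsLayerDensity B R) (hB₀ : ∀ t, 0 ≤ B t) (s₀ t : ℝ) :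
    s₀ ≤ freeBoundary s₀ B t := by
  have initial_integral : ∫ τ in (0 : ℝ)..min t 0, B τ = 0 := by
    rw [intervalIntegral.integral_symm, intervalIntegral.integral_of_le (min_le_right t 0),
      setIntegral_eq_zero_of_forall_eq_zero fun τ hτ => hB.eq_zero τ hτ.2, neg_zero]
  calc s₀ = freeBoundary s₀ B (min t 0) := by rw [freeBoundary, initial_integral, add_zero]
    _ ≤ freeBoundary s₀ B t := hB.monotone_freeBoundary hB₀ s₀ (min_le_left t 0)

lemma hasDerivAt_freeBoundary (hB : IsLayerDensity B R) (s₀ : ℝ) (ht : 0 < t) :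
    HasDerivAt (freeBoundary s₀ B) (B t) t :=
  (intervalIntegral.integral_hasDerivAt_right (hB.intervalIntegrable 0 t)
    hB.measurable.stronglyMeasurable.stronglyMeasurableAtFilter (hB.continuousAt t ht)).const_add _

end IsLayerDensity

lemma freeBoundary_zero (s₀ : ℝ) (B : ℝ → ℝ) : freeBoundary s₀ B 0 = s₀ := by
  simp [freeBoundary]

lemma intervalIntegral_mul_exp_le (hlam : 0 < lam) (hρ : 0 ≤ ρ) (a t : ℝ) :
    ∫ τ in a..t, ρ * exp (lam * τ) ≤ ρ * exp (lam * t) * lam⁻¹ := by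
  rw [intervalIntegral.integral_const_mul, intervalIntegral.integral_comp_mul_left _ hlam.ne',
    integral_exp, smul_eq_mul, mul_assoc, mul_comm (exp (lam * t))]
  gcongr
  linarith [exp_pos (lam * a)]

lemma abs_freeBoundary_increment_sub_le (h₁ : IsLayerDensity B₁ R₁) (h₂ : IsLayerDensity B₂ R₂)
    (hlam : 0 < lam) (hρ : 0 ≤ ρ) (hB : ExpClose lam ρ B₁ B₂) (s₀ t : ℝ) (hσ : 0 ≤ σ) :
    |(freeBoundary s₀ B₁ t - freeBoundary s₀ B₁ (t - σ)) -
      (freeBoundary s₀ B₂ t - freeBoundary s₀ B₂ (t - σ))| ≤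
        ρ * exp (lam * t) * min σ lam⁻¹ := by
  have close (τ : ℝ) : ‖B₁ τ - B₂ τ‖ ≤ ρ * exp (lam * τ) := by
    rcases le_or_gt τ 0 with hτ | hτ
    · rw [h₁.eq_zero τ hτ, h₂.eq_zero τ hτ, sub_zero, norm_zero]
      positivity
    · exact hB τ hτ
  have hle : t - σ ≤ t := by linarith
  rw [h₁.freeBoundary_sub, h₂.freeBoundary_sub,
    ← intervalIntegral.integral_sub (h₁.intervalIntegrable _ _) (h₂.intervalIntegrable _ _),
    mul_min_of_nonneg _ _ (by positivity)]
  refine le_min ?_ ?_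
  · have sup_bound (τ : ℝ) (hτ : τ ∈ uIoc (t - σ) t) : ‖B₁ τ - B₂ τ‖ ≤ ρ * exp (lam * t) := by
      rw [uIoc_of_le hle] at hτ
      exact (close τ).trans (by gcongr; exact hτ.2)
    simpa [abs_of_nonneg hσ] using intervalIntegral.norm_integral_le_of_norm_le_const sup_bound
  · exact (intervalIntegral.norm_integral_le_of_norm_le hle (.of_forall fun τ _ => close τ)
      (Continuous.intervalIntegrable (by fun_prop) _ _)).trans
      (intervalIntegral_mul_exp_le hlam hρ _ _)

lemma abs_freeBoundary_sub_le (h₁ : IsLayerDensity B₁ R₁) (h₂ : IsLayerDensity B₂ R₂)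
    (hlam : 0 < lam) (hρ : 0 ≤ ρ) (hB : ExpClose lam ρ B₁ B₂) (s₀ : ℝ) (ht : 0 ≤ t) :
    |freeBoundary s₀ B₁ t - freeBoundary s₀ B₂ t| ≤ ρ * exp (lam * t) * min t lam⁻¹ := by
  simpa only [sub_self, freeBoundary_zero, sub_sub_sub_cancel_right] using
    abs_freeBoundary_increment_sub_le h₁ h₂ hlam hρ hB s₀ t ht

lemma abs_freeBoundary_sub_le_of_le (h₁ : IsLayerDensity B₁ R₁) (h₂ : IsLayerDensity B₂ R₂)
    (hlam : 0 < lam) (hρ : 0 ≤ ρ) (hB : ExpClose lam ρ B₁ B₂) (s₀ : ℝ) {τ : ℝ} (hτ : 0 ≤ τ)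
    (hτt : τ ≤ t) :
    |freeBoundary s₀ B₁ τ - freeBoundary s₀ B₂ τ| ≤ ρ * exp (lam * t) * lam⁻¹ :=
  calc _ ≤ ρ * exp (lam * τ) * min τ lam⁻¹ := abs_freeBoundary_sub_le h₁ h₂ hlam hρ hB s₀ hτ
    _ ≤ ρ * exp (lam * t) * lam⁻¹ := by
        gcongr
        exact min_le_right _ _

end FreeBoundary

section KernelDifferences

variable {d σ y₁ y₂ : ℝ}

lemma abs_heatKernelDx_le_of_le_abs (hd : 0 < d) (hy : d ≤ |y₁|) (σ : ℝ) :
    |heatKernelDx σ y₁| ≤ d⁻¹ * (√σ)⁻¹ := by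
  rw [inv_mul_eq_div, le_div_iff₀ hd, mul_comm]
  exact (mul_le_mul_of_nonneg_right hy (abs_nonneg _)).trans (abs_mul_abs_heatKernelDx_le σ y₁)

lemma abs_heatKernel_sub_le_of_le (hd : 0 < d) (h₁ : d ≤ y₁) (h₂ : d ≤ y₂) (σ : ℝ) :
    |heatKernel σ y₁ - heatKernel σ y₂| ≤ d⁻¹ * (√σ)⁻¹ * |y₁ - y₂| :=
  (convex_Ici d).norm_image_sub_le_of_norm_hasDerivWithin_le
    (fun x _ => (hasDerivAt_heatKernel_space σ x).hasDerivWithinAt)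
    (fun _ hx => abs_heatKernelDx_le_of_le_abs hd ((mem_Ici.1 hx).trans (le_abs_self _)) σ) h₂ h₁

lemma abs_heatKernelDx_sub_le (hσ : 0 < σ) (y₁ y₂ : ℝ) :
    |heatKernelDx σ y₁ - heatKernelDx σ y₂| ≤ σ⁻¹ * (√σ)⁻¹ * |y₁ - y₂| :=
  convex_univ.norm_image_sub_le_of_norm_hasDerivWithin_le
    (fun x _ => (hasDerivAt_heatKernelDx_space σ x).hasDerivWithinAt)
    (fun x _ => abs_heatKernelDxx_le hσ x) (mem_univ _) (mem_univ _)

lemma abs_heatKernelDxx_le_of_le {x : ℝ} (hσ : 0 < σ) (hd : 0 < d) (hx : d ≤ x) :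
    |heatKernelDxx σ x| ≤ (1 + 5 / d ^ 2) * (σ⁻¹ * (√σ)⁻¹ * min 1 σ) := by
  rcases le_total 1 σ with h | h
  · rw [min_eq_left h, mul_one]
    exact (abs_heatKernelDxx_le hσ x).trans
      (le_mul_of_one_le_left (by positivity) (by simp only [le_add_iff_nonneg_right]; positivity))
  · have far : |heatKernelDxx σ x| ≤ 5 / d ^ 2 * (√σ)⁻¹ := by
      rw [div_mul_eq_mul_div, le_div_iff₀ (by positivity), mul_comm]
      exact (mul_le_mul_of_nonneg_right (by gcongr) (abs_nonneg _)).trans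
        (sq_mul_abs_heatKernelDxx_le hσ x)
    rw [min_eq_right h, mul_right_comm, inv_mul_cancel₀ hσ.ne', one_mul]
    exact far.trans (by gcongr; linarith)

lemma abs_heatKernelDx_sub_le_of_le (hσ : 0 < σ) (hd : 0 < d) (h₁ : d ≤ y₁) (h₂ : d ≤ y₂) :
    |heatKernelDx σ y₁ - heatKernelDx σ y₂| ≤
      (1 + 5 / d ^ 2) * (σ⁻¹ * (√σ)⁻¹ * min 1 σ) * |y₁ - y₂| :=
  (convex_Ici d).norm_image_sub_le_of_norm_hasDerivWithin_le
    (fun x _ => (hasDerivAt_heatKernelDx_space σ x).hasDerivWithinAt)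
    (fun _ hx => abs_heatKernelDxx_le_of_le hσ hd hx) h₂ h₁

lemma isAbelKernel_heatKernelDx {y : ℝ → ℝ} (hy : Measurable y) (hd : 0 < d) (hle : ∀ σ, d ≤ y σ) :
    IsAbelKernel (fun σ => heatKernelDx σ (y σ)) d⁻¹ where
  measurable := isCausalKernel_heatKernelDx.measurable.comp (f := fun σ => (σ, y σ)) (by fun_prop)
  abs_le σ := abs_heatKernelDx_le_of_le_abs hd ((hle σ).trans (le_abs_self _)) σ

lemma continuous_heatKernelDx_space (σ : ℝ) : Continuous (heatKernelDx σ) :=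
  continuous_iff_continuousAt.2 fun x => (hasDerivAt_heatKernelDx_space σ x).continuousAt

end KernelDifferences

/-! ### The integral equations of the truncated transmission problem -/

/-- Lipschitz functions with values in `[0, R]`: the truncated nonlinearities that feed the layer
potentials. -/
structure IsTruncation {E : Type*} [PseudoEMetricSpace E] (f : E → ℝ) (L R : NNReal) : Prop where
  lipschitz : LipschitzWith L f
  nonneg : ∀ e, 0 ≤ f e
  le : ∀ e, f e ≤ R

section TruncatedBoundary

variable {E : Type*} [NormedAddCommGroup E] {f : E → ℝ} {L R : NNReal} {v w : ℝ → E}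
  {s₀ lam ρ t σ : ℝ}

/-- The free boundary that starts at `s₀` and moves with the speed `f(v(t))`. -/
def truncatedBoundary (f : E → ℝ) (s₀ : ℝ) (v : ℝ → E) : ℝ → ℝ :=
  freeBoundary s₀ (superposition f v)

namespace IsTruncation

variable (hf : IsTruncation f L R)

include hf

lemma abs_le (e : E) : |f e| ≤ R :=
  (abs_of_nonneg (hf.nonneg e)).trans_le (hf.le e)

lemma isLayerDensity (hv : ContinuousOn v (Ioi 0)) : IsLayerDensity (superposition f v) R :=
  isLayerDensity_superposition hf.lipschitz.continuous hf.abs_le hv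

lemma lipschitzWith_truncatedBoundary (hv : ContinuousOn v (Ioi 0)) (s₀ : ℝ) :
    LipschitzWith R (truncatedBoundary f s₀ v) :=
  (hf.isLayerDensity hv).lipschitzWith_freeBoundary s₀

lemma le_truncatedBoundary (hv : ContinuousOn v (Ioi 0)) (s₀ t : ℝ) :
    s₀ ≤ truncatedBoundary f s₀ v t :=
  (hf.isLayerDensity hv).le_freeBoundary (superposition_nonneg hf.nonneg) s₀ t

variable (hv : ContinuousOn v (Ioi 0)) (hw : ContinuousOn w (Ioi 0)) (hlam : 0 < lam) (hρ : 0 ≤ ρ)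
  (h : ExpClose lam ρ v w)

include hv hw hlam hρ h

lemma abs_truncatedBoundary_increment_sub_le (s₀ t : ℝ) (hσ : 0 ≤ σ) :
    |(truncatedBoundary f s₀ v t - truncatedBoundary f s₀ v (t - σ)) -
      (truncatedBoundary f s₀ w t - truncatedBoundary f s₀ w (t - σ))| ≤
        L * ρ * exp (lam * t) * min σ lam⁻¹ :=
  abs_freeBoundary_increment_sub_le (hf.isLayerDensity hv) (hf.isLayerDensity hw) hlam
    (by positivity) (h.superposition hf.lipschitz) s₀ t hσ

lemma abs_truncatedBoundary_sub_le (s₀ : ℝ) (ht : 0 ≤ t) :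
    |truncatedBoundary f s₀ v t - truncatedBoundary f s₀ w t| ≤
      L * ρ * exp (lam * t) * min t lam⁻¹ :=
  abs_freeBoundary_sub_le (hf.isLayerDensity hv) (hf.isLayerDensity hw) hlam
    (by positivity) (h.superposition hf.lipschitz) s₀ ht

lemma abs_truncatedBoundary_sub_le_of_le (s₀ : ℝ) {τ : ℝ} (hτ : 0 ≤ τ) (hτt : τ ≤ t) :
    |truncatedBoundary f s₀ v τ - truncatedBoundary f s₀ w τ| ≤ L * ρ * exp (lam * t) * lam⁻¹ :=
  abs_freeBoundary_sub_le_of_le (hf.isLayerDensity hv) (hf.isLayerDensity hw) hlam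
    (by positivity) (h.superposition hf.lipschitz) s₀ hτ hτt

end IsTruncation

end TruncatedBoundary

lemma regularKernel_zero (γ : ℝ → ℝ) (t σ : ℝ) :
    regularKernel γ t 0 σ = heatKernelDx σ (γ t - γ (t - σ)) := by
  rw [regularKernel, zero_add, heatKernelDx]

section VolterraTerms

variable {E : Type*} [NormedAddCommGroup E] {f g : E → ℝ} {L R Lg Rg : NNReal} {s₀ : ℝ}

lemma isVolterra_layerRegularPart (hf : IsTruncation f L R) (s₀ : ℝ) :
    IsVolterra fun v t => layerRegularPart (truncatedBoundary f s₀ v) (superposition f v) t 0 := by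
  refine isVolterra_integral_abelKernel (a := L) (b := R) hf.lipschitz hf.abs_le
    (fun v hv t => isAbelKernel_regularKernel (hf.lipschitzWith_truncatedBoundary hv s₀) t 0)
    (fun v hv σ _ => ?_) L.coe_nonneg fun lam hlam v w hv hw ρ hρ h t σ hσ => ?_
  · have hs := (hf.lipschitzWith_truncatedBoundary hv s₀).continuous
    simp only [regularKernel_zero]
    exact (continuous_heatKernelDx_space σ).comp (by fun_prop)
  · have increment := hf.abs_truncatedBoundary_increment_sub_le hv hw (zero_lt_one.trans_le hlam)
      hρ h s₀ t hσ.1.le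
    simp only [regularKernel_zero]
    calc _ ≤ _ := abs_heatKernelDx_sub_le hσ.1 _ _
      _ ≤ σ⁻¹ * (√σ)⁻¹ * (L * ρ * exp (lam * t) * min σ lam⁻¹) :=
          mul_le_mul_of_nonneg_left increment
            (mul_nonneg (inv_nonneg.2 hσ.1.le) (inv_nonneg.2 (sqrt_nonneg σ)))
      _ = L * ρ * exp (lam * t) * abelWeight lam σ := by rw [abelWeight]; ring

lemma isVolterra_integral_heatKernelDx_of_le {y : (ℝ → E) → ℝ → ℝ → ℝ} {d N : ℝ}
    (hg : IsTruncation g Lg Rg) (hd : 0 < d)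
    (hle : ∀ v, ContinuousOn v (Ioi 0) → ∀ t σ, d ≤ y v t σ)
    (hcont : ∀ v, ContinuousOn v (Ioi 0) → Continuous fun q : ℝ × ℝ => y v q.1 q.2) (hN : 0 ≤ N)
    (hlip : ∀ lam ≥ 1, ∀ v w, ContinuousOn v (Ioi 0) → ContinuousOn w (Ioi 0) → ∀ ρ ≥ 0,
      ExpClose lam ρ v w → ∀ t, ∀ σ ∈ Ioo 0 t,
        |y v t σ - y w t σ| ≤ N * ρ * exp (lam * t) * lam⁻¹) :
    IsVolterra fun v t => ∫ σ, heatKernelDx σ (y v t σ) * superposition g v (t - σ) := by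
  refine isVolterra_integral_abelKernel (a := (1 + 5 / d ^ 2) * N) hg.lipschitz hg.abs_le
    (fun v hv t => isAbelKernel_heatKernelDx
      ((hcont v hv).comp (continuous_const.prodMk continuous_id)).measurable hd (hle v hv t))
    (fun v hv σ _ => (continuous_heatKernelDx_space σ).comp
      ((hcont v hv).comp (continuous_id.prodMk continuous_const))) (by positivity)
    fun lam hlam v w hv hw ρ hρ h t σ hσ => ?_
  have hσ₀ := hσ.1
  calc _ ≤ _ := abs_heatKernelDx_sub_le_of_le hσ₀ hd (hle v hv t σ) (hle w hw t σ)
    _ ≤ (1 + 5 / d ^ 2) * (σ⁻¹ * (√σ)⁻¹ * min 1 σ) * (N * ρ * exp (lam * t) * lam⁻¹) := by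
        gcongr
        exact hlip lam hlam v w hv hw ρ hρ h t σ hσ
    _ = (1 + 5 / d ^ 2) * N * ρ * exp (lam * t) * (σ⁻¹ * (√σ)⁻¹ * min 1 σ * lam⁻¹) := by ring
    _ ≤ _ := by
        gcongr
        exact min_mul_inv_le_abelWeight hlam hσ₀

lemma isVolterra_layerPotential_reflected (hf : IsTruncation f L R) (hs₀ : 0 < s₀) :
    IsVolterra fun v t => layerPotential heatKernelDx (-truncatedBoundary f s₀ v)
      (superposition f v) t (truncatedBoundary f s₀ v t) := by
  simp only [layerPotential_eq_integral_lag, Pi.neg_apply, sub_neg_eq_add]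
  refine isVolterra_integral_heatKernelDx_of_le (N := 2 * L) (y := fun v t σ =>
    truncatedBoundary f s₀ v t + truncatedBoundary f s₀ v (t - σ)) hf hs₀ (fun v hv t σ => ?_)
    (fun v hv => ?_) (by positivity) fun lam hlam v w hv hw ρ hρ h t σ hσ => ?_
  · linarith [hf.le_truncatedBoundary hv s₀ t, hf.le_truncatedBoundary hv s₀ (t - σ)]
  · have hs := (hf.lipschitzWith_truncatedBoundary hv s₀).continuous
    fun_prop
  · have close {τ : ℝ} := hf.abs_truncatedBoundary_sub_le_of_le (τ := τ) (t := t) hv hw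
      (zero_lt_one.trans_le hlam) hρ h s₀
    rw [add_sub_add_comm]
    refine (abs_add_le _ _).trans ?_
    linarith [close (hσ.1.trans hσ.2).le le_rfl, close (sub_nonneg.2 hσ.2.le)
      (sub_le_self t hσ.1.le)]

lemma isVolterra_layerPotential_heatKernelDx_fixed (hf : IsTruncation f L R)
    (hg : IsTruncation g Lg Rg) (hs₀ : 0 < s₀) :
    IsVolterra fun v t => layerPotential heatKernelDx (fun _ => 0) (superposition g v) t
      (truncatedBoundary f s₀ v t) := by
  simp only [layerPotential_eq_integral_lag, sub_zero]
  refine isVolterra_integral_heatKernelDx_of_le (N := L) (y := fun v t _ =>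
    truncatedBoundary f s₀ v t) hg hs₀ (fun v hv t _ => hf.le_truncatedBoundary hv s₀ t)
    (fun v hv => ?_) L.coe_nonneg fun lam hlam v w hv hw ρ hρ h t σ hσ =>
      hf.abs_truncatedBoundary_sub_le_of_le hv hw (zero_lt_one.trans_le hlam) hρ h s₀
        (hσ.1.trans hσ.2).le le_rfl
  have hs := (hf.lipschitzWith_truncatedBoundary hv s₀).continuous
  fun_prop

lemma isVolterra_layerPotential_heatKernel_fixed (hg : IsTruncation g Lg Rg) :
    IsVolterra fun v t => layerPotential heatKernel (fun _ => 0) (superposition g v) t 0 := by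
  simp only [layerPotential_eq_integral_lag]
  exact isVolterra_integral_abelKernel (a := 0) hg.lipschitz hg.abs_le
    (fun _ _ _ => isAbelKernel_heatKernel measurable_const) (fun _ _ _ _ => continuous_const) le_rfl
    fun _ _ _ _ _ _ _ _ _ _ _ _ => by simp

lemma isVolterra_layerPotential_heatKernel (hf : IsTruncation f L R) (hs₀ : 0 < s₀) :
    IsVolterra fun v t =>
      layerPotential heatKernel (truncatedBoundary f s₀ v) (superposition f v) t 0 := by
  simp only [layerPotential_eq_integral_lag, zero_sub, heatKernel_neg]
  refine isVolterra_integral_abelKernel (a := s₀⁻¹ * L) hf.lipschitz hf.abs_le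
    (fun v hv t => isAbelKernel_heatKernel ?_) (fun v hv σ _ => ?_) (by positivity)
    fun lam hlam v w hv hw ρ hρ h t σ hσ => ?_
  · have hs := (hf.lipschitzWith_truncatedBoundary hv s₀).continuous
    fun_prop
  · have hs := (hf.lipschitzWith_truncatedBoundary hv s₀).continuous
    exact (continuous_heatKernel_space σ).comp (by fun_prop)
  · have close : |truncatedBoundary f s₀ v (t - σ) - truncatedBoundary f s₀ w (t - σ)| ≤
        L * ρ * (exp (lam * t) * exp (-(lam * σ))) := by
      rw [← exp_add, ← sub_eq_add_neg, ← mul_sub]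
      exact (hf.abs_truncatedBoundary_sub_le_of_le hv hw (zero_lt_one.trans_le hlam) hρ h s₀
        (sub_nonneg.2 hσ.2.le) le_rfl).trans
        (mul_le_of_le_one_right (by positivity) (inv_le_one_of_one_le₀ hlam))
    calc _ ≤ _ := abs_heatKernel_sub_le_of_le hs₀ (hf.le_truncatedBoundary hv s₀ _)
            (hf.le_truncatedBoundary hw s₀ _) σ
      _ ≤ s₀⁻¹ * (√σ)⁻¹ * (L * ρ * (exp (lam * t) * exp (-(lam * σ)))) := by gcongr
      _ = s₀⁻¹ * L * ρ * exp (lam * t) * ((√σ)⁻¹ * exp (-(lam * σ))) := by ring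
      _ ≤ _ := by
          gcongr
          exact inv_sqrt_mul_exp_neg_le_abelWeight (zero_lt_one.trans_le hlam) hσ.1

lemma inv_sqrt_mul_min_inv_le {lam t : ℝ} (hlam : 0 < lam) (ht : 0 < t) :
    (√t)⁻¹ * min t lam⁻¹ ≤ 1 / √lam := by
  rw [inv_mul_le_iff₀ (sqrt_pos.2 ht), ← div_eq_mul_one_div, ← sqrt_div ht.le, div_eq_mul_inv]
  refine le_sqrt_of_sq_le ?_
  rw [sq]
  exact mul_le_mul (min_le_left _ _) (min_le_right _ _) (by positivity) ht.le

lemma isVolterra_initialPotential_heatKernelDx {φ : ℝ → ℝ} {K : NNReal} (hf : IsTruncation f L R)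
    (hφ : IsInitialDatum φ s₀ K) :
    IsVolterra fun (v : ℝ → E) t =>
      initialPotential heatKernelDx φ t (truncatedBoundary f s₀ v t) where
  continuousOn v hv t ht := by
    have hs := (hf.lipschitzWith_truncatedBoundary hv s₀).continuous
    exact (ContinuousAt.comp (f := fun τ => (τ, truncatedBoundary f s₀ v τ))
      (hφ.isCaloricAt_heatFlow ht _).continuousAt_space (by fun_prop)).continuousWithinAt
  exists_bound := ⟨K, fun v _ t ht => (hφ.abs_initialPotential_heatKernelDx_le ht _).trans
    (le_mul_of_one_le_right K.coe_nonneg (one_le_exp ht.le))⟩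
  exists_lipschitz := by
    refine ⟨(∫ z, |heatKernelDx 1 z|) * K * L, fun lam hlam v w hv hw ρ hρ h t ht => ?_⟩
    have hlam₀ := zero_lt_one.trans_le hlam
    calc _ ≤ _ := abs_initialPotential_heatKernelDx_sub_le hφ.lipschitz hφ.abs_le ht _ _
      _ ≤ (∫ z, |heatKernelDx 1 z|) * K * ((√t)⁻¹ * (L * ρ * exp (lam * t) * min t lam⁻¹)) := by
          gcongr
          exact hf.abs_truncatedBoundary_sub_le hv hw hlam₀ hρ h s₀ ht.le
      _ = (∫ z, |heatKernelDx 1 z|) * K * L * ρ * exp (lam * t) * ((√t)⁻¹ * min t lam⁻¹) := by ring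
      _ ≤ (∫ z, |heatKernelDx 1 z|) * K * L * ρ * exp (lam * t) * (1 / √lam) := by
          gcongr
          exact inv_sqrt_mul_min_inv_le hlam₀ ht
      _ = _ := by ring

end VolterraTerms

/-! ### The truncated transmission problem -/

/-- The field obtained from a background `w` by adding sources of strength `h` at the origin and
sinks of strength `B` on the curve `γ` and on its mirror image `-γ`, which makes it even in
space. The value itself is obtained for `k = heatKernel`, its space derivatives from those of `w`
and of the kernel. -/
def reflectedField (w k : ℝ → ℝ → ℝ) (γ B h : ℝ → ℝ) (t x : ℝ) : ℝ :=
  w t x + 2 * layerPotential k (fun _ => 0) h t x - layerPotential k γ B t x -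
    layerPotential k (-γ) B t x

section FarField

variable {γ B φ : ℝ → ℝ} {R K : NNReal} {s₀ G T t x : ℝ}

lemma tendstoUniformlyOn_zero_of_le_div_sq {w : ℝ → ℝ → ℝ} {A : ℝ} {S : Set ℝ}
    (hw : ∀ t ∈ S, ∀ x > G, |w t x| ≤ A / (x - G) ^ 2) :
    TendstoUniformlyOn (fun x t => w t x) (fun _ => 0) atTop S := by
  have bound_tendsto : Tendsto (fun x => A / (x - G) ^ 2) atTop (𝓝 0) :=
    tendsto_const_nhds.div_atTop
      ((tendsto_pow_atTop two_ne_zero).comp (tendsto_atTop_add_const_right _ (-G) tendsto_id))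
  refine Metric.tendstoUniformlyOn_iff.2 fun ε hε => ?_
  filter_upwards [bound_tendsto.eventually_lt_const hε, eventually_gt_atTop G] with x hlt hx t ht
  rw [dist_zero_left]
  exact (hw t ht x hx).trans_lt hlt

lemma abs_layerPotential_heatKernel_le (hB : IsLayerDensity B R)
    (hG : ∀ τ ∈ Ioc 0 T, γ τ ≤ G) (ht : t ∈ Icc 0 T) (hx : G < x) :
    |layerPotential heatKernel γ B t x| ≤ 2 * √T * R * T / (x - G) ^ 2 := by
  have far : ∀ᵐ τ ∂volume.restrict (Ioc 0 T), t - τ ≤ T ∧ x - G ≤ |x - γ τ| :=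
    (ae_restrict_iff' measurableSet_Ioc).2 <| .of_forall fun τ hτ =>
      ⟨by linarith [ht.2, hτ.1], (by linarith [hG τ hτ] : x - G ≤ _).trans (le_abs_self _)⟩
  rw [layerPotential_eq_restrict isCausalKernel_heatKernel hB ht.2]
  refine (abs_kernelPotential_heatKernel_le hB.abs_le (sub_pos.2 hx) far).trans_eq ?_
  rw [measureReal_restrict_apply_univ, Real.volume_real_Ioc_of_le (ht.1.trans ht.2)]
  ring

lemma IsInitialDatum.abs_heatFlow_le_div_sq (hφ : IsInitialDatum φ s₀ K) (ht : t ∈ Icc 0 T)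
    (hx : s₀ < x) :
    |heatFlow φ t x| ≤ 2 * √T * (K * s₀) * (2 * s₀) / (x - s₀) ^ 2 := by
  have hs₀ := hφ.pos
  rcases ht.1.eq_or_lt with rfl | ht₀
  · rw [heatFlow_zero, hφ.eq_zero x (hx.le.trans (le_abs_self x)), abs_zero]
    positivity
  have far : ∀ᵐ y ∂volume.restrict (Icc (-s₀) s₀), t - 0 ≤ T ∧ x - s₀ ≤ |x - y| :=
    (ae_restrict_iff' measurableSet_Icc).2 <| .of_forall fun y hy =>
      ⟨by linarith [ht.2], (by linarith [hy.2] : x - s₀ ≤ _).trans (le_abs_self _)⟩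
  rw [heatFlow_eq_initialPotential φ ht₀, hφ.initialPotential_eq_kernelPotential]
  refine (abs_kernelPotential_heatKernel_le hφ.abs_le (sub_pos.2 hx) far).trans_eq ?_
  rw [measureReal_restrict_apply_univ, Real.volume_real_Icc_of_le (by linarith)]
  ring

lemma tendstoUniformlyOn_layerPotential_heatKernel (hγ : Continuous γ) (hB : IsLayerDensity B R)
    (T : ℝ) : TendstoUniformlyOn (fun x t => layerPotential heatKernel γ B t x) (fun _ => 0)
      atTop (Icc 0 T) := by
  obtain ⟨G, hG⟩ := isCompact_Icc.bddAbove_image (hγ.continuousOn (s := Icc 0 T))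
  exact tendstoUniformlyOn_zero_of_le_div_sq fun t ht x hx => abs_layerPotential_heatKernel_le hB
    (fun τ hτ => hG (mem_image_of_mem γ (Ioc_subset_Icc_self hτ))) ht hx

lemma IsInitialDatum.tendstoUniformlyOn_heatFlow (hφ : IsInitialDatum φ s₀ K) (T : ℝ) :
    TendstoUniformlyOn (fun x t => heatFlow φ t x) (fun _ => 0) atTop (Icc 0 T) :=
  tendstoUniformlyOn_zero_of_le_div_sq fun _ ht _ hx => hφ.abs_heatFlow_le_div_sq ht hx

end FarField

lemma layerPotential_heatKernel_neg_curve (γ B : ℝ → ℝ) (t : ℝ) :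
    layerPotential heatKernel (-γ) B t 0 = layerPotential heatKernel γ B t 0 := by
  simp only [layerPotential_eq_integral_lag, Pi.neg_apply, zero_sub, heatKernel_neg]

lemma layerPotential_heatKernelDx_neg_curve (γ B : ℝ → ℝ) (t : ℝ) :
    layerPotential heatKernelDx (-γ) B t 0 = -layerPotential heatKernelDx γ B t 0 := by
  simp only [layerPotential_eq_integral_lag, Pi.neg_apply, zero_sub, heatKernelDx_neg, neg_mul,
    integral_neg]

lemma layerPotential_heatKernel_zero_time {B : ℝ → ℝ} {R : NNReal} (γ : ℝ → ℝ)
    (hB : IsLayerDensity B R) (x : ℝ) : layerPotential heatKernel γ B 0 x = 0 := by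
  rw [layerPotential_eq_restrict isCausalKernel_heatKernel hB le_rfl]
  simp [kernelPotential]

section ReflectedField

variable {w wx wxx : ℝ → ℝ → ℝ} {γ B h : ℝ → ℝ} {C R Q : NNReal} {t x : ℝ}

lemma reflectedField_heatKernel_origin (w : ℝ → ℝ → ℝ) (γ B h : ℝ → ℝ) (t : ℝ) :
    reflectedField w heatKernel γ B h t 0 = w t 0 +
      2 * layerPotential heatKernel (fun _ => 0) h t 0 - 2 * layerPotential heatKernel γ B t 0 := by
  rw [reflectedField, layerPotential_heatKernel_neg_curve]
  ring

lemma reflectedField_heatKernel_zero_time (hB : IsLayerDensity B R) (hh : IsLayerDensity h Q)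
    (w : ℝ → ℝ → ℝ) (γ : ℝ → ℝ) (x : ℝ) : reflectedField w heatKernel γ B h 0 x = w 0 x := by
  simp [reflectedField, layerPotential_heatKernel_zero_time _ hB,
    layerPotential_heatKernel_zero_time _ hh]

lemma continuous_reflectedField (hw : Continuous fun q : ℝ × ℝ => w q.1 q.2) (hγ : Continuous γ)
    (hB : IsLayerDensity B R) (hh : IsLayerDensity h Q) :
    Continuous fun q : ℝ × ℝ => reflectedField w heatKernel γ B h q.1 q.2 :=
  ((hw.add ((continuous_layerPotential_heatKernel continuous_const hh).const_mul 2)).sub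
    (continuous_layerPotential_heatKernel hγ hB)).sub
    (continuous_layerPotential_heatKernel hγ.neg hB)

lemma tendstoUniformlyOn_reflectedField {T : ℝ}
    (hw : TendstoUniformlyOn (fun x t => w t x) (fun _ => 0) atTop (Icc 0 T)) (hγ : Continuous γ)
    (hB : IsLayerDensity B R) (hh : IsLayerDensity h Q) :
    TendstoUniformlyOn (fun x t => reflectedField w heatKernel γ B h t x) (fun _ => 0)
      atTop (Icc 0 T) := by
  have source := tendstoUniformlyOn_layerPotential_heatKernel (γ := fun _ => 0)
    continuous_const hh T
  have all := ((hw.add (source.add source)).sub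
    (tendstoUniformlyOn_layerPotential_heatKernel hγ hB T)).sub
    (tendstoUniformlyOn_layerPotential_heatKernel hγ.neg hB T)
  refine (all.congr_right fun _ _ => ?_).congr (.of_forall fun _ _ _ => ?_)
  · simp
  · simp only [Pi.add_apply, Pi.sub_apply, reflectedField, two_mul]

variable (hγ : LipschitzWith C γ) (hB : IsLayerDensity B R) (hh : IsLayerDensity h Q)

include hγ hB hh

lemma isCaloricAt_reflectedField (hw : IsCaloricAt w wx wxx t x) (hx : x ≠ 0) (hxγ : x ≠ γ t)
    (hxγ' : x ≠ -γ t) :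
    IsCaloricAt (reflectedField w heatKernel γ B h) (reflectedField wx heatKernelDx γ B h)
      (reflectedField wxx heatKernelDxx γ B h) t x :=
  ((hw.add ((isCaloricAt_layerPotential (LipschitzWith.const 0) hh hx).const_mul 2)).sub
    (isCaloricAt_layerPotential hγ hB hxγ)).sub (isCaloricAt_layerPotential hγ.neg hB hxγ')

lemma tendsto_reflectedField_curve (hw : ContinuousAt (fun q : ℝ × ℝ => wx q.1 q.2) (t, γ t))
    (ht : 0 < t) (hγt : 0 < γ t) {e : ℝ} (he : |e| = 1) :
    Tendsto (fun q : ℝ × ℝ => reflectedField wx heatKernelDx γ B h q.1 q.2)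
      (𝓝[{q | 0 < e * (q.2 - γ q.1)}] (t, γ t))
      (𝓝 (wx t (γ t) + 2 * layerPotential heatKernelDx (fun _ => 0) h t (γ t) -
        (layerRegularPart γ B t 0 - e * B t / 2) -
        layerPotential heatKernelDx (-γ) B t (γ t))) := by
  have source := (isCaloricAt_layerPotential (t₀ := t) (LipschitzWith.const 0) hh
    hγt.ne').continuousAt_space
  have mirror := (isCaloricAt_layerPotential hγ.neg hB
    (show γ t ≠ -γ t by linarith)).continuousAt_space
  exact (((hw.tendsto.add (source.tendsto.const_mul 2)).mono_left nhdsWithin_le_nhds).sub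
    (tendsto_layerPotential_heatKernelDx hγ hB ht he)).sub
    (mirror.tendsto.mono_left nhdsWithin_le_nhds)

lemma tendsto_reflectedField_origin (hw : ContinuousAt (fun q : ℝ × ℝ => wx q.1 q.2) (t, 0))
    (ht : 0 < t) (hγt : 0 < γ t) :
    Tendsto (fun q : ℝ × ℝ => reflectedField wx heatKernelDx γ B h q.1 q.2)
      (𝓝[{q | 0 < q.2}] (t, 0)) (𝓝 (wx t 0 - h t)) := by
  have sink := (isCaloricAt_layerPotential hγ hB hγt.ne).continuousAt_space
  have mirror := (isCaloricAt_layerPotential hγ.neg hB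
    (show 0 ≠ -γ t by linarith)).continuousAt_space
  have source := tendsto_layerPotential_heatKernelDx (LipschitzWith.const 0) hh ht abs_one
  have no_regular_part : layerRegularPart (fun _ => 0) h t 0 = 0 := by
    simp [layerRegularPart, regularKernel]
  simp only [one_mul, sub_zero, no_regular_part, zero_sub] at source
  have all := (((hw.tendsto.mono_left nhdsWithin_le_nhds).add (source.const_mul 2)).sub
    (sink.tendsto.mono_left nhdsWithin_le_nhds)).sub (mirror.tendsto.mono_left nhdsWithin_le_nhds)
  refine all.trans_eq (congrArg 𝓝 ?_)
  rw [layerPotential_heatKernelDx_neg_curve]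
  ring

end ReflectedField

/-- A solution `u` on the half line of the truncated transmission problem with speed law `f` and
flux law `g`. Across the curve `s` the space derivative jumps by the speed `f(v(t))` of the curve,
and `-v(t)` is the sum of its two one-sided limits; if `u` vanishes beyond the curve, then `v(t)`
is the one-sided derivative in the Stefan condition. -/
structure IsTransmissionSolution (f g φ : ℝ → ℝ) (s₀ : ℝ) (s v : ℝ → ℝ) (u ux uxx : ℝ → ℝ → ℝ) :
    Prop where
  continuous_boundary : Continuous s
  monotone_boundary : Monotone s
  boundary_zero : s 0 = s₀
  hasDerivAt_boundary : ∀ t > 0, HasDerivAt s (f (v t)) t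
  continuousOn_trace : ContinuousOn v (Ioi 0)
  continuous : Continuous fun q : ℝ × ℝ => u q.1 q.2
  eq_initial : ∀ x, u 0 x = φ x
  isCaloricAt : ∀ t > 0, ∀ x > 0, x ≠ s t → IsCaloricAt u ux uxx t x
  tendsto_right : ∀ t > 0, Tendsto (fun q : ℝ × ℝ => ux q.1 q.2) (𝓝[{q | s q.1 < q.2}] (t, s t))
    (𝓝 ((f (v t) - v t) / 2))
  tendsto_left : ∀ t > 0, Tendsto (fun q : ℝ × ℝ => ux q.1 q.2) (𝓝[{q | q.2 < s q.1}] (t, s t))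
    (𝓝 (-(f (v t) + v t) / 2))
  tendsto_origin : ∀ t > 0, Tendsto (fun q : ℝ × ℝ => ux q.1 q.2) (𝓝[{q | 0 < q.2}] (t, 0))
    (𝓝 (-g (u t 0)))
  tendstoUniformlyOn : ∀ T, TendstoUniformlyOn (fun x t => u t x) (fun _ => 0) atTop (Icc 0 T)

section Existence

variable {f g φ : ℝ → ℝ} {s₀ : ℝ} {L R P Q K : NNReal}

lemma exists_traces (hφ : IsInitialDatum φ s₀ K) (hf : IsTruncation f L R)
    (hg : IsTruncation g P Q) :
    ∃ v z : ℝ → ℝ, ContinuousOn v (Ioi 0) ∧ ContinuousOn z (Ioi 0) ∧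
      (∀ t > 0, v t = -2 * (initialPotential heatKernelDx φ t (truncatedBoundary f s₀ v t) +
        2 * layerPotential heatKernelDx (fun _ => 0) (superposition g z) t
          (truncatedBoundary f s₀ v t) -
        layerRegularPart (truncatedBoundary f s₀ v) (superposition f v) t 0 -
        layerPotential heatKernelDx (-truncatedBoundary f s₀ v) (superposition f v) t
          (truncatedBoundary f s₀ v t))) ∧
      ∀ t > 0, z t = reflectedField (heatFlow φ) heatKernel (truncatedBoundary f s₀ v)
        (superposition f v) (superposition g z) t 0 := by
  have hfst : IsTruncation (fun e : ℝ × ℝ => f e.1) L R :=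
    ⟨mul_one L ▸ hf.lipschitz.comp LipschitzWith.prod_fst, fun e => hf.nonneg e.1,
      fun e => hf.le e.1⟩
  have hsnd : IsTruncation (fun e : ℝ × ℝ => g e.2) P Q :=
    ⟨mul_one P ▸ hg.lipschitz.comp LipschitzWith.prod_snd, fun e => hg.nonneg e.2,
      fun e => hg.le e.2⟩
  have free_evolution : IsVolterra fun (_ : ℝ → ℝ × ℝ) t => heatFlow φ t 0 :=
    .of_forall_eq ((continuous_heatFlow hφ.lipschitz.continuous hφ.abs_le).comp
      (by fun_prop : Continuous fun t : ℝ => (t, (0 : ℝ)))).continuousOn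
      fun t _ => abs_heatFlow_le hφ.abs_le t 0
  have speed := ((((isVolterra_initialPotential_heatKernelDx hfst hφ).add
    ((isVolterra_layerPotential_heatKernelDx_fixed hfst hsnd hφ.pos).const_smul 2)).sub
    (isVolterra_layerRegularPart hfst s₀)).sub
    (isVolterra_layerPotential_reflected hfst hφ.pos)).const_smul (-2)
  have value := (free_evolution.add
    ((isVolterra_layerPotential_heatKernel_fixed hsnd).const_smul 2)).sub
    ((isVolterra_layerPotential_heatKernel hfst hφ.pos).const_smul 2)
  obtain ⟨w, hw, hfix⟩ := (speed.prodMk value).exists_fixedPoint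
  refine ⟨fun t => (w t).1, fun t => (w t).2, continuous_fst.comp_continuousOn hw,
    continuous_snd.comp_continuousOn hw, fun t ht => congrArg Prod.fst (hfix t ht), fun t ht => ?_⟩
  rw [reflectedField_heatKernel_origin]
  exact congrArg Prod.snd (hfix t ht)

theorem exists_isTransmissionSolution (hφ : IsInitialDatum φ s₀ K) (hf : IsTruncation f L R)
    (hg : IsTruncation g P Q) :
    ∃ s v u ux uxx, IsTransmissionSolution f g φ s₀ s v u ux uxx := by
  obtain ⟨v, z, hv, hz, v_eq, z_eq⟩ := exists_traces hφ hf hg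
  set B := superposition f v
  set h := superposition g z
  set s := truncatedBoundary f s₀ v
  have hB : IsLayerDensity B R := hf.isLayerDensity hv
  have hh : IsLayerDensity h Q := hg.isLayerDensity hz
  have hs : LipschitzWith R s := hf.lipschitzWith_truncatedBoundary hv s₀
  have hs_pos (t : ℝ) : 0 < s t := hφ.pos.trans_le (hf.le_truncatedBoundary hv s₀ t)
  have jump (t : ℝ) (ht : 0 < t) (e : ℝ) (he : |e| = 1) := tendsto_reflectedField_curve hs hB hh
    (hφ.isCaloricAt_heatFlow ht (s t)).continuousAt_space ht (hs_pos t) he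
  have speed_eq (t : ℝ) (ht : 0 < t) : B t = f (v t) := superposition_of_pos ht
  refine ⟨s, v, reflectedField (heatFlow φ) heatKernel s B h,
    reflectedField (initialPotential heatKernelDx φ) heatKernelDx s B h,
    reflectedField (initialPotential heatKernelDxx φ) heatKernelDxx s B h, hs.continuous,
    hB.monotone_freeBoundary (superposition_nonneg hf.nonneg) s₀, freeBoundary_zero s₀ B,
    fun t ht => speed_eq t ht ▸ hB.hasDerivAt_freeBoundary s₀ ht, hv,
    continuous_reflectedField (continuous_heatFlow hφ.lipschitz.continuous hφ.abs_le)
      hs.continuous hB hh, fun x => ?_, fun t ht x hx hxs => ?_, fun t ht => ?_, fun t ht => ?_,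
    fun t ht => ?_, fun T => ?_⟩
  · rw [reflectedField_heatKernel_zero_time hB hh, heatFlow_zero]
  · exact isCaloricAt_reflectedField hs hB hh (hφ.isCaloricAt_heatFlow ht x) hx.ne' hxs
      (by linarith [hs_pos t])
  · convert jump t ht 1 abs_one using 2
    · simp only [one_mul, sub_pos]
    · linear_combination -(v_eq t ht) / 2 - speed_eq t ht / 2
  · convert jump t ht (-1) (by simp) using 2
    · simp only [neg_one_mul, neg_sub, sub_pos]
    · linear_combination -(v_eq t ht) / 2 + speed_eq t ht / 2
  · have flux := tendsto_reflectedField_origin hs hB hh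
      (hφ.isCaloricAt_heatFlow ht 0).continuousAt_space ht (hs_pos t)
    rwa [initialPotential_heatKernelDx_zero hφ.even, zero_sub,
      show h t = g (z t) from superposition_of_pos ht, z_eq t ht] at flux
  · exact tendstoUniformlyOn_reflectedField (hφ.tendstoUniformlyOn_heatFlow T) hs.continuous hB hh

end Existence

/-! ### Derivatives at a point of contact -/

section Contact

variable {f g f' g' : ℝ → ℝ} {d e x : ℝ}

lemma deriv_le_of_eventually_le_right (hf : HasDerivWithinAt f d (Ici x) x)
    (hg : HasDerivWithinAt g e (Ici x) x) (hle : ∀ᶠ y in 𝓝[>] x, f y ≤ g y) (heq : f x = g x) :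
    d ≤ e := by
  have slope_f := hasDerivWithinAt_iff_tendsto_slope.1 hf
  have slope_g := hasDerivWithinAt_iff_tendsto_slope.1 hg
  rw [Ici_sdiff_left] at slope_f slope_g
  refine le_of_tendsto_of_tendsto slope_f slope_g ?_
  filter_upwards [hle, self_mem_nhdsWithin] with y hy hxy
  rw [slope_def_field, slope_def_field, heq]
  exact div_le_div_of_nonneg_right (by linarith) (sub_nonneg.2 (le_of_lt hxy))

lemma deriv_le_of_eventually_le_left (hf : HasDerivWithinAt f d (Iic x) x)
    (hg : HasDerivWithinAt g e (Iic x) x) (hle : ∀ᶠ y in 𝓝[<] x, f y ≤ g y) (heq : f x = g x) :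
    e ≤ d := by
  have slope_f := hasDerivWithinAt_iff_tendsto_slope.1 hf
  have slope_g := hasDerivWithinAt_iff_tendsto_slope.1 hg
  rw [Iic_sdiff_right] at slope_f slope_g
  refine le_of_tendsto_of_tendsto slope_g slope_f ?_
  filter_upwards [hle, self_mem_nhdsWithin] with y hy hxy
  rw [slope_def_field, slope_def_field, heq]
  exact div_le_div_of_nonpos_of_le (sub_nonpos.2 (le_of_lt hxy)) (by linarith)

lemma second_deriv_nonpos_of_isLocalMax (hf : ∀ᶠ y in 𝓝 x, HasDerivAt f (f' y) y)
    (hf' : HasDerivAt f' d x) (hmax : IsLocalMax f x) : d ≤ 0 := by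
  have deriv_eq : deriv f =ᶠ[𝓝 x] f' := hf.mono fun y hy => hy.deriv
  have second_deriv : deriv (deriv f) x = d := by rw [deriv_eq.deriv_eq, hf'.deriv]
  by_contra! hd
  have hmin : IsLocalMin f x := isLocalMin_of_deriv_deriv_pos (second_deriv ▸ hd)
    hmax.deriv_eq_zero hf.self_of_nhds.continuousAt
  have const : f =ᶠ[𝓝 x] fun _ => f x := by
    filter_upwards [hmin, hmax] with y hy hy' using le_antisymm hy' hy
  have : deriv (deriv f) x = 0 := by rw [const.deriv.deriv_eq, deriv_const', deriv_const']
  linarith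

lemma second_deriv_le_of_eventually_le (hf : ∀ᶠ y in 𝓝 x, HasDerivAt f (f' y) y)
    (hf' : HasDerivAt f' d x) (hg : ∀ᶠ y in 𝓝 x, HasDerivAt g (g' y) y) (hg' : HasDerivAt g' e x)
    (hle : ∀ᶠ y in 𝓝 x, f y ≤ g y) (heq : f x = g x) : d ≤ e := by
  refine sub_nonpos.1 (second_deriv_nonpos_of_isLocalMax (f := fun y => f y - g y)
    (f' := fun y => f' y - g' y) (hf.and hg |>.mono fun y hy => hy.1.sub hy.2) (hf'.sub hg') ?_)
  filter_upwards [hle] with y hy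
  linarith

end Contact

/-- At the space-time point `(t, x)` the function `w` has time derivative `wt` and second space
derivative `wxx`; `wx` is its first space derivative along the time slice `t`. Unlike
`IsCaloricAt`, no equation is imposed. -/
structure HasHeatJetAt (w : ℝ → ℝ → ℝ) (wx : ℝ → ℝ) (wt wxx t x : ℝ) : Prop where
  hasDerivAt_space : ∀ᶠ y in 𝓝 x, HasDerivAt (w t) (wx y) y
  hasDerivAt_space_space : HasDerivAt wx wxx x
  hasDerivAt_time : HasDerivAt (fun τ => w τ x) wt t

namespace HasHeatJetAt

variable {w q : ℝ → ℝ → ℝ} {wx qx : ℝ → ℝ} {wt wxx qt qxx t x : ℝ}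

lemma sub (hw : HasHeatJetAt w wx wt wxx t x) (hq : HasHeatJetAt q qx qt qxx t x) :
    HasHeatJetAt (fun t x => w t x - q t x) (fun y => wx y - qx y) (wt - qt) (wxx - qxx) t x where
  hasDerivAt_space := by
    filter_upwards [hw.hasDerivAt_space, hq.hasDerivAt_space] with y hwy hqy using hwy.sub hqy
  hasDerivAt_space_space := hw.hasDerivAt_space_space.sub hq.hasDerivAt_space_space
  hasDerivAt_time := hw.hasDerivAt_time.sub hq.hasDerivAt_time

lemma neg (hw : HasHeatJetAt w wx wt wxx t x) :
    HasHeatJetAt (fun t x => -w t x) (fun y => -wx y) (-wt) (-wxx) t x where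
  hasDerivAt_space := hw.hasDerivAt_space.mono fun _ hy => hy.neg
  hasDerivAt_space_space := hw.hasDerivAt_space_space.neg
  hasDerivAt_time := hw.hasDerivAt_time.neg

lemma sub_const (hw : HasHeatJetAt w wx wt wxx t x) (c : ℝ) :
    HasHeatJetAt (fun t x => w t x - c) wx wt wxx t x where
  hasDerivAt_space := hw.hasDerivAt_space.mono fun _ hy => hy.sub_const c
  hasDerivAt_space_space := hw.hasDerivAt_space_space
  hasDerivAt_time := hw.hasDerivAt_time.sub_const c

lemma congr (hw : HasHeatJetAt w wx wt wxx t x) (heq : ∀ᶠ z : ℝ × ℝ in 𝓝 (t, x),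
    q z.1 z.2 = w z.1 z.2) : HasHeatJetAt q wx wt wxx t x where
  hasDerivAt_space := by
    have slice : ∀ᶠ y in 𝓝 x, q t y = w t y :=
      (by fun_prop : Continuous fun y : ℝ => (t, y)).continuousAt.eventually heq
    filter_upwards [hw.hasDerivAt_space, slice.eventually_nhds] with y hy hqw
    exact hy.congr_of_eventuallyEq hqw
  hasDerivAt_space_space := hw.hasDerivAt_space_space
  hasDerivAt_time := hw.hasDerivAt_time.congr_of_eventuallyEq <|
    (by fun_prop : Continuous fun τ : ℝ => (τ, x)).continuousAt.eventually heq

lemma not_touching (hw : HasHeatJetAt w wx wt wxx t x) (hq : HasHeatJetAt q qx qt qxx t x)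
    (hsub : wt ≤ wxx) (hsuper : qxx < qt) (hspace : ∀ᶠ y in 𝓝 x, w t y ≤ q t y)
    (htime : ∀ᶠ τ in 𝓝[<] t, w τ x ≤ q τ x) : w t x ≠ q t x := by
  intro heq
  have time := deriv_le_of_eventually_le_left hw.hasDerivAt_time.hasDerivWithinAt
    hq.hasDerivAt_time.hasDerivWithinAt htime heq
  have space := second_deriv_le_of_eventually_le hw.hasDerivAt_space hw.hasDerivAt_space_space
    hq.hasDerivAt_space hq.hasDerivAt_space_space hspace heq
  linarith

end HasHeatJetAt

/-! ### A maximum principle with a kink -/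

/-- The region `0 ≤ t ≤ T`, `0 ≤ x ≤ c(t)` to the left of the curve `c`. -/
def regionBelow (T : ℝ) (c : ℝ → ℝ) : Set (ℝ × ℝ) :=
  {q | q.1 ∈ Icc 0 T ∧ q.2 ∈ Icc 0 (c q.1)}

lemma isCompact_regionBelow (T : ℝ) {c : ℝ → ℝ} (hc : Continuous c) :
    IsCompact (regionBelow T c) := by
  obtain ⟨M, hM⟩ := isCompact_Icc.bddAbove_image (hc.continuousOn (s := Icc 0 T))
  have closed : IsClosed (regionBelow T c) :=
    (isClosed_Icc.preimage continuous_fst).inter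
      ((isClosed_le continuous_const continuous_snd).inter
        (isClosed_le continuous_snd (hc.comp continuous_fst)))
  refine (isCompact_Icc (a := (0, 0)) (b := (T, M))).of_isClosed_subset closed ?_
  rintro ⟨t, x⟩ ⟨ht, hx⟩
  exact ⟨⟨ht.1, hx.1⟩, ht.2, hx.2.trans (hM ⟨t, ht, rfl⟩)⟩

/-- A strict supersolution of the heat equation whose slope drops from `-b` to `-(b + 1)` times its
value when `x` crosses the curve `s`; `ε` is its amplitude. -/
def kinkBarrier (ε b : ℝ) (s : ℝ → ℝ) (t x : ℝ) : ℝ :=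
  ε * exp (((b + 1) ^ 2 + 1) * t - b * x - max (x - s t) 0)

section KinkBarrier

variable {ε b ds t x : ℝ} {s : ℝ → ℝ}

lemma kinkBarrier_pos (hε : 0 < ε) (b : ℝ) (s : ℝ → ℝ) (t x : ℝ) : 0 < kinkBarrier ε b s t x := by
  unfold kinkBarrier; positivity

lemma continuous_kinkBarrier (ε b : ℝ) (hs : Continuous s) :
    Continuous fun q : ℝ × ℝ => kinkBarrier ε b s q.1 q.2 := by
  unfold kinkBarrier; fun_prop

lemma kinkBarrier_of_le (hx : x ≤ s t) :
    kinkBarrier ε b s t x = ε * exp (((b + 1) ^ 2 + 1) * t - b * x + 0 * s t) := by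
  rw [kinkBarrier, max_eq_right (by linarith)]; ring_nf

lemma kinkBarrier_of_ge (hx : s t ≤ x) :
    kinkBarrier ε b s t x = ε * exp (((b + 1) ^ 2 + 1) * t - (b + 1) * x + 1 * s t) := by
  rw [kinkBarrier, max_eq_left (by linarith)]; ring_nf

lemma hasDerivAt_mul_exp_affine (ε A β y : ℝ) (c : ℝ) :
    HasDerivAt (fun y => ε * exp (A - β * y + c)) (-β * (ε * exp (A - β * y + c))) y :=
  (((((hasDerivAt_id y).const_mul β).const_sub A).add_const c).exp.const_mul ε).congr_deriv
    (by simp only [id]; ring)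

lemma hasDerivWithinAt_kinkBarrier_left (hx : x ≤ s t) :
    HasDerivWithinAt (kinkBarrier ε b s t) (-b * kinkBarrier ε b s t x) (Iic x) x := by
  rw [kinkBarrier_of_le hx]
  exact (hasDerivAt_mul_exp_affine ..).hasDerivWithinAt.congr
    (fun y hy => kinkBarrier_of_le (le_trans hy hx)) (kinkBarrier_of_le hx)

lemma hasDerivWithinAt_kinkBarrier_right (hx : s t ≤ x) :
    HasDerivWithinAt (kinkBarrier ε b s t) (-(b + 1) * kinkBarrier ε b s t x) (Ici x) x := by
  rw [kinkBarrier_of_ge hx]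
  exact (hasDerivAt_mul_exp_affine ..).hasDerivWithinAt.congr
    (fun y hy => kinkBarrier_of_ge (hx.trans hy)) (kinkBarrier_of_ge hx)

lemma hasDerivAt_kinkBarrier (hx : x < s t) :
    HasDerivAt (kinkBarrier ε b s t) (-b * kinkBarrier ε b s t x) x := by
  rw [kinkBarrier_of_le hx.le]
  refine (hasDerivAt_mul_exp_affine ..).congr_of_eventuallyEq ?_
  filter_upwards [eventually_lt_nhds hx] with y hy using kinkBarrier_of_le hy.le

lemma hasHeatJetAt_mul_exp (ε A β κ : ℝ) (hs : HasDerivAt s ds t) (x : ℝ) :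
    HasHeatJetAt (fun t x => ε * exp (A * t - β * x + κ * s t))
      (fun y => -β * (ε * exp (A * t - β * y + κ * s t)))
      ((A + κ * ds) * (ε * exp (A * t - β * x + κ * s t)))
      (β ^ 2 * (ε * exp (A * t - β * x + κ * s t))) t x where
  hasDerivAt_space := .of_forall fun y => hasDerivAt_mul_exp_affine ..
  hasDerivAt_space_space :=
    ((hasDerivAt_mul_exp_affine ..).const_mul (-β)).congr_deriv (by ring)
  hasDerivAt_time :=
    (((((hasDerivAt_id t).const_mul A).sub_const (β * x)).add (hs.const_mul κ)).exp.const_mul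
      ε).congr_deriv (by simp only [id, Pi.add_apply]; ring)

lemma exists_hasHeatJetAt_kinkBarrier (hε : 0 < ε) (hb : 0 ≤ b) (hs : Continuous s)
    (hds : HasDerivAt s ds t) (hds0 : 0 ≤ ds) (hx : x ≠ s t) :
    ∃ qx qt qxx, HasHeatJetAt (kinkBarrier ε b s) qx qt qxx t x ∧ qxx < qt := by
  rcases hx.lt_or_gt with hlt | hgt
  · refine ⟨_, _, _, (hasHeatJetAt_mul_exp ε ((b + 1) ^ 2 + 1) b 0 hds x).congr ?_, ?_⟩
    · have : ∀ᶠ q : ℝ × ℝ in 𝓝 (t, x), q.2 < s q.1 :=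
        continuous_snd.continuousAt.eventually_lt (hs.comp continuous_fst).continuousAt hlt
      filter_upwards [this] with q hq using kinkBarrier_of_le hq.le
    · exact mul_lt_mul_of_pos_right (by linarith) (by positivity)
  · refine ⟨_, _, _, (hasHeatJetAt_mul_exp ε ((b + 1) ^ 2 + 1) (b + 1) 1 hds x).congr ?_, ?_⟩
    · have : ∀ᶠ q : ℝ × ℝ in 𝓝 (t, x), s q.1 < q.2 :=
        (hs.comp continuous_fst).continuousAt.eventually_lt continuous_snd.continuousAt hgt
      filter_upwards [this] with q hq using kinkBarrier_of_ge hq.le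
    · exact mul_lt_mul_of_pos_right (by linarith) (by positivity)

end KinkBarrier

/-- `w` is a subsolution of the heat equation on `regionBelow T c` away from the curve `s`, where
its slope may only jump upwards (or its right slope is nonnegative). It is nonpositive on the
initial slice and along `c`, and at `x = 0` its slope is at least `-L w` wherever `w > 0`. -/
structure IsKinkedSubsolution (T L : ℝ) (c s : ℝ → ℝ) (w : ℝ → ℝ → ℝ) : Prop where
  continuous_curve : Continuous c
  continuous_kink : Continuous s
  monotone_kink : Monotone s
  differentiableAt_kink : ∀ t ∈ Ioc 0 T, DifferentiableAt ℝ s t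
  kink_pos : ∀ t ∈ Ioc 0 T, 0 < s t
  continuousOn : ContinuousOn (fun q : ℝ × ℝ => w q.1 q.2) (regionBelow T c)
  initial_nonpos : ∀ x ∈ Icc 0 (c 0), w 0 x ≤ 0
  curve_nonpos : ∀ t ∈ Icc 0 T, w t (c t) ≤ 0
  origin : ∀ t ∈ Ioc 0 T, 0 < w t 0 → ∃ d, HasDerivWithinAt (w t) d (Ici 0) 0 ∧ -L * w t 0 ≤ d
  interior : ∀ t ∈ Ioc 0 T, ∀ x ∈ Ioo 0 (c t), x ≠ s t →
    ∃ wx wt wxx, HasHeatJetAt w wx wt wxx t x ∧ wt ≤ wxx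
  kink : ∀ t ∈ Ioc 0 T, s t < c t → ∃ dl dr, HasDerivWithinAt (w t) dl (Iic (s t)) (s t) ∧
    HasDerivWithinAt (w t) dr (Ici (s t)) (s t) ∧ (0 ≤ dr ∨ dl ≤ dr)

namespace IsKinkedSubsolution

variable {T L ε b t x : ℝ} {c s : ℝ → ℝ} {w : ℝ → ℝ → ℝ}

lemma exists_touching_kinkBarrier (h : IsKinkedSubsolution T L c s w) (b : ℝ)
    (hpos : ∃ q ∈ regionBelow T c, 0 < w q.1 q.2) :
    ∃ ε > 0, ∃ t ∈ Ioc 0 T, ∃ x ∈ Ico 0 (c t), w t x = kinkBarrier ε b s t x ∧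
      ∀ q ∈ regionBelow T c, w q.1 q.2 ≤ kinkBarrier ε b s q.1 q.2 := by
  obtain ⟨q', hq', hw'⟩ := hpos
  have scale (ε : ℝ) (q : ℝ × ℝ) :
      kinkBarrier ε b s q.1 q.2 = ε * kinkBarrier 1 b s q.1 q.2 := by
    rw [kinkBarrier, kinkBarrier, one_mul]
  have barrier_pos (q : ℝ × ℝ) : 0 < kinkBarrier 1 b s q.1 q.2 := kinkBarrier_pos one_pos ..
  obtain ⟨⟨t, x⟩, hq, hmax⟩ := (isCompact_regionBelow T h.continuous_curve).exists_isMaxOn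
    ⟨q', hq'⟩ (h.continuousOn.div (continuous_kinkBarrier 1 b h.continuous_kink).continuousOn
      fun q _ => (barrier_pos q).ne')
  set ε := w t x / kinkBarrier 1 b s t x
  have hε : 0 < ε := (div_pos hw' (barrier_pos q')).trans_le (hmax hq')
  have heq : w t x = kinkBarrier ε b s t x := by
    rw [scale ε (t, x), div_mul_cancel₀ _ (barrier_pos (t, x)).ne']
  have hw : 0 < w t x := heq ▸ kinkBarrier_pos hε ..
  have ht : t ≠ 0 := by rintro rfl; exact hw.not_ge (h.initial_nonpos x hq.2)
  have hx : x ≠ c t := by rintro rfl; exact hw.not_ge (h.curve_nonpos t hq.1)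
  refine ⟨ε, hε, t, ⟨hq.1.1.lt_of_ne' ht, hq.1.2⟩, x, ⟨hq.2.1, hq.2.2.lt_of_ne hx⟩, heq,
    fun q hq => ?_⟩
  rw [scale ε q, ← div_le_iff₀ (barrier_pos q)]
  exact hmax hq

section Touching

variable (h : IsKinkedSubsolution T L c s w) (hε : 0 < ε) (ht : t ∈ Ioc 0 T)
  (hle : ∀ q ∈ regionBelow T c, w q.1 q.2 ≤ kinkBarrier ε b s q.1 q.2)

include h hε ht hle

lemma not_touching_origin (hb : L < b) (hc : 0 < c t) : w t 0 ≠ kinkBarrier ε b s t 0 := by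
  intro heq
  have hw : 0 < w t 0 := heq ▸ kinkBarrier_pos hε ..
  obtain ⟨d, hd, hLd⟩ := h.origin t ht hw
  have : d ≤ -b * kinkBarrier ε b s t 0 := by
    refine deriv_le_of_eventually_le_right hd
      (hasDerivAt_kinkBarrier (h.kink_pos t ht)).hasDerivWithinAt ?_ heq
    filter_upwards [Ioo_mem_nhdsGT hc] with y hy
    exact hle (t, y) ⟨Ioc_subset_Icc_self ht, Ioo_subset_Icc_self hy⟩
  rw [← heq] at this
  nlinarith

lemma not_touching_interior (hb : 0 ≤ b) (hx : x ∈ Ioo 0 (c t)) (hxs : x ≠ s t) :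
    w t x ≠ kinkBarrier ε b s t x := by
  obtain ⟨wx, wt, wxx, hw, hsub⟩ := h.interior t ht x hx hxs
  obtain ⟨qx, qt, qxx, hq, hsuper⟩ := exists_hasHeatJetAt_kinkBarrier hε hb h.continuous_kink
    (h.differentiableAt_kink t ht).hasDerivAt h.monotone_kink.deriv_nonneg hxs
  refine hw.not_touching hq hsub hsuper ?_ ?_
  · filter_upwards [Ioo_mem_nhds hx.1 hx.2] with y hy
    exact hle (t, y) ⟨Ioc_subset_Icc_self ht, Ioo_subset_Icc_self hy⟩
  · have : ∀ᶠ τ in 𝓝[<] t, x < c τ :=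
      nhdsWithin_le_nhds (h.continuous_curve.continuousAt.eventually (eventually_gt_nhds hx.2))
    filter_upwards [this, Ioo_mem_nhdsLT ht.1] with τ hxτ hτ
    exact hle (τ, x) ⟨⟨hτ.1.le, hτ.2.le.trans ht.2⟩, hx.1.le, hxτ.le⟩

lemma not_touching_kink (hb : 0 ≤ b) (hc : s t < c t) :
    w t (s t) ≠ kinkBarrier ε b s t (s t) := by
  intro heq
  have hs := h.kink_pos t ht
  have hq : 0 < kinkBarrier ε b s t (s t) := kinkBarrier_pos hε ..
  obtain ⟨dl, dr, hdl, hdr, hjump⟩ := h.kink t ht hc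
  have left : -b * kinkBarrier ε b s t (s t) ≤ dl := by
    refine deriv_le_of_eventually_le_left hdl (hasDerivWithinAt_kinkBarrier_left le_rfl) ?_ heq
    filter_upwards [Ioo_mem_nhdsLT hs] with y hy
    exact hle (t, y) ⟨Ioc_subset_Icc_self ht, hy.1.le, (hy.2.trans hc).le⟩
  have right : dr ≤ -(b + 1) * kinkBarrier ε b s t (s t) := by
    refine deriv_le_of_eventually_le_right hdr (hasDerivWithinAt_kinkBarrier_right le_rfl) ?_ heq
    filter_upwards [Ioo_mem_nhdsGT hc] with y hy
    exact hle (t, y) ⟨Ioc_subset_Icc_self ht, (hs.trans hy.1).le, hy.2.le⟩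
  rcases hjump with hjump | hjump <;> nlinarith

end Touching

theorem nonpos (h : IsKinkedSubsolution T L c s w) :
    ∀ t ∈ Icc 0 T, ∀ x ∈ Icc 0 (c t), w t x ≤ 0 := by
  by_contra! hpos
  obtain ⟨t', ht', x', hx', hw'⟩ := hpos
  obtain ⟨ε, hε, t, ht, x, hx, heq, hle⟩ :=
    h.exists_touching_kinkBarrier (|L| + 1) ⟨(t', x'), ⟨ht', hx'⟩, hw'⟩
  have hb : 0 ≤ |L| + 1 := by positivity
  rcases hx.1.eq_or_lt with rfl | hx0
  · exact h.not_touching_origin hε ht hle (by linarith [le_abs_self L]) hx.2 heq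
  rcases eq_or_ne x (s t) with rfl | hxs
  · exact h.not_touching_kink hε ht hle hb hx.2 heq
  · exact h.not_touching_interior hε ht hle hb ⟨hx0, hx.2⟩ hxs heq

end IsKinkedSubsolution

/-! ### From the transmission problem to the Stefan problem -/

section Slices

variable {u ux uxx : ℝ → ℝ → ℝ} {S : Set (ℝ × ℝ)} {t a d x : ℝ}

lemma tendsto_slice_nhdsWithin {I : Set ℝ} (h : ∀ᶠ y in 𝓝[I] a, (t, y) ∈ S) :
    Tendsto (fun y => (t, y)) (𝓝[I] a) (𝓝[S] (t, a)) :=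
  tendsto_nhdsWithin_iff.2
    ⟨(by fun_prop : Continuous fun y : ℝ => (t, y)).continuousAt.tendsto.mono_left
      nhdsWithin_le_nhds, h⟩

lemma hasDerivWithinAt_Ici_of_tendsto_slice (hu : Continuous fun q : ℝ × ℝ => u q.1 q.2)
    (hd : ∀ᶠ y in 𝓝[>] a, HasDerivAt (u t) (ux t y) y) (hS : ∀ᶠ y in 𝓝[>] a, (t, y) ∈ S)
    (hlim : Tendsto (fun q : ℝ × ℝ => ux q.1 q.2) (𝓝[S] (t, a)) (𝓝 d)) :
    HasDerivWithinAt (u t) d (Ici a) a :=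
  hasDerivWithinAt_Ici_of_tendsto_deriv (fun _ hy => hy.differentiableAt.differentiableWithinAt)
    (hu.comp (by fun_prop : Continuous fun y : ℝ => (t, y))).continuousWithinAt hd
    ((hlim.comp (tendsto_slice_nhdsWithin hS)).congr' (hd.mono fun _ hy => hy.deriv.symm))

lemma hasDerivWithinAt_Iic_of_tendsto_slice (hu : Continuous fun q : ℝ × ℝ => u q.1 q.2)
    (hd : ∀ᶠ y in 𝓝[<] a, HasDerivAt (u t) (ux t y) y) (hS : ∀ᶠ y in 𝓝[<] a, (t, y) ∈ S)
    (hlim : Tendsto (fun q : ℝ × ℝ => ux q.1 q.2) (𝓝[S] (t, a)) (𝓝 d)) :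
    HasDerivWithinAt (u t) d (Iic a) a :=
  hasDerivWithinAt_Iic_of_tendsto_deriv (fun _ hy => hy.differentiableAt.differentiableWithinAt)
    (hu.comp (by fun_prop : Continuous fun y : ℝ => (t, y))).continuousWithinAt hd
    ((hlim.comp (tendsto_slice_nhdsWithin hS)).congr' (hd.mono fun _ hy => hy.deriv.symm))

lemma hasHeatJetAt_of_isCaloricAt (h : ∀ᶠ y in 𝓝 x, IsCaloricAt u ux uxx t y) :
    HasHeatJetAt u (ux t) (uxx t x) (uxx t x) t x where
  hasDerivAt_space := h.mono fun _ hy => hy.hasDerivAt_space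
  hasDerivAt_space_space := h.self_of_nhds.hasDerivAt_space_space
  hasDerivAt_time := h.self_of_nhds.hasDerivAt_time

end Slices

/-- The function `C (s(t) - x)₊`, which dominates solutions with slope at most `C` at `x = 0`. -/
def ramp (C : ℝ) (s : ℝ → ℝ) (t x : ℝ) : ℝ :=
  C * max (s t - x) 0

section Ramp

variable {C t x : ℝ} {s : ℝ → ℝ}

lemma ramp_of_le (hx : x ≤ s t) : ramp C s t x = C * (s t - x) := by
  rw [ramp, max_eq_left (by linarith)]

lemma ramp_of_ge (hx : s t ≤ x) : ramp C s t x = 0 := by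
  rw [ramp, max_eq_right (by linarith), mul_zero]

lemma ramp_nonneg (hC : 0 ≤ C) (s : ℝ → ℝ) (t x : ℝ) : 0 ≤ ramp C s t x :=
  mul_nonneg hC (le_max_right _ _)

lemma continuous_ramp (C : ℝ) (hs : Continuous s) :
    Continuous fun q : ℝ × ℝ => ramp C s q.1 q.2 := by
  unfold ramp; fun_prop

lemma hasDerivAt_const_mul_const_sub (C a x : ℝ) : HasDerivAt (fun y => C * (a - y)) (-C) x :=
  (((hasDerivAt_id x).const_sub a).const_mul C).congr_deriv (by ring)

lemma hasDerivWithinAt_ramp_left (hx : x ≤ s t) :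
    HasDerivWithinAt (ramp C s t) (-C) (Iic x) x :=
  (hasDerivAt_const_mul_const_sub C (s t) x).hasDerivWithinAt.congr
    (fun _ hy => ramp_of_le (le_trans hy hx)) (ramp_of_le hx)

lemma hasDerivWithinAt_ramp_right (hx : s t ≤ x) :
    HasDerivWithinAt (ramp C s t) 0 (Ici x) x :=
  (hasDerivWithinAt_const x _ 0).congr (fun _ hy => ramp_of_ge (hx.trans hy)) (ramp_of_ge hx)

lemma hasDerivAt_ramp (hx : x < s t) : HasDerivAt (ramp C s t) (-C) x := by
  refine (hasDerivAt_const_mul_const_sub C (s t) x).congr_of_eventuallyEq ?_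
  filter_upwards [eventually_lt_nhds hx] with y hy using ramp_of_le hy.le

lemma exists_hasHeatJetAt_ramp (hC : 0 ≤ C) (hs : Continuous s) (hmono : Monotone s)
    (hdiff : DifferentiableAt ℝ s t) (hx : x ≠ s t) :
    ∃ qx qt, HasHeatJetAt (ramp C s) qx qt 0 t x ∧ 0 ≤ qt := by
  rcases hx.lt_or_gt with hlt | hgt
  · have jet : HasHeatJetAt (fun t x => C * (s t - x)) (fun _ => -C) (C * deriv s t) 0 t x :=
      ⟨.of_forall fun y => hasDerivAt_const_mul_const_sub C (s t) y, hasDerivAt_const x (-C),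
        (hdiff.hasDerivAt.sub_const x).const_mul C⟩
    refine ⟨_, _, jet.congr ?_, mul_nonneg hC hmono.deriv_nonneg⟩
    have : ∀ᶠ q : ℝ × ℝ in 𝓝 (t, x), q.2 < s q.1 :=
      continuous_snd.continuousAt.eventually_lt (hs.comp continuous_fst).continuousAt hlt
    filter_upwards [this] with q hq using ramp_of_le hq.le
  · have jet : HasHeatJetAt (fun _ _ => 0) (fun _ => 0) 0 0 t x :=
      ⟨.of_forall fun y => hasDerivAt_const y 0, hasDerivAt_const x 0, hasDerivAt_const t 0⟩
    refine ⟨_, _, jet.congr ?_, le_rfl⟩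
    have : ∀ᶠ q : ℝ × ℝ in 𝓝 (t, x), s q.1 < q.2 :=
      (hs.comp continuous_fst).continuousAt.eventually_lt continuous_snd.continuousAt hgt
    filter_upwards [this] with q hq using ramp_of_ge hq.le

end Ramp

/-- The truncation of the identity to values in `[0, C]`. -/
def clip (C x : ℝ) : ℝ :=
  min (max x 0) C

section Clip

variable {C x : ℝ}

lemma clip_nonneg (hC : 0 ≤ C) (x : ℝ) : 0 ≤ clip C x := le_min (le_max_right _ _) hC

lemma clip_le (C x : ℝ) : clip C x ≤ C := min_le_right _ _

lemma clip_of_mem (hx : x ∈ Icc 0 C) : clip C x = x := by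
  rw [clip, max_eq_left hx.1, min_eq_left hx.2]

lemma lipschitzWith_clip (C : ℝ) : LipschitzWith 1 (clip C) :=
  (LipschitzWith.id.max_const 0).min_const C

lemma isTruncation_clip (C : NNReal) : IsTruncation (clip C) 1 C :=
  ⟨lipschitzWith_clip C, clip_nonneg C.2, clip_le C⟩

lemma clip_le_self_or_nonpos (C x : ℝ) : clip C x ≤ x ∨ clip C x ≤ 0 :=
  (le_total 0 x).imp (fun h => (min_le_left _ _).trans (max_eq_left h).le)
    fun h => (min_le_left _ _).trans (max_eq_right h).le

lemma self_le_clip_or_le (C x : ℝ) : x ≤ clip C x ∨ C ≤ clip C x :=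
  (le_total (max x 0) C).imp (fun h => (le_max_left _ _).trans (min_eq_left h).ge)
    fun h => (min_eq_right h).ge

end Clip

namespace IsTransmissionSolution

variable {f g φ s v : ℝ → ℝ} {s₀ C t x : ℝ} {u ux uxx w : ℝ → ℝ → ℝ}

lemma boundary_pos (h : IsTransmissionSolution f g φ s₀ s v u ux uxx) (hs₀ : 0 < s₀) (ht : 0 ≤ t) :
    0 < s t :=
  hs₀.trans_le (h.boundary_zero ▸ h.monotone_boundary ht)

lemma hasHeatJetAt (h : IsTransmissionSolution f g φ s₀ s v u ux uxx) (ht : 0 < t) (hx : 0 < x)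
    (hxs : x ≠ s t) : HasHeatJetAt u (ux t) (uxx t x) (uxx t x) t x := by
  refine hasHeatJetAt_of_isCaloricAt ?_
  filter_upwards [eventually_gt_nhds hx, eventually_ne_nhds hxs] with y hy hys
  exact h.isCaloricAt t ht y hy hys

section OneSidedDerivatives

variable (h : IsTransmissionSolution f g φ s₀ s v u ux uxx) (hs₀ : 0 < s₀) (ht : 0 < t)

include h hs₀ ht

lemma hasDerivWithinAt_boundary_right :
    HasDerivWithinAt (u t) ((f (v t) - v t) / 2) (Ici (s t)) (s t) := by
  refine hasDerivWithinAt_Ici_of_tendsto_slice h.continuous ?_ self_mem_nhdsWithin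
    (h.tendsto_right t ht)
  filter_upwards [self_mem_nhdsWithin] with y hy
  exact (h.isCaloricAt t ht y ((h.boundary_pos hs₀ ht.le).trans hy) (ne_of_gt hy)).hasDerivAt_space

lemma hasDerivWithinAt_boundary_left :
    HasDerivWithinAt (u t) (-(f (v t) + v t) / 2) (Iic (s t)) (s t) := by
  refine hasDerivWithinAt_Iic_of_tendsto_slice h.continuous ?_ self_mem_nhdsWithin
    (h.tendsto_left t ht)
  filter_upwards [Ioo_mem_nhdsLT (h.boundary_pos hs₀ ht.le)] with y hy
  exact (h.isCaloricAt t ht y hy.1 hy.2.ne).hasDerivAt_space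

lemma hasDerivWithinAt_origin : HasDerivWithinAt (u t) (-g (u t 0)) (Ici 0) 0 := by
  refine hasDerivWithinAt_Ici_of_tendsto_slice h.continuous ?_ self_mem_nhdsWithin
    (h.tendsto_origin t ht)
  filter_upwards [Ioo_mem_nhdsGT (h.boundary_pos hs₀ ht.le)] with y hy
  exact (h.isCaloricAt t ht y hy.1 hy.2.ne).hasDerivAt_space

end OneSidedDerivatives

lemma eventually_abs_le (h : IsTransmissionSolution f g φ s₀ s v u ux uxx) (T : ℝ) {ε : ℝ}
    (hε : 0 < ε) : ∀ᶠ R in atTop, ∀ t ∈ Icc 0 T, |u t R| ≤ ε := by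
  filter_upwards [Metric.tendstoUniformlyOn_iff.1 (h.tendstoUniformlyOn T) ε hε] with R hR t ht
  simpa only [dist_zero_left, Real.norm_eq_abs] using (hR t ht).le

lemma nonpos_of_kinked_subsolution (h : IsTransmissionSolution f g φ s₀ s v u ux uxx) (hs₀ : 0 < s₀)
    (hw : Continuous fun q : ℝ × ℝ => w q.1 q.2) (initial : ∀ x ≥ 0, w 0 x ≤ 0)
    (far : ∀ T, ∀ ε > 0, ∀ᶠ R in atTop, ∀ t ∈ Icc 0 T, w t R ≤ ε)
    (origin : ∀ t > 0, ∃ d ≥ 0, HasDerivWithinAt (w t) d (Ici 0) 0)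
    (interior : ∀ t > 0, ∀ x > 0, x ≠ s t →
      ∃ wx wt wxx, HasHeatJetAt w wx wt wxx t x ∧ wt ≤ wxx)
    (kink : ∀ t > 0, ∃ dl dr, HasDerivWithinAt (w t) dl (Iic (s t)) (s t) ∧
      HasDerivWithinAt (w t) dr (Ici (s t)) (s t) ∧ (0 ≤ dr ∨ dl ≤ dr))
    (ht : 0 ≤ t) (hx : 0 ≤ x) : w t x ≤ 0 := by
  refine le_of_forall_pos_le_add fun ε hε => ?_
  obtain ⟨R, hR, hxR⟩ := ((far t ε hε).and (eventually_ge_atTop x)).exists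
  suffices IsKinkedSubsolution t 0 (fun _ => R) s fun t x => w t x - ε by
    linarith [this.nonpos t ⟨ht, le_rfl⟩ x ⟨hx, hxR⟩]
  refine ⟨continuous_const, h.continuous_boundary, h.monotone_boundary,
    fun τ hτ => (h.hasDerivAt_boundary τ hτ.1).differentiableAt,
    fun τ hτ => h.boundary_pos hs₀ hτ.1.le, (hw.sub continuous_const).continuousOn,
    fun y hy => by linarith [initial y hy.1], fun τ hτ => by linarith [hR τ hτ],
    fun τ hτ _ => ?_, fun τ hτ y hy hys => ?_, fun τ hτ _ => ?_⟩
  · obtain ⟨d, hd0, hd⟩ := origin τ hτ.1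
    exact ⟨d, hd.sub_const ε, by simpa using hd0⟩
  · obtain ⟨wx, wt, wxx, hjet, hle⟩ := interior τ hτ.1 y hy.1 hys
    exact ⟨wx, wt, wxx, hjet.sub_const ε, hle⟩
  · obtain ⟨dl, dr, hdl, hdr, hjump⟩ := kink τ hτ.1
    exact ⟨dl, dr, hdl.sub_const ε, hdr.sub_const ε, hjump⟩

lemma nonneg (h : IsTransmissionSolution (clip C) g φ s₀ s v u ux uxx) (hs₀ : 0 < s₀)
    (hg : ∀ y, 0 ≤ g y) (hφ : ∀ y ≥ 0, 0 ≤ φ y) (ht : 0 ≤ t) (hx : 0 ≤ x) : 0 ≤ u t x := by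
  suffices -u t x ≤ 0 by linarith
  refine h.nonpos_of_kinked_subsolution (w := fun t x => -u t x) hs₀ h.continuous.neg
    (fun y hy => ?_) (fun T ε hε => ?_)
    (fun τ hτ => ⟨_, ?_, (h.hasDerivWithinAt_origin hs₀ hτ).neg⟩)
    (fun τ hτ y hy hys => ⟨_, _, _, (h.hasHeatJetAt hτ hy hys).neg, le_rfl⟩)
    (fun τ hτ => ⟨_, _, (h.hasDerivWithinAt_boundary_left hs₀ hτ).neg,
      (h.hasDerivWithinAt_boundary_right hs₀ hτ).neg, ?_⟩) ht hx
  · rw [h.eq_initial]; linarith [hφ y hy]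
  · filter_upwards [h.eventually_abs_le T hε] with R hR τ hτ
    linarith [neg_abs_le (u τ R), hR τ hτ]
  · linarith [hg (u τ 0)]
  · exact (clip_le_self_or_nonpos C (v τ)).imp (fun _ => by linarith) fun _ => by linarith

lemma le_ramp (h : IsTransmissionSolution (clip C) g φ s₀ s v u ux uxx) (hs₀ : 0 < s₀) (hC : 0 ≤ C)
    (hg : ∀ y, g y ≤ C) (hφ : ∀ y ≥ 0, φ y ≤ ramp C s 0 y) (ht : 0 ≤ t) (hx : 0 ≤ x) :
    u t x ≤ ramp C s t x := by
  refine sub_nonpos.1 <| h.nonpos_of_kinked_subsolution (w := fun t x => u t x - ramp C s t x) hs₀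
    (h.continuous.sub (continuous_ramp C h.continuous_boundary)) (fun y hy => ?_)
    (fun T ε hε => ?_)
    (fun τ hτ => ⟨_, ?_, (h.hasDerivWithinAt_origin hs₀ hτ).sub
      (hasDerivAt_ramp (h.boundary_pos hs₀ hτ.le)).hasDerivWithinAt⟩)
    (fun τ hτ y hy hys => ?_)
    (fun τ hτ => ⟨_, _,
      (h.hasDerivWithinAt_boundary_left hs₀ hτ).sub (hasDerivWithinAt_ramp_left le_rfl),
      (h.hasDerivWithinAt_boundary_right hs₀ hτ).sub (hasDerivWithinAt_ramp_right le_rfl), ?_⟩)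
    ht hx
  · rw [h.eq_initial]; linarith [hφ y hy]
  · filter_upwards [h.eventually_abs_le T hε] with R hR τ hτ
    linarith [le_abs_self (u τ R), hR τ hτ, ramp_nonneg hC s τ R]
  · linarith [hg (u τ 0)]
  · obtain ⟨qx, qt, hq, hqt⟩ := exists_hasHeatJetAt_ramp hC h.continuous_boundary
      h.monotone_boundary (h.hasDerivAt_boundary τ hτ).differentiableAt hys
    exact ⟨_, _, _, (h.hasHeatJetAt hτ hy hys).sub hq, by linarith⟩
  · exact (self_le_clip_or_le C (v τ)).imp (fun _ => by linarith) fun _ => by linarith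

end IsTransmissionSolution

/-- `(s, u)` is a global solution of the one-phase Stefan problem with flux `g(u)` at `x = 0` and
initial data `(s₀, φ)`; `b` is the speed of the free boundary `s`, and `ux`, `uxx` are the space
derivatives of `u` inside the domain, the boundary fluxes being limits of `ux`. -/
structure IsStefanSolution (g φ : ℝ → ℝ) (s₀ : ℝ) (s b : ℝ → ℝ) (u ux uxx : ℝ → ℝ → ℝ) :
    Prop where
  continuous_boundary : Continuous s
  monotone_boundary : Monotone s
  boundary_zero : s 0 = s₀
  boundary_pos : ∀ t ≥ 0, 0 < s t
  hasDerivAt_boundary : ∀ t > 0, HasDerivAt s (b t) t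
  continuousOn_speed : ContinuousOn b (Ioi 0)
  continuous : Continuous fun q : ℝ × ℝ => u q.1 q.2
  nonneg : ∀ t ≥ 0, ∀ x ≥ 0, 0 ≤ u t x
  eq_initial : ∀ x, u 0 x = φ x
  eq_zero : ∀ t ≥ 0, u t (s t) = 0
  isCaloricAt : ∀ t > 0, ∀ x ∈ Ioo 0 (s t), IsCaloricAt u ux uxx t x
  tendsto_boundary : ∀ t > 0, Tendsto (fun q : ℝ × ℝ => ux q.1 q.2)
    (𝓝[{q | q.2 < s q.1}] (t, s t)) (𝓝 (-b t))
  tendsto_origin : ∀ t > 0, Tendsto (fun q : ℝ × ℝ => ux q.1 q.2) (𝓝[{q | 0 < q.2}] (t, 0))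
    (𝓝 (-g (u t 0)))

theorem IsTransmissionSolution.isStefanSolution {g φ s v : ℝ → ℝ} {s₀ C : ℝ}
    {u ux uxx : ℝ → ℝ → ℝ} (h : IsTransmissionSolution (clip C) g φ s₀ s v u ux uxx)
    (hs₀ : 0 < s₀) (hg : ∀ y, g y ∈ Icc 0 C) (hφ : ∀ x ≥ 0, φ x ∈ Icc 0 (ramp C s 0 x)) :
    IsStefanSolution g φ s₀ s v u ux uxx := by
  have hC : 0 ≤ C := (hg 0).1.trans (hg 0).2
  have hpos (t : ℝ) (ht : 0 ≤ t) : 0 < s t := h.boundary_pos hs₀ ht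
  have hu (t : ℝ) (ht : 0 ≤ t) (x : ℝ) (hx : 0 ≤ x) : 0 ≤ u t x :=
    h.nonneg hs₀ (fun y => (hg y).1) (fun y hy => (hφ y hy).1) ht hx
  have vanish (t : ℝ) (ht : 0 ≤ t) (x : ℝ) (hx : s t ≤ x) : u t x = 0 := by
    have hx0 := (hpos t ht).le.trans hx
    refine le_antisymm ?_ (hu t ht x hx0)
    rw [← ramp_of_ge (C := C) hx]
    exact h.le_ramp hs₀ hC (fun y => (hg y).2) (fun y hy => (hφ y hy).2) ht hx0
  have speed_eq (t : ℝ) (ht : 0 < t) : clip C (v t) = v t := by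
    have flat : HasDerivWithinAt (u t) 0 (Ici (s t)) (s t) :=
      (hasDerivWithinAt_const (s t) _ 0).congr (vanish t ht.le) (vanish t ht.le _ le_rfl)
    linarith [(uniqueDiffWithinAt_Ici (s t)).eq_deriv _
      (h.hasDerivWithinAt_boundary_right hs₀ ht) flat]
  refine ⟨h.continuous_boundary, h.monotone_boundary, h.boundary_zero, hpos,
    fun t ht => speed_eq t ht ▸ h.hasDerivAt_boundary t ht, h.continuousOn_trace, h.continuous, hu,
    h.eq_initial, fun t ht => vanish t ht _ le_rfl,
    fun t ht x hx => h.isCaloricAt t ht x hx.1 hx.2.ne, fun t ht => ?_, h.tendsto_origin⟩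
  convert h.tendsto_left t ht using 2
  linarith [speed_eq t ht]

/-! ### Comparison with strict supersolutions -/

namespace IsStefanSolution

variable {g φ s b : ℝ → ℝ} {s₀ t x : ℝ} {u ux uxx : ℝ → ℝ → ℝ}

lemma hasHeatJetAt (h : IsStefanSolution g φ s₀ s b u ux uxx) (ht : 0 < t) (hx : x ∈ Ioo 0 (s t)) :
    HasHeatJetAt u (ux t) (uxx t x) (uxx t x) t x := by
  refine hasHeatJetAt_of_isCaloricAt ?_
  filter_upwards [Ioo_mem_nhds hx.1 hx.2] with y hy using h.isCaloricAt t ht y hy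

lemma hasDerivWithinAt_boundary (h : IsStefanSolution g φ s₀ s b u ux uxx) (ht : 0 < t) :
    HasDerivWithinAt (u t) (-b t) (Iic (s t)) (s t) := by
  refine hasDerivWithinAt_Iic_of_tendsto_slice h.continuous ?_ self_mem_nhdsWithin
    (h.tendsto_boundary t ht)
  filter_upwards [Ioo_mem_nhdsLT (h.boundary_pos t ht.le)] with y hy
  exact (h.isCaloricAt t ht y hy).hasDerivAt_space

lemma hasDerivWithinAt_origin (h : IsStefanSolution g φ s₀ s b u ux uxx) (ht : 0 < t) :
    HasDerivWithinAt (u t) (-g (u t 0)) (Ici 0) 0 := by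
  refine hasDerivWithinAt_Ici_of_tendsto_slice h.continuous ?_ self_mem_nhdsWithin
    (h.tendsto_origin t ht)
  filter_upwards [Ioo_mem_nhdsGT (h.boundary_pos t ht.le)] with y hy
  exact (h.isCaloricAt t ht y hy).hasDerivAt_space

end IsStefanSolution

/-- `(σ, z)` is a supersolution of the Stefan problem with flux `g(u)` at `x = 0` and initial data
`(s₀, φ)`, strict in the initial position of the boundary `σ` and in its speed `ν`. -/
structure IsStrictSupersolution (g φ : ℝ → ℝ) (s₀ : ℝ) (σ ν : ℝ → ℝ) (z : ℝ → ℝ → ℝ) : Prop where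
  continuous_boundary : Continuous σ
  lt_boundary_zero : s₀ < σ 0
  hasDerivAt_boundary : ∀ t > 0, HasDerivAt σ (ν t) t
  continuousOn : ContinuousOn (fun q : ℝ × ℝ => z q.1 q.2) {q | 0 ≤ q.1}
  initial_le : ∀ x ∈ Icc 0 s₀, φ x ≤ z 0 x
  nonneg : ∀ t ≥ 0, ∀ x ∈ Icc 0 (σ t), 0 ≤ z t x
  eq_zero : ∀ t ≥ 0, z t (σ t) = 0
  origin : ∀ t > 0, ∃ d ≤ -g (z t 0), HasDerivWithinAt (z t) d (Ici 0) 0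
  interior : ∀ t > 0, ∀ x ∈ Ioo 0 (σ t), ∃ zx zt zxx, HasHeatJetAt z zx zt zxx t x ∧ zxx ≤ zt
  boundary : ∀ t > 0, ∃ d, HasDerivWithinAt (z t) d (Iic (σ t)) (σ t) ∧ -d < ν t

lemma exists_first_contact {f g : ℝ → ℝ} (hf : Continuous f) (hg : Continuous g) (h0 : f 0 < g 0)
    {t₁ : ℝ} (ht₁ : 0 ≤ t₁) (hcross : g t₁ ≤ f t₁) :
    ∃ T > 0, f T = g T ∧ ∀ t ∈ Ico 0 T, f t < g t := by
  have hcompact : IsCompact (Icc 0 t₁ ∩ {t | g t ≤ f t}) :=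
    isCompact_Icc.inter_right (isClosed_le hg hf)
  obtain ⟨T, ⟨hT, hgf⟩, hleast⟩ := hcompact.exists_isLeast ⟨t₁, ⟨ht₁, le_rfl⟩, hcross⟩
  have before (t : ℝ) (ht : t ∈ Ico 0 T) : f t < g t := by
    by_contra! hle
    exact (hleast ⟨⟨ht.1, ht.2.le.trans hT.2⟩, hle⟩).not_gt ht.2
  have hT0 : 0 < T := hT.1.lt_of_ne' fun h => (h ▸ hgf : g 0 ≤ f 0).not_gt h0
  refine ⟨T, hT0, le_antisymm ?_ hgf, before⟩
  refine le_of_tendsto_of_tendsto (hf.continuousWithinAt (s := Iio T)) hg.continuousWithinAt ?_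
  filter_upwards [Ioo_mem_nhdsLT hT0] with t ht using (before t ⟨ht.1.le, ht.2⟩).le

namespace IsStefanSolution

variable {g φ s b σ ν : ℝ → ℝ} {s₀ t x T : ℝ} {u ux uxx z : ℝ → ℝ → ℝ} {L : NNReal}

section Comparison

variable (h : IsStefanSolution g φ s₀ s b u ux uxx) (hz : IsStrictSupersolution g φ s₀ σ ν z)
  (hg : LipschitzWith L g)

include h hz hg

lemma isKinkedSubsolution_sub (hle : ∀ t ∈ Icc 0 T, s t ≤ σ t) :
    IsKinkedSubsolution T L s s fun t x => u t x - z t x where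
  continuous_curve := h.continuous_boundary
  continuous_kink := h.continuous_boundary
  monotone_kink := h.monotone_boundary
  differentiableAt_kink t ht := (h.hasDerivAt_boundary t ht.1).differentiableAt
  kink_pos t ht := h.boundary_pos t ht.1.le
  continuousOn := h.continuous.continuousOn.sub (hz.continuousOn.mono fun _ hq => hq.1.1)
  initial_nonpos x hx := by
    rw [h.eq_initial]
    exact sub_nonpos.2 (hz.initial_le x (h.boundary_zero ▸ hx))
  curve_nonpos t ht := by
    rw [h.eq_zero t ht.1]
    linarith [hz.nonneg t ht.1 (s t) ⟨(h.boundary_pos t ht.1).le, hle t ht⟩]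
  origin t ht hpos := by
    obtain ⟨d, hd, hdz⟩ := hz.origin t ht.1
    refine ⟨_, (h.hasDerivWithinAt_origin ht.1).sub hdz, ?_⟩
    have hlip := (le_abs_self _).trans (hg.dist_le_mul (u t 0) (z t 0))
    rw [Real.dist_eq, abs_of_pos hpos] at hlip
    linarith
  interior t ht x hx _ := by
    obtain ⟨_, _, _, jet, hzz⟩ := hz.interior t ht.1 x
      ⟨hx.1, hx.2.trans_le (hle t ⟨ht.1.le, ht.2⟩)⟩
    exact ⟨_, _, _, (h.hasHeatJetAt ht.1 hx).sub jet, by linarith⟩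
  kink t _ hst := absurd hst (lt_irrefl _)

theorem boundary_lt_of_isStrictSupersolution (ht : 0 ≤ t) : s t < σ t := by
  by_contra! hcross
  obtain ⟨T, hT, heq, before⟩ := exists_first_contact h.continuous_boundary hz.continuous_boundary
    (h.boundary_zero ▸ hz.lt_boundary_zero) ht hcross
  have hle (τ : ℝ) (hτ : τ ∈ Icc 0 T) : s τ ≤ σ τ :=
    hτ.2.eq_or_lt.elim (fun h => h ▸ heq.le) fun h => (before τ ⟨hτ.1, h⟩).le
  obtain ⟨d, hd, hdν⟩ := hz.boundary T hT
  have speed_ge : ν T ≤ b T := by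
    refine deriv_le_of_eventually_le_left (h.hasDerivAt_boundary T hT).hasDerivWithinAt
      (hz.hasDerivAt_boundary T hT).hasDerivWithinAt ?_ heq
    filter_upwards [Ioo_mem_nhdsLT hT] with τ hτ using hle τ ⟨hτ.1.le, hτ.2.le⟩
  have slope_le : d ≤ -b T := by
    refine deriv_le_of_eventually_le_left (h.hasDerivWithinAt_boundary hT) (heq ▸ hd) ?_ ?_
    · filter_upwards [Ioo_mem_nhdsLT (h.boundary_pos T hT.le)] with x hx
      exact sub_nonpos.1 ((h.isKinkedSubsolution_sub hz hg hle).nonpos T ⟨hT.le, le_rfl⟩ x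
        ⟨hx.1.le, hx.2.le⟩)
    · rw [h.eq_zero T hT.le, heq, hz.eq_zero T hT.le]
  linarith

theorem le_of_isStrictSupersolution (ht : 0 ≤ t) (hx : x ∈ Icc 0 (s t)) : u t x ≤ z t x :=
  sub_nonpos.1 <| (h.isKinkedSubsolution_sub hz hg fun _ hτ =>
    (h.boundary_lt_of_isStrictSupersolution hz hg hτ.1).le).nonpos t ⟨ht, le_rfl⟩ x hx

end Comparison

end IsStefanSolution

/-! ### The explicit supersolution -/

/-- The nonlinearity `y ^ p` frozen outside `[0, 1]`, where it is bounded and Lipschitz. -/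
def truncatedPower (p y : ℝ) : ℝ :=
  clip 1 y ^ p

section TruncatedPower

variable {p y : ℝ}

lemma truncatedPower_of_mem (hy : y ∈ Icc 0 1) : truncatedPower p y = y ^ p := by
  rw [truncatedPower, clip_of_mem hy]

lemma lipschitzOnWith_rpow_const (hp : 1 ≤ p) :
    LipschitzOnWith p.toNNReal (fun y : ℝ => y ^ p) (Icc 0 1) := by
  refine (convex_Icc (0 : ℝ) 1).lipschitzOnWith_of_nnnorm_hasDerivWithin_le
    (fun y _ => (hasDerivAt_rpow_const (Or.inr hp)).hasDerivWithinAt) fun y hy => ?_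
  have hp0 : 0 ≤ p := zero_le_one.trans hp
  rw [← NNReal.coe_le_coe, coe_nnnorm, Real.coe_toNNReal p hp0, Real.norm_eq_abs,
    abs_of_nonneg (mul_nonneg hp0 (rpow_nonneg hy.1 _))]
  exact mul_le_of_le_one_right hp0 (rpow_le_one hy.1 hy.2 (by linarith))

lemma isTruncation_truncatedPower (hp : 1 ≤ p) : IsTruncation (truncatedPower p) p.toNNReal 1 where
  lipschitz := by
    have := (lipschitzOnWith_rpow_const hp).comp (lipschitzWith_clip 1).lipschitzOnWith
      (s := univ) fun y _ => ⟨clip_nonneg zero_le_one y, clip_le 1 y⟩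
    rwa [lipschitzOnWith_univ, mul_one] at this
  nonneg y := rpow_nonneg (clip_nonneg zero_le_one y) p
  le y := rpow_le_one (clip_nonneg zero_le_one y) (clip_le 1 y) (zero_le_one.trans hp)

end TruncatedPower

/-- The rate at which the barrier decays. -/
def decayRate (s₀ : ℝ) : ℝ :=
  1 / (9 * s₀ ^ 2)

/-- The decaying factor of the barrier. -/
def decay (s₀ t : ℝ) : ℝ :=
  exp (-decayRate s₀ * t)

/-- The free boundary of the barrier, which increases from `2 s₀` to `3 s₀`. -/
def barrierBoundary (s₀ t : ℝ) : ℝ :=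
  s₀ * (3 - decay s₀ t)

/-- The self-similar barrier `ε e^{-αt} (1 - ξ) (2 + ξ)`, where `ξ = x / σ(t)` and `σ` is
`barrierBoundary`. -/
def barrier (ε s₀ t x : ℝ) : ℝ :=
  ε * decay s₀ t * (2 - x / barrierBoundary s₀ t - (x / barrierBoundary s₀ t) ^ 2)

section Barrier

variable {ε s₀ t x p : ℝ}

lemma decayRate_pos (hs₀ : 0 < s₀) : 0 < decayRate s₀ := by
  unfold decayRate; positivity

lemma decay_pos (s₀ t : ℝ) : 0 < decay s₀ t := exp_pos _

lemma decay_le_one (hs₀ : 0 < s₀) (ht : 0 ≤ t) : decay s₀ t ≤ 1 := by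
  rw [decay, exp_le_one_iff, neg_mul, neg_nonpos]
  exact mul_nonneg (decayRate_pos hs₀).le ht

lemma hasDerivAt_decay (s₀ t : ℝ) : HasDerivAt (decay s₀) (-decayRate s₀ * decay s₀ t) t :=
  ((hasDerivAt_id t).const_mul (-decayRate s₀)).exp.congr_deriv (by simp only [decay, id]; ring)

lemma two_mul_le_barrierBoundary (hs₀ : 0 < s₀) (ht : 0 ≤ t) : 2 * s₀ ≤ barrierBoundary s₀ t := by
  unfold barrierBoundary
  nlinarith [decay_le_one hs₀ ht]

lemma barrierBoundary_le (hs₀ : 0 < s₀) : barrierBoundary s₀ t ≤ 3 * s₀ := by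
  unfold barrierBoundary
  nlinarith [decay_pos s₀ t]

lemma barrierBoundary_pos (hs₀ : 0 < s₀) (ht : 0 ≤ t) : 0 < barrierBoundary s₀ t := by
  linarith [two_mul_le_barrierBoundary hs₀ ht]

lemma hasDerivAt_barrierBoundary (s₀ t : ℝ) :
    HasDerivAt (barrierBoundary s₀) (s₀ * decayRate s₀ * decay s₀ t) t :=
  (((hasDerivAt_decay s₀ t).const_sub 3).const_mul s₀).congr_deriv (by ring)

lemma continuous_barrierBoundary (s₀ : ℝ) : Continuous (barrierBoundary s₀) :=
  continuous_iff_continuousAt.2 fun t => (hasDerivAt_barrierBoundary s₀ t).continuousAt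

lemma hasDerivAt_barrier_space (ε s₀ t x : ℝ) :
    HasDerivAt (barrier ε s₀ t) (ε * decay s₀ t *
      (-1 / barrierBoundary s₀ t - 2 * x / barrierBoundary s₀ t ^ 2)) x := by
  have hξ := (hasDerivAt_id x).div_const (barrierBoundary s₀ t)
  refine (((hξ.const_sub 2).sub (hξ.pow 2)).const_mul (ε * decay s₀ t)).congr_deriv ?_
  simp only [id]
  push_cast
  ring

lemma hasDerivAt_barrier_space_space (ε s₀ t x : ℝ) :
    HasDerivAt (fun x => ε * decay s₀ t *
      (-1 / barrierBoundary s₀ t - 2 * x / barrierBoundary s₀ t ^ 2))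
      (ε * decay s₀ t * (-2 / barrierBoundary s₀ t ^ 2)) x :=
  (((((hasDerivAt_id x).const_mul 2).div_const _).const_sub _).const_mul _).congr_deriv (by ring)

lemma hasDerivAt_barrier_time (ε x : ℝ) (h : barrierBoundary s₀ t ≠ 0) :
    HasDerivAt (fun t => barrier ε s₀ t x) (ε * decay s₀ t *
      (-decayRate s₀ * (2 - x / barrierBoundary s₀ t - (x / barrierBoundary s₀ t) ^ 2)
        + s₀ * decayRate s₀ * decay s₀ t * (x / barrierBoundary s₀ t ^ 2) *
          (1 + 2 * (x / barrierBoundary s₀ t)))) t := by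
  have hξ := (hasDerivAt_const t x).div (hasDerivAt_barrierBoundary s₀ t) h
  refine (((hasDerivAt_decay s₀ t).const_mul ε).mul
    ((hξ.const_sub 2).sub (hξ.pow 2))).congr_deriv ?_
  simp only [Pi.div_apply, Pi.sub_apply, Pi.pow_apply]
  push_cast
  field_simp
  ring

lemma decayRate_le (hs₀ : 0 < s₀) (ht : 0 ≤ t) :
    decayRate s₀ ≤ 1 / barrierBoundary s₀ t ^ 2 := by
  have hpos := barrierBoundary_pos hs₀ ht
  refine one_div_le_one_div_of_le (by positivity) ?_
  nlinarith [barrierBoundary_le (t := t) hs₀]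

lemma exists_hasHeatJetAt_barrier (hε : 0 ≤ ε) (hs₀ : 0 < s₀) (ht : 0 ≤ t) (hx : 0 ≤ x) :
    ∃ zx zt zxx, HasHeatJetAt (barrier ε s₀) zx zt zxx t x ∧ zxx ≤ zt := by
  have hpos := barrierBoundary_pos hs₀ ht
  refine ⟨_, _, _, ⟨.of_forall (hasDerivAt_barrier_space ε s₀ t),
    hasDerivAt_barrier_space_space ε s₀ t x, hasDerivAt_barrier_time ε x hpos.ne'⟩,
    mul_le_mul_of_nonneg_left ?_ (mul_nonneg hε (decay_pos s₀ t).le)⟩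
  have rate_pos := decayRate_pos hs₀
  have moving_nonneg : 0 ≤ s₀ * decayRate s₀ * decay s₀ t * (x / barrierBoundary s₀ t ^ 2) *
      (1 + 2 * (x / barrierBoundary s₀ t)) := by
    have := decay_pos s₀ t
    positivity
  have profile_nonneg :
      0 ≤ decayRate s₀ * (x / barrierBoundary s₀ t + (x / barrierBoundary s₀ t) ^ 2) := by
    positivity
  rw [show -2 / barrierBoundary s₀ t ^ 2 = -2 * (1 / barrierBoundary s₀ t ^ 2) by ring]
  nlinarith [decayRate_le hs₀ ht]

lemma continuousOn_barrier (ε : ℝ) (hs₀ : 0 < s₀) :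
    ContinuousOn (fun q : ℝ × ℝ => barrier ε s₀ q.1 q.2) {q | 0 ≤ q.1} := by
  have hdecay : Continuous fun q : ℝ × ℝ => decay s₀ q.1 := by unfold decay; fun_prop
  have hξ : ContinuousOn (fun q : ℝ × ℝ => q.2 / barrierBoundary s₀ q.1) {q | 0 ≤ q.1} :=
    continuous_snd.continuousOn.div
      ((continuous_barrierBoundary s₀).comp continuous_fst).continuousOn
      fun q hq => (barrierBoundary_pos hs₀ hq).ne'
  exact (continuousOn_const.mul hdecay.continuousOn).mul
    ((continuousOn_const.sub hξ).sub (hξ.pow 2))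

lemma barrier_zero_right (ε s₀ t : ℝ) : barrier ε s₀ t 0 = 2 * ε * decay s₀ t := by
  rw [barrier, zero_div]; ring

lemma barrier_barrierBoundary (ε : ℝ) (hs₀ : 0 < s₀) (ht : 0 ≤ t) :
    barrier ε s₀ t (barrierBoundary s₀ t) = 0 := by
  rw [barrier, div_self (barrierBoundary_pos hs₀ ht).ne']; ring

lemma barrier_nonneg (hε : 0 ≤ ε) (hs₀ : 0 < s₀) (ht : 0 ≤ t)
    (hx : x ∈ Icc 0 (barrierBoundary s₀ t)) : 0 ≤ barrier ε s₀ t x := by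
  have hpos := barrierBoundary_pos hs₀ ht
  have hξ : x / barrierBoundary s₀ t ≤ 1 := (div_le_one hpos).2 hx.2
  have hξ₀ : 0 ≤ x / barrierBoundary s₀ t := div_nonneg hx.1 hpos.le
  exact mul_nonneg (mul_nonneg hε (decay_pos s₀ t).le) (by nlinarith)

lemma barrier_le (hε : 0 ≤ ε) (hs₀ : 0 < s₀) (ht : 0 ≤ t) (hx : 0 ≤ x) :
    barrier ε s₀ t x ≤ 2 * ε * decay s₀ t := by
  have hξ₀ : 0 ≤ x / barrierBoundary s₀ t := div_nonneg hx (barrierBoundary_pos hs₀ ht).le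
  calc barrier ε s₀ t x ≤ ε * decay s₀ t * 2 :=
        mul_le_mul_of_nonneg_left (by nlinarith) (mul_nonneg hε (decay_pos s₀ t).le)
    _ = 2 * ε * decay s₀ t := by ring

lemma le_barrier_zero (hε : 0 ≤ ε) (hs₀ : 0 < s₀) (hx : x ∈ Icc 0 s₀) : ε ≤ barrier ε s₀ 0 x := by
  have hpos := barrierBoundary_pos hs₀ le_rfl
  have hξ : x / barrierBoundary s₀ 0 ≤ 1 / 2 := by
    rw [div_le_iff₀ hpos]
    linarith [two_mul_le_barrierBoundary hs₀ le_rfl, hx.2]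
  have hξ₀ : 0 ≤ x / barrierBoundary s₀ 0 := div_nonneg hx.1 hpos.le
  rw [barrier, decay, mul_zero, exp_zero, mul_one]
  exact le_mul_of_one_le_right hε (by nlinarith)

lemma truncatedPower_barrier_zero_right_le (hp : 1 ≤ p) (hε : 0 < ε) (hε2 : ε ≤ 1 / 2)
    (hs₀ : 0 < s₀) (hsmall : 3 * s₀ * 2 ^ p * ε ^ (p - 1) ≤ 1) (ht : 0 ≤ t) :
    truncatedPower p (barrier ε s₀ t 0) ≤ ε * decay s₀ t / barrierBoundary s₀ t := by
  have hE := decay_pos s₀ t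
  have hE1 := decay_le_one hs₀ ht
  have hpos := barrierBoundary_pos hs₀ ht
  rw [barrier_zero_right, truncatedPower_of_mem ⟨by positivity, by nlinarith⟩, le_div_iff₀ hpos]
  set E := decay s₀ t
  have split : (2 * ε * E) ^ p = 2 ^ p * (ε ^ (p - 1) * ε) * (E ^ (p - 1) * E) := by
    rw [mul_rpow (by positivity) hE.le, mul_rpow zero_le_two hε.le, ← rpow_add_one hε.ne',
      ← rpow_add_one hE.ne', sub_add_cancel]
  calc (2 * ε * E) ^ p * barrierBoundary s₀ t
      ≤ 2 ^ p * (ε ^ (p - 1) * ε) * (1 * E) * (3 * s₀) := by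
        rw [split]
        gcongr
        · exact rpow_le_one hE.le hE1 (by linarith)
        · exact barrierBoundary_le hs₀
    _ = 3 * s₀ * 2 ^ p * ε ^ (p - 1) * (ε * E) := by ring
    _ ≤ ε * E := mul_le_of_le_one_left (by positivity) hsmall

lemma barrier_flux_lt_speed (hε : 0 ≤ ε) (hε100 : ε ≤ 1 / 100) (hs₀ : 0 < s₀) (ht : 0 ≤ t) :
    -(ε * decay s₀ t * (-1 / barrierBoundary s₀ t -
      2 * barrierBoundary s₀ t / barrierBoundary s₀ t ^ 2)) < s₀ * decayRate s₀ * decay s₀ t := by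
  have hpos := barrierBoundary_pos hs₀ ht
  have hE := decay_pos s₀ t
  calc -(ε * decay s₀ t * (-1 / barrierBoundary s₀ t -
      2 * barrierBoundary s₀ t / barrierBoundary s₀ t ^ 2))
      = 3 * ε * decay s₀ t / barrierBoundary s₀ t := by field_simp; ring
    _ ≤ 3 * ε * decay s₀ t / (2 * s₀) := by
        gcongr
        exact two_mul_le_barrierBoundary hs₀ ht
    _ < decay s₀ t / (9 * s₀) := by
        rw [div_lt_div_iff₀ (by positivity) (by positivity)]
        nlinarith [mul_pos hE hs₀]
    _ = s₀ * decayRate s₀ * decay s₀ t := by unfold decayRate; field_simp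

theorem isStrictSupersolution_barrier {φ : ℝ → ℝ} (hp : 1 ≤ p) (hε : 0 < ε) (hε100 : ε ≤ 1 / 100)
    (hs₀ : 0 < s₀) (hsmall : 3 * s₀ * 2 ^ p * ε ^ (p - 1) ≤ 1) (hφ : ∀ x ∈ Icc 0 s₀, φ x ≤ ε) :
    IsStrictSupersolution (truncatedPower p) φ s₀ (barrierBoundary s₀)
      (fun t => s₀ * decayRate s₀ * decay s₀ t) (barrier ε s₀) where
  continuous_boundary := continuous_barrierBoundary s₀
  lt_boundary_zero := by linarith [two_mul_le_barrierBoundary hs₀ le_rfl]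
  hasDerivAt_boundary t _ := hasDerivAt_barrierBoundary s₀ t
  continuousOn := continuousOn_barrier ε hs₀
  initial_le x hx := (hφ x hx).trans (le_barrier_zero hε.le hs₀ hx)
  nonneg _ ht _ hx := barrier_nonneg hε.le hs₀ ht hx
  eq_zero _ ht := barrier_barrierBoundary ε hs₀ ht
  origin t ht := by
    refine ⟨_, ?_, (hasDerivAt_barrier_space ε s₀ t 0).hasDerivWithinAt⟩
    rw [mul_zero, zero_div, sub_zero, neg_div, mul_neg, mul_one_div, neg_le_neg_iff]
    exact truncatedPower_barrier_zero_right_le hp hε (by linarith) hs₀ hsmall ht.le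
  interior t ht x hx := exists_hasHeatJetAt_barrier hε.le hs₀ ht.le hx.1.le
  boundary t ht := ⟨_, (hasDerivAt_barrier_space ε s₀ t _).hasDerivWithinAt,
    barrier_flux_lt_speed hε.le hε100 hs₀ ht.le⟩

end Barrier

/-! ### Classical solutions -/

/-- The function `u` on `0 ≤ x ≤ s(t)`, continued affinely across `x = 0` with slope `-g(u(t,0))`
and across `x = s(t)` with slope `-b(t)`. This makes the one-sided space derivatives at the boundary
two-sided, so that `deriv` computes them. -/
def affineExtension (g s b : ℝ → ℝ) (u : ℝ → ℝ → ℝ) (t x : ℝ) : ℝ :=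
  if x < 0 then u t 0 + -g (u t 0) * x else if s t < x then -b t * (x - s t) else u t x

lemma affineExtension_of_mem {g s b : ℝ → ℝ} {u : ℝ → ℝ → ℝ} {t x : ℝ} (hx : x ∈ Icc 0 (s t)) :
    affineExtension g s b u t x = u t x := by
  rw [affineExtension, if_neg hx.1.not_gt, if_neg hx.2.not_gt]

namespace IsStefanSolution

variable {g φ s b : ℝ → ℝ} {s₀ t x : ℝ} {u ux uxx : ℝ → ℝ → ℝ}

section AffineExtension

variable (h : IsStefanSolution g φ s₀ s b u ux uxx)

include h

lemma eventually_mem_interior (ht : 0 < t) (hx : x ∈ Ioo 0 (s t)) :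
    ∀ᶠ q : ℝ × ℝ in 𝓝 (t, x), 0 < q.1 ∧ q.2 ∈ Ioo 0 (s q.1) :=
  (continuous_fst.continuousAt.eventually (eventually_gt_nhds ht)).and
    ((continuous_snd.continuousAt.eventually (eventually_gt_nhds hx.1)).and
      (continuous_snd.continuousAt.eventually_lt
        (h.continuous_boundary.comp continuous_fst).continuousAt hx.2))

lemma hasDerivAt_affineExtension (ht : 0 < t) (hx : x ∈ Ioo 0 (s t)) :
    HasDerivAt (affineExtension g s b u t) (ux t x) x := by
  refine (h.isCaloricAt t ht x hx).hasDerivAt_space.congr_of_eventuallyEq ?_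
  filter_upwards [Ioo_mem_nhds hx.1 hx.2] with y hy
  exact affineExtension_of_mem (Ioo_subset_Icc_self hy)

lemma hasDerivAt_deriv_affineExtension (ht : 0 < t) (hx : x ∈ Ioo 0 (s t)) :
    HasDerivAt (deriv (affineExtension g s b u t)) (uxx t x) x := by
  refine (h.isCaloricAt t ht x hx).hasDerivAt_space_space.congr_of_eventuallyEq ?_
  filter_upwards [Ioo_mem_nhds hx.1 hx.2] with y hy
  exact (h.hasDerivAt_affineExtension ht hy).deriv

lemma hasDerivAt_affineExtension_time (ht : 0 < t) (hx : x ∈ Ioo 0 (s t)) :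
    HasDerivAt (fun τ => affineExtension g s b u τ x) (uxx t x) t := by
  refine (h.isCaloricAt t ht x hx).hasDerivAt_time.congr_of_eventuallyEq ?_
  filter_upwards [h.continuous_boundary.continuousAt.eventually (eventually_gt_nhds hx.2)] with τ hτ
  exact affineExtension_of_mem ⟨hx.1.le, le_of_lt hτ⟩

lemma hasDerivAt_affineExtension_origin (ht : 0 < t) :
    HasDerivAt (affineExtension g s b u t) (-g (u t 0)) 0 := by
  have hpos := h.boundary_pos t ht.le
  have value : affineExtension g s b u t 0 = u t 0 := affineExtension_of_mem ⟨le_rfl, hpos.le⟩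
  have right : HasDerivWithinAt (affineExtension g s b u t) (-g (u t 0)) (Ici 0) 0 := by
    refine (h.hasDerivWithinAt_origin ht).congr_of_eventuallyEq ?_ value
    filter_upwards [Icc_mem_nhdsGE hpos] with x hx using affineExtension_of_mem hx
  have left : HasDerivWithinAt (affineExtension g s b u t) (-g (u t 0)) (Iic 0) 0 := by
    have affine : HasDerivAt (fun x => u t 0 + -g (u t 0) * x) (-g (u t 0)) 0 :=
      (((hasDerivAt_id (0 : ℝ)).const_mul _).const_add _).congr_deriv (mul_one _)
    refine affine.hasDerivWithinAt.congr_of_mem (fun x hx => ?_) self_mem_Iic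
    rcases (show x ≤ 0 from hx).eq_or_lt with rfl | hneg
    · rw [value, mul_zero, add_zero]
    · exact if_pos hneg
  rw [← hasDerivWithinAt_univ, ← Iic_union_Ici (a := (0 : ℝ))]
  exact left.union right

lemma hasDerivAt_affineExtension_boundary (ht : 0 < t) :
    HasDerivAt (affineExtension g s b u t) (-b t) (s t) := by
  have hpos := h.boundary_pos t ht.le
  have value : affineExtension g s b u t (s t) = u t (s t) :=
    affineExtension_of_mem ⟨hpos.le, le_rfl⟩
  have left : HasDerivWithinAt (affineExtension g s b u t) (-b t) (Iic (s t)) (s t) := by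
    refine (h.hasDerivWithinAt_boundary ht).congr_of_eventuallyEq ?_ value
    filter_upwards [Icc_mem_nhdsLE hpos] with x hx using affineExtension_of_mem hx
  have right : HasDerivWithinAt (affineExtension g s b u t) (-b t) (Ici (s t)) (s t) := by
    have affine : HasDerivAt (fun x => -b t * (x - s t)) (-b t) (s t) :=
      (((hasDerivAt_id (s t)).sub_const _).const_mul _).congr_deriv (mul_one _)
    refine affine.hasDerivWithinAt.congr_of_mem (fun x hx => ?_) self_mem_Ici
    rcases (show s t ≤ x from hx).eq_or_lt with rfl | hlt
    · rw [value, h.eq_zero t ht.le, sub_self, mul_zero]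
    · rw [affineExtension, if_neg (hpos.trans hlt).not_gt, if_pos hlt]
  rw [← hasDerivWithinAt_univ, ← Iic_union_Ici (a := s t)]
  exact left.union right

lemma continuousAt_deriv_affineExtension (ht : 0 < t) (hx : x ∈ Ioo 0 (s t)) :
    ContinuousAt (fun q : ℝ × ℝ => deriv (affineExtension g s b u q.1) q.2) (t, x) := by
  refine (h.isCaloricAt t ht x hx).continuousAt_space.congr ?_
  filter_upwards [h.eventually_mem_interior ht hx] with q hq
  exact (h.hasDerivAt_affineExtension hq.1 hq.2).deriv.symm

lemma continuousAt_deriv_deriv_affineExtension (ht : 0 < t) (hx : x ∈ Ioo 0 (s t)) :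
    ContinuousAt (fun q : ℝ × ℝ => deriv (deriv (affineExtension g s b u q.1)) q.2) (t, x) := by
  refine (h.isCaloricAt t ht x hx).continuousAt_space_space.congr ?_
  filter_upwards [h.eventually_mem_interior ht hx] with q hq
  exact (h.hasDerivAt_deriv_affineExtension hq.1 hq.2).deriv.symm

lemma continuousAt_deriv_affineExtension_time (ht : 0 < t) (hx : x ∈ Ioo 0 (s t)) :
    ContinuousAt (fun q : ℝ × ℝ => deriv (fun τ => affineExtension g s b u τ q.2) q.1) (t, x) := by
  refine (h.isCaloricAt t ht x hx).continuousAt_space_space.congr ?_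
  filter_upwards [h.eventually_mem_interior ht hx] with q hq
  exact (h.hasDerivAt_affineExtension_time hq.1 hq.2).deriv.symm

lemma continuousWithinAt_deriv_affineExtension_origin (hg : Continuous g) (ht : 0 < t) :
    ContinuousWithinAt (fun q : ℝ × ℝ => deriv (affineExtension g s b u q.1) q.2)
      {q | 0 ≤ q.2} (t, 0) := by
  have time_pos : ∀ᶠ q : ℝ × ℝ in 𝓝 (t, 0), 0 < q.1 :=
    continuous_fst.continuousAt.eventually (eventually_gt_nhds ht)
  have inside : ∀ᶠ q : ℝ × ℝ in 𝓝 (t, 0), q.2 < s q.1 :=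
    continuous_snd.continuousAt.eventually_lt
      (h.continuous_boundary.comp continuous_fst).continuousAt (h.boundary_pos t ht.le)
  have along : Tendsto (fun q : ℝ × ℝ => deriv (affineExtension g s b u q.1) q.2)
      (𝓝[{q | 0 = q.2}] (t, 0)) (𝓝 (-g (u t 0))) := by
    have flux : Continuous fun q : ℝ × ℝ => -g (u q.1 0) :=
      (hg.comp (h.continuous.comp (by fun_prop : Continuous fun q : ℝ × ℝ => (q.1, (0 : ℝ))))).neg
    refine (flux.continuousAt.tendsto.mono_left nhdsWithin_le_nhds).congr' ?_
    filter_upwards [self_mem_nhdsWithin, nhdsWithin_le_nhds time_pos] with q hq hqt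
    rw [← show 0 = q.2 from hq, (h.hasDerivAt_affineExtension_origin hqt).deriv]
  have off : Tendsto (fun q : ℝ × ℝ => deriv (affineExtension g s b u q.1) q.2)
      (𝓝[{q | 0 < q.2}] (t, 0)) (𝓝 (-g (u t 0))) := by
    refine (h.tendsto_origin t ht).congr' ?_
    filter_upwards [self_mem_nhdsWithin, nhdsWithin_le_nhds time_pos, nhdsWithin_le_nhds inside]
      with q hq hqt hqs using (h.hasDerivAt_affineExtension hqt ⟨hq, hqs⟩).deriv.symm
  rw [ContinuousWithinAt, (h.hasDerivAt_affineExtension_origin ht).deriv]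
  refine (along.sup off).mono_left ?_
  rw [← nhdsWithin_union]
  exact nhdsWithin_mono _ fun q hq => hq.eq_or_lt

lemma continuousWithinAt_deriv_affineExtension_boundary (ht : 0 < t) :
    ContinuousWithinAt (fun q : ℝ × ℝ => deriv (affineExtension g s b u q.1) q.2)
      {q | q.2 ≤ s q.1} (t, s t) := by
  have time_pos : ∀ᶠ q : ℝ × ℝ in 𝓝 (t, s t), 0 < q.1 :=
    continuous_fst.continuousAt.eventually (eventually_gt_nhds ht)
  have inside : ∀ᶠ q : ℝ × ℝ in 𝓝 (t, s t), 0 < q.2 :=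
    continuous_snd.continuousAt.eventually (eventually_gt_nhds (h.boundary_pos t ht.le))
  have along : Tendsto (fun q : ℝ × ℝ => deriv (affineExtension g s b u q.1) q.2)
      (𝓝[{q | q.2 = s q.1}] (t, s t)) (𝓝 (-b t)) := by
    have flux : ContinuousAt (fun q : ℝ × ℝ => -b q.1) (t, s t) :=
      ((h.continuousOn_speed.continuousAt (Ioi_mem_nhds ht)).comp_of_eq
        continuous_fst.continuousAt rfl).neg
    refine (flux.tendsto.mono_left nhdsWithin_le_nhds).congr' ?_
    filter_upwards [self_mem_nhdsWithin, nhdsWithin_le_nhds time_pos] with q hq hqt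
    rw [show q.2 = s q.1 from hq, (h.hasDerivAt_affineExtension_boundary hqt).deriv]
  have off : Tendsto (fun q : ℝ × ℝ => deriv (affineExtension g s b u q.1) q.2)
      (𝓝[{q | q.2 < s q.1}] (t, s t)) (𝓝 (-b t)) := by
    refine (h.tendsto_boundary t ht).congr' ?_
    filter_upwards [self_mem_nhdsWithin, nhdsWithin_le_nhds time_pos, nhdsWithin_le_nhds inside]
      with q hq hqt hq0 using (h.hasDerivAt_affineExtension hqt ⟨hq0, hq⟩).deriv.symm
  rw [ContinuousWithinAt, (h.hasDerivAt_affineExtension_boundary ht).deriv]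
  refine (along.sup off).mono_left ?_
  rw [← nhdsWithin_union]
  exact nhdsWithin_mono _ fun q hq => hq.eq_or_lt

lemma continuousOn_deriv_affineExtension (hg : Continuous g) :
    ContinuousOn (fun q : ℝ × ℝ => deriv (affineExtension g s b u q.1) q.2)
      {q | 0 < q.1 ∧ q.2 ∈ Icc 0 (s q.1)} := by
  rintro ⟨t, x⟩ ⟨ht, hx : x ∈ Icc 0 (s t)⟩
  rcases hx.1.eq_or_lt with rfl | hx0
  · exact (h.continuousWithinAt_deriv_affineExtension_origin hg ht).mono fun _ hq => hq.2.1
  rcases hx.2.eq_or_lt with rfl | hxs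
  · exact (h.continuousWithinAt_deriv_affineExtension_boundary ht).mono fun _ hq => hq.2.2
  exact (h.continuousAt_deriv_affineExtension ht ⟨hx0, hxs⟩).continuousWithinAt

theorem isGlobalSol {p : ℝ} {φ₀ : ℝ → ℝ} (hg : Continuous g)
    (hflux : ∀ t > 0, g (u t 0) = u t 0 ^ p) (hφ : ∀ x ∈ Icc 0 s₀, φ x = φ₀ x) :
    IsGlobalSol p s₀ φ₀ s (affineExtension g s b u) := fun T hT =>
  { T_pos := hT
    s_cont := h.continuous_boundary.continuousOn
    s_diff t ht := (h.hasDerivAt_boundary t ht.1).differentiableAt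
    s_deriv_cont := (h.continuousOn_speed.mono fun _ ht => ht.1).congr fun t ht =>
      (h.hasDerivAt_boundary t ht.1).deriv
    s_pos t ht := h.boundary_pos t ht.1
    ut_diff t ht x hx := (h.hasDerivAt_affineExtension_time ht.1 hx).differentiableAt
    ux_diff t ht x hx := (h.hasDerivAt_affineExtension ht.1 hx).differentiableAt
    uxx_diff t ht x hx := (h.hasDerivAt_deriv_affineExtension ht.1 hx).differentiableAt
    ut_cont _ hq :=
      (h.continuousAt_deriv_affineExtension_time hq.1.1 hq.2).continuousWithinAt
    uxx_cont _ hq :=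
      (h.continuousAt_deriv_deriv_affineExtension hq.1.1 hq.2).continuousWithinAt
    ux_cont := (h.continuousOn_deriv_affineExtension hg).mono fun _ hq => ⟨hq.1.1, hq.2⟩
    u_cont := h.continuous.continuousOn.congr fun _ hq => affineExtension_of_mem hq.2
    u_nonneg t ht x hx := (affineExtension_of_mem hx).symm ▸ h.nonneg t ht.1 x hx.1
    heat t ht x hx := (h.hasDerivAt_affineExtension_time ht.1 hx).deriv.trans
      (h.hasDerivAt_deriv_affineExtension ht.1 hx).deriv.symm
    bc_zero t ht := by
      rw [(h.hasDerivAt_affineExtension_origin ht.1).deriv, neg_neg, hflux t ht.1,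
        affineExtension_of_mem ⟨le_rfl, (h.boundary_pos t ht.1.le).le⟩]
    bc_free t ht := by
      rw [affineExtension_of_mem ⟨(h.boundary_pos t ht.1.le).le, le_rfl⟩, h.eq_zero t ht.1.le]
    stefan t ht := by
      rw [(h.hasDerivAt_boundary t ht.1).deriv, (h.hasDerivAt_affineExtension_boundary ht.1).deriv,
        neg_neg]
    init x hx := by
      rw [affineExtension_of_mem (h.boundary_zero.symm ▸ hx), h.eq_initial, hφ x hx]
    init_s := h.boundary_zero }

end AffineExtension

end IsStefanSolution

/-! ### Existence and decay for small data -/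

/-- The even extension of a function on `[0, s₀]`, constant beyond `s₀`. -/
def evenExtension (s₀ : ℝ) (φ : ℝ → ℝ) (x : ℝ) : ℝ :=
  φ (min |x| s₀)

section EvenExtension

variable {φ : ℝ → ℝ} {s₀ x : ℝ} {K : NNReal}

lemma min_abs_mem_Icc (hs₀ : 0 ≤ s₀) (x : ℝ) : min |x| s₀ ∈ Icc 0 s₀ :=
  ⟨le_min (abs_nonneg x) hs₀, min_le_right _ _⟩

lemma evenExtension_of_mem (hx : x ∈ Icc 0 s₀) : evenExtension s₀ φ x = φ x := by
  rw [evenExtension, abs_of_nonneg hx.1, min_eq_left hx.2]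

lemma isInitialDatum_evenExtension (hs₀ : 0 < s₀) (hK : LipschitzOnWith K φ (Icc 0 s₀))
    (hφ : φ s₀ = 0) : IsInitialDatum (evenExtension s₀ φ) s₀ K where
  pos := hs₀
  lipschitz := by
    have fold : LipschitzWith 1 fun x : ℝ => min |x| s₀ := lipschitzWith_one_norm.min_const s₀
    have := hK.comp (fold.lipschitzOnWith (s := univ)) fun x _ => min_abs_mem_Icc hs₀.le x
    rwa [lipschitzOnWith_univ, mul_one] at this
  even x := by simp only [evenExtension, abs_neg]
  eq_zero x hx := by rw [evenExtension, min_eq_right hx, hφ]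

lemma evenExtension_mem_Icc_mul_max (hs₀ : 0 ≤ s₀) (hK : LipschitzOnWith K φ (Icc 0 s₀))
    (hφ0 : ∀ x ∈ Icc 0 s₀, 0 ≤ φ x) (hφ : φ s₀ = 0) (x : ℝ) :
    evenExtension s₀ φ x ∈ Icc 0 (K * max (s₀ - |x|) 0) := by
  have hmem := min_abs_mem_Icc hs₀ x
  refine ⟨hφ0 _ hmem, ?_⟩
  have hlip := hK.dist_le_mul _ hmem s₀ ⟨hs₀, le_rfl⟩
  rwa [hφ, dist_zero_right, Real.norm_of_nonneg (hφ0 _ hmem), dist_comm, Real.dist_eq,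
    abs_of_nonneg (sub_nonneg.2 hmem.2), ← max_sub_sub_left, sub_self] at hlip

theorem exists_isStefanSolution {p : ℝ} (hp : 1 ≤ p) (hs₀ : 0 < s₀)
    (hK : LipschitzOnWith K φ (Icc 0 s₀)) (hφ0 : ∀ x ∈ Icc 0 s₀, 0 ≤ φ x) (hφ : φ s₀ = 0) :
    ∃ s b u ux uxx,
      IsStefanSolution (truncatedPower p) (evenExtension s₀ φ) s₀ s b u ux uxx := by
  have power := isTruncation_truncatedPower hp
  obtain ⟨s, v, u, ux, uxx, h⟩ := exists_isTransmissionSolution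
    (isInitialDatum_evenExtension hs₀ hK hφ) (isTruncation_clip (max K 1)) power
  refine ⟨s, v, u, ux, uxx, h.isStefanSolution hs₀
    (fun y => ⟨power.nonneg y, (power.le y).trans (NNReal.coe_le_coe.2 (le_max_right K 1))⟩)
    fun x hx => ?_⟩
  obtain ⟨hnonneg, hle⟩ := evenExtension_mem_Icc_mul_max hs₀.le hK hφ0 hφ x
  rw [abs_of_nonneg hx] at hle
  rw [ramp, h.boundary_zero]
  exact ⟨hnonneg, hle.trans (mul_le_mul_of_nonneg_right
    (NNReal.coe_le_coe.2 (le_max_left K 1)) (le_max_right _ _))⟩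

end EvenExtension

/-- The constant `δ` of the smallness condition: `1 / 100` keeps the flux of the barrier below the
speed of its boundary, and the power makes the barrier a supersolution at `x = 0`. -/
def smallness (p : ℝ) : ℝ :=
  min (1 / 100) ((3 * 2 ^ p) ^ (-(1 / (p - 1))))

/-- The height of the barrier for initial data on `[0, s₀]`. -/
def barrierHeight (p s₀ : ℝ) : ℝ :=
  smallness p * min 1 (s₀ ^ (-(1 / (p - 1))))

section Smallness

variable {p s₀ : ℝ}

lemma smallness_pos (p : ℝ) : 0 < smallness p := by
  unfold smallness; positivity

lemma barrierHeight_pos (p : ℝ) (hs₀ : 0 < s₀) : 0 < barrierHeight p s₀ := by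
  have := smallness_pos p
  unfold barrierHeight; positivity

lemma barrierHeight_le (p : ℝ) (hs₀ : 0 ≤ s₀) : barrierHeight p s₀ ≤ 1 / 100 :=
  (mul_le_mul (min_le_left _ _) (min_le_left _ _) (by positivity) (by norm_num)).trans_eq
    (mul_one _)

lemma rpow_neg_one_div_rpow {a q : ℝ} (ha : 0 ≤ a) (hq : q ≠ 0) :
    (a ^ (-(1 / q))) ^ q = a⁻¹ := by
  rw [← rpow_mul ha, neg_mul, one_div_mul_cancel hq, rpow_neg_one]

lemma mul_barrierHeight_rpow_le_one (hp : 1 < p) (hs₀ : 0 < s₀) :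
    3 * s₀ * 2 ^ p * barrierHeight p s₀ ^ (p - 1) ≤ 1 := by
  have hq : 0 < p - 1 := sub_pos.2 hp
  have height_le : barrierHeight p s₀ ^ (p - 1) ≤ (3 * 2 ^ p)⁻¹ * s₀⁻¹ := by
    rw [← rpow_neg_one_div_rpow (by positivity : (0 : ℝ) ≤ 3 * 2 ^ p) hq.ne',
      ← rpow_neg_one_div_rpow hs₀.le hq.ne', ← mul_rpow (by positivity) (by positivity)]
    exact rpow_le_rpow (barrierHeight_pos p hs₀).le
      (mul_le_mul (min_le_right _ _) (min_le_right _ _) (by positivity) (by positivity)) hq.le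
  calc 3 * s₀ * 2 ^ p * barrierHeight p s₀ ^ (p - 1)
      ≤ 3 * s₀ * 2 ^ p * ((3 * 2 ^ p)⁻¹ * s₀⁻¹) := by gcongr
    _ = 1 := by field_simp

end Smallness

lemma isBigO_supNorm {s : ℝ → ℝ} {u : ℝ → ℝ → ℝ} {M α : ℝ} (hM : 0 ≤ M)
    (hu : ∀ t ≥ 0, ∀ x ∈ Ioo 0 (s t), u t x ∈ Icc 0 (M * exp (-α * t))) :
    (fun t => supNorm s u t) =O[atTop] fun t => exp (-α * t) := by
  refine Asymptotics.IsBigO.of_bound M ?_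
  filter_upwards [eventually_ge_atTop 0] with t ht
  have nonneg : 0 ≤ supNorm s u t := Real.sSup_nonneg (forall_mem_image.2 fun x hx =>
    (hu t ht x hx).1)
  rw [Real.norm_of_nonneg nonneg, Real.norm_of_nonneg (exp_pos _).le]
  exact Real.sSup_le (forall_mem_image.2 fun x hx => (hu t ht x hx).2) (by positivity)

lemma exists_tendsto_of_monotone_of_le {s : ℝ → ℝ} {M : ℝ} (hs : Monotone s)
    (hM : ∀ t ≥ 0, s t ≤ M) : ∃ L, Tendsto s atTop (𝓝 L) :=
  ⟨_, tendsto_atTop_ciSup hs ⟨M, forall_mem_range.2 fun t =>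
    (hs (le_max_left t 0)).trans (hM _ (le_max_right t 0))⟩⟩

/-- Proposition 4.4: global existence with exponential decay for small initial data. -/
theorem stmt_18 (p : ℝ) (hp : 1 < p) :
    ∃ δ : ℝ, 0 < δ ∧ ∀ (s₀ : ℝ) (φ : ℝ → ℝ), memW s₀ φ →
      (∀ x ∈ Icc 0 s₀, φ x ≤ δ * min 1 (s₀ ^ (-(1 / (p - 1))))) →
      ∃ s u, IsGlobalSol p s₀ φ s u ∧
        (∃ L : ℝ, Tendsto s atTop (𝓝 L)) ∧
        ∃ α : ℝ, 0 < α ∧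
          (fun t => supNorm s u t) =O[atTop] fun t => Real.exp (-α * t) := by
  refine ⟨smallness p, smallness_pos p, fun s₀ φ ⟨hs₀, ⟨K, hK⟩, _, hφ0, hφs⟩ hφ => ?_⟩
  have power := isTruncation_truncatedPower hp.le
  have height_pos := barrierHeight_pos p hs₀
  have height_le := barrierHeight_le p hs₀.le
  have super := isStrictSupersolution_barrier hp.le height_pos height_le hs₀
    (mul_barrierHeight_rpow_le_one hp hs₀) fun x hx => (evenExtension_of_mem hx).trans_le (hφ x hx)
  obtain ⟨s, b, u, ux, uxx, h⟩ := exists_isStefanSolution hp.le hs₀ hK hφ0 hφs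
  have bound (t : ℝ) (ht : 0 ≤ t) (x : ℝ) (hx : x ∈ Icc 0 (s t)) :
      u t x ≤ 2 * barrierHeight p s₀ * decay s₀ t :=
    (h.le_of_isStrictSupersolution super power.lipschitz ht hx).trans
      (barrier_le height_pos.le hs₀ ht hx.1)
  refine ⟨s, affineExtension (truncatedPower p) s b u,
    h.isGlobalSol power.lipschitz.continuous (fun t ht => truncatedPower_of_mem
      ⟨h.nonneg t ht.le 0 le_rfl, ?_⟩) fun x hx => evenExtension_of_mem hx,
    exists_tendsto_of_monotone_of_le h.monotone_boundary fun t ht => (barrierBoundary_le hs₀).trans'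
      (h.boundary_lt_of_isStrictSupersolution super power.lipschitz ht).le,
    decayRate s₀, decayRate_pos hs₀, isBigO_supNorm (mul_pos two_pos height_pos).le ?_⟩
  · nlinarith [bound t ht.le 0 ⟨le_rfl, (h.boundary_pos t ht.le).le⟩, decay_le_one hs₀ ht.le]
  · intro t ht x hx
    rw [affineExtension_of_mem (Ioo_subset_Icc_self hx)]
    exact ⟨h.nonneg t ht x hx.1.le, bound t ht x (Ioo_subset_Icc_self hx)⟩
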